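/- Fix integers k ≥ 1 and k₀, k₁, k₂ ≥ 0 with k₀ + k₁ + k₂ = k and k₀·k₂ = 0, and set d₁(n) = −min(n, k₀) − 2·max(n − k₀, 0) and d₂(n) = −min(n, k₀+k₁) − 2·max(n − k₀ − k₁, 0). Call a quasi-particle datum a pair of non-increasing integer sequences k ≥ n_{1,1} ≥ ⋯ ≥ n_{1,a} ≥ 1 and k ≥ n_{2,1} ≥ ⋯ ≥ n_{2,b} ≥ 1 together with integers m_{1,1}, …, m_{1,a}, m_{2,1}, …, m_{2,b} satisfying: (i) m_{i,s+1} ≤ m_{i,s} − 2n_{i,s} whenever n_{i,s+1} = n_{i,s} (i = 1, 2); (ii) m_{1,s} ≤ d₁(n_{1,s}) − 2(s−1)·n_{1,s}; (iii) m_{2,s} ≤ d₂(n_{2,s}) − 2(s−1)·n_{2,s} − ∑_{s'=1}^{a} max(0, n_{2,s} + n_{1,s'} − k); its charge is (∑_s n_{1,s}, ∑_s n_{2,s}) and its degree is −∑_s m_{1,s} − ∑_s m_{2,s}. Call a (k,3)-admissible configuration a finitely supported sequence (a_i)_{i≥0} of nonnegative integers with a_i + a_{i+1} + a_{i+2} ≤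 k for all i ≥ 0, a₀ ≤ k₀, and a₀ + a₁ ≤ k₀ + k₁; its charge is (∑_{t≥0} a_{2t}, ∑_{t≥0} a_{2t+1}) and its degree is ∑_{t≥0} (t+1)·(a_{2t} + a_{2t+1}). Then for all nonnegative integers n₁, n₂, d, the number of (k,3)-admissible configurations of charge (n₁, n₂) and degree d equals the number of quasi-particle data of charge (n₁, n₂) and degree d. -/

import Mathlib

/-- Maximal degree `d_{max}(nγ₁, Λ) = -min(n,k₀) - 2·max(n-k₀,0)`. -/
def dmax1 (k₀ : ℕ) (n : ℕ) : ℤ :=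
  -min (n : ℤ) (k₀ : ℤ) - 2 * max ((n : ℤ) - (k₀ : ℤ)) 0

/-- Maximal degree `d_{max}(nγ₂, Λ) = -min(n,k₀+k₁) - 2·max(n-k₀-k₁,0)`. -/
def dmax2 (k₀ k₁ : ℕ) (n : ℕ) : ℤ :=
  -min (n : ℤ) ((k₀ : ℤ) + (k₁ : ℤ)) - 2 * max ((n : ℤ) - (k₀ : ℤ) - (k₁ : ℤ)) 0

/-- A quasi-particle datum: the charges and degrees of a quasi-particle basis monomial
of `𝔅_{W(Λ)}` for level `k` and `Λ` determined by `k₀, k₁` (and `k₂ = k - k₀ - k₁`). -/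
structure QPDatum (k k₀ k₁ : ℕ) where
  a : ℕ
  b : ℕ
  n1 : Fin a → ℕ
  n2 : Fin b → ℕ
  m1 : Fin a → ℤ
  m2 : Fin b → ℤ
  n1_pos : ∀ s, 1 ≤ n1 s
  n1_le : ∀ s, n1 s ≤ k
  n1_anti : ∀ s t : Fin a, s ≤ t → n1 t ≤ n1 s
  n2_pos : ∀ s, 1 ≤ n2 s
  n2_le : ∀ s, n2 s ≤ k
  n2_anti : ∀ s t : Fin b, s ≤ t → n2 t ≤ n2 s
  diff1 : ∀ (s : ℕ) (h : s + 1 < a), n1 ⟨s + 1, h⟩ = n1 ⟨s, Nat.lt_of_succ_lt h⟩ →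
    m1 ⟨s + 1, h⟩ ≤ m1 ⟨s, Nat.lt_of_succ_lt h⟩ - 2 * (n1 ⟨s, Nat.lt_of_succ_lt h⟩ : ℤ)
  diff2 : ∀ (s : ℕ) (h : s + 1 < b), n2 ⟨s + 1, h⟩ = n2 ⟨s, Nat.lt_of_succ_lt h⟩ →
    m2 ⟨s + 1, h⟩ ≤ m2 ⟨s, Nat.lt_of_succ_lt h⟩ - 2 * (n2 ⟨s, Nat.lt_of_succ_lt h⟩ : ℤ)
  init1 : ∀ s : Fin a, m1 s ≤ dmax1 k₀ (n1 s) - 2 * (s : ℕ) * (n1 s : ℤ)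
  init2 : ∀ s : Fin b, m2 s ≤ dmax2 k₀ k₁ (n2 s) - 2 * (s : ℕ) * (n2 s : ℤ)
    - ∑ s' : Fin a, max 0 ((n2 s : ℤ) + (n1 s' : ℤ) - (k : ℤ))

/-- The charge of a quasi-particle datum: `(∑ n_{1,s}, ∑ n_{2,s})`. -/
def QPDatum.charge {k k₀ k₁ : ℕ} (q : QPDatum k k₀ k₁) : ℕ × ℕ :=
  (∑ s : Fin q.a, q.n1 s, ∑ s : Fin q.b, q.n2 s)

/-- The degree of a quasi-particle datum: `-∑ m_{1,s} - ∑ m_{2,s}`. -/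
def QPDatum.degree {k k₀ k₁ : ℕ} (q : QPDatum k k₀ k₁) : ℤ :=
  -(∑ s : Fin q.a, q.m1 s) - (∑ s : Fin q.b, q.m2 s)

/-- A `(k,3)`-admissible configuration (for `Λ` determined by `k₀, k₁`): a finitely
supported sequence of nonnegative integers satisfying the difference and initial
conditions. -/
def IsAdmissibleConfig (k k₀ k₁ : ℕ) (a : ℕ →₀ ℕ) : Prop :=
  (∀ i : ℕ, a i + a (i + 1) + a (i + 2) ≤ k) ∧ a 0 ≤ k₀ ∧ a 0 + a 1 ≤ k₀ + k₁

/-- The charge `(∑_t a_{2t}, ∑_t a_{2t+1})` of a configuration. -/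
def configCharge (a : ℕ →₀ ℕ) : ℕ × ℕ :=
  (a.sum fun i v => if Even i then v else 0, a.sum fun i v => if Odd i then v else 0)

/-- The degree `∑_t (t+1)(a_{2t} + a_{2t+1})` of a configuration. -/
def configDegree (a : ℕ →₀ ℕ) : ℕ :=
  a.sum fun i v => (i / 2 + 1) * v

/-!
Both counts are the dimension of the same space, the graded dual of a weight space of `W(Λ)`. Here
this dual is the space of polynomials `P` in variables `X 0, X 1, …`, homogeneous for charge and
degree, whose degree along every line in the direction of a point `(α, β, α x, β x, α x², …)` is at
most `k`, at most `k₀ + k₁` if `x = 0`, and at most `k₀` if `x = 0` and `β = 0`. A family of vectors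
and functionals that is triangular and separates points computes the dimension. It is found twice.

* The lexicographic leading exponents of such polynomials are exactly the admissible configurations.
* Restrict the generating current to finitely many points, that is, substitute for the `X i` the
  sum over clusters `r`, each on the branch `β = 0` or on the branch `α = 0`, of `X r` times the
  point of the curve at the position of `r`. A leading exponent `ν` in the `X r`, together with a
  leading exponent `e` of its coefficient, a polynomial in the positions, records the charges and
  degrees of a quasi-particle monomial. The degree bound forces this coefficient to be divisible
  by powers of the differences of positions, which are the difference and initial conditions.

Conversely, each exponent allowed by the conditions is attained by a product of `k` polynomials that
satisfy the level-one bounds, one for each of the `k` tensor factors of level one.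
-/

namespace QuasiParticle

open MvPolynomial OrderDual

/-! ### Counting a triangular family -/

section Triangular

variable {K E ι Ω : Type*} [Field K] [AddCommGroup E] [Module K E] [LinearOrder Ω]
  {l : ι → E →ₗ[K] K} {p : ι → E} {f : ι → Ω}

theorem linearIndependent_of_triangular (hf : Function.Injective f) (hdiag : ∀ i, l i (p i) ≠ 0)
    (htri : ∀ i j, l j (p i) ≠ 0 → f j ≤ f i) : LinearIndependent K p := by
  classical
  rw [linearIndependent_iff']
  intro s g hg
  by_contra! ⟨i₀, hi₀, hgi₀⟩
  obtain ⟨i, hi, hmax⟩ := {i ∈ s | g i ≠ 0}.exists_max_image f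
    ⟨i₀, Finset.mem_filter.mpr ⟨hi₀, hgi₀⟩⟩
  simp only [Finset.mem_filter] at hi hmax
  have hvanish : ∀ j ∈ s, j ≠ i → l i (g j • p j) = 0 := by
    intro j hj hji
    rw [map_smul, smul_eq_mul, mul_eq_zero, or_iff_not_imp_left]
    intro hgj
    by_contra hne
    exact hji (hf ((hmax j ⟨hj, hgj⟩).antisymm (htri j i hne)))
  have hzero : l i (∑ j ∈ s, g j • p j) = 0 := by rw [hg, map_zero]
  rw [map_sum, Finset.sum_eq_single_of_mem i hi.1 hvanish, map_smul, smul_eq_mul,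
    mul_eq_zero] at hzero
  exact hzero.elim hi.2 (hdiag i)

theorem card_eq_finrank_of_triangular [FiniteDimensional K E]
    (hsep : ∀ x : E, x ≠ 0 → ∃ i, l i x ≠ 0) (hf : Function.Injective f)
    (hdiag : ∀ i, l i (p i) ≠ 0) (htri : ∀ i j, l j (p i) ≠ 0 → f j ≤ f i) :
    Nat.card ι = Module.finrank K E := by
  have hli : LinearIndependent K p := linearIndependent_of_triangular hf hdiag htri
  have := hli.finite_of_isNoetherian
  have := Fintype.ofFinite ι
  rw [Nat.card_eq_fintype_card]
  refine hli.fintype_card_le_finrank.antisymm ?_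
  have hinj : Function.Injective (LinearMap.pi l) := by
    refine (injective_iff_map_eq_zero _).mpr fun x hx => ?_
    by_contra hne
    obtain ⟨i, hi⟩ := hsep x hne
    exact hi (congrFun hx i)
  simpa only [Module.finrank_fintype_fun_eq_card] using
    LinearMap.finrank_le_finrank_of_injective hinj

end Triangular

/-! ### Leading exponents -/

section IsLead

variable {σ K : Type*} [LinearOrder σ] [CommRing K] {F G : MvPolynomial σ K} {μ ν : σ →₀ ℕ}

/-- `ν` is the leading exponent of `F`: the lexicographically largest exponent that occurs in `F`,
the smallest variable being the most significant one. -/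
def IsLead (F : MvPolynomial σ K) (ν : σ →₀ ℕ) : Prop :=
  coeff ν F ≠ 0 ∧ ∀ μ, coeff μ F ≠ 0 → toLex μ ≤ toLex ν

theorem exists_isLead (hF : F ≠ 0) : ∃ ν, IsLead F ν := by
  obtain ⟨ν, hν, hmax⟩ := F.support.exists_max_image toLex (support_nonempty.mpr hF)
  exact ⟨ν, mem_support_iff.mp hν, fun μ hμ => hmax μ (mem_support_iff.mpr hμ)⟩

theorem IsLead.coeff_mul (hF : IsLead F μ) (hG : IsLead G ν) :
    coeff (μ + ν) (F * G) = coeff μ F * coeff ν G := by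
  refine AddMonoidAlgebra.coeff_add_of_supDegree_le (D := toLex) (fun _ _ => rfl) toLex.injective
    ?_ ?_
  · exact Finset.sup_le fun a ha => hF.2 a (mem_support_iff.mp ha)
  · exact Finset.sup_le fun a ha => hG.2 a (mem_support_iff.mp ha)

theorem IsLead.smul [NoZeroDivisors K] (hF : IsLead F ν) {c : K} (hc : c ≠ 0) :
    IsLead (c • F) ν := by
  refine ⟨?_, fun μ hμ => hF.2 μ ?_⟩
  · rw [coeff_smul, smul_eq_mul]
    exact mul_ne_zero hc hF.1
  · rw [coeff_smul, smul_eq_mul] at hμ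
    exact right_ne_zero_of_mul hμ

theorem IsLead.mul [NoZeroDivisors K] (hF : IsLead F μ) (hG : IsLead G ν) :
    IsLead (F * G) (μ + ν) := by
  classical
  refine ⟨by rw [hF.coeff_mul hG]; exact mul_ne_zero hF.1 hG.1, fun κ hκ => ?_⟩
  rw [MvPolynomial.coeff_mul] at hκ
  obtain ⟨⟨a, b⟩, hab, hne⟩ := Finset.exists_ne_zero_of_sum_ne_zero hκ
  rw [← Finset.HasAntidiagonal.mem_antidiagonal.mp hab, toLex_add, toLex_add]
  exact add_le_add (hF.2 a (left_ne_zero_of_mul hne)) (hG.2 b (right_ne_zero_of_mul hne))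

theorem isLead_monomial {c : K} (hc : c ≠ 0) : IsLead (monomial ν c) ν := by
  classical
  refine ⟨by rwa [coeff_monomial, if_pos rfl], fun μ hμ => ?_⟩
  rw [coeff_monomial] at hμ
  exact (congrArg toLex (ite_ne_right_iff.mp hμ).1).ge

theorem isLead_one [Nontrivial K] : IsLead (1 : MvPolynomial σ K) 0 :=
  isLead_monomial one_ne_zero

theorem isLead_prod [NoZeroDivisors K] [Nontrivial K] {ι : Type*} (s : Finset ι)
    {F : ι → MvPolynomial σ K} {ν : ι → σ →₀ ℕ} (h : ∀ i ∈ s, IsLead (F i) (ν i)) :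
    IsLead (∏ i ∈ s, F i) (∑ i ∈ s, ν i) := by
  induction s using Finset.cons_induction with
  | empty => simpa only [Finset.prod_empty, Finset.sum_empty] using isLead_one
  | cons i s hi ih =>
    rw [Finset.prod_cons, Finset.sum_cons]
    rw [Finset.forall_mem_cons] at h
    exact h.1.mul (ih h.2)

theorem coeff_prod_of_isLead [NoZeroDivisors K] [Nontrivial K] {ι : Type*} (s : Finset ι)
    {F : ι → MvPolynomial σ K} {ν : ι → σ →₀ ℕ} (h : ∀ i ∈ s, IsLead (F i) (ν i)) :
    coeff (∑ i ∈ s, ν i) (∏ i ∈ s, F i) = ∏ i ∈ s, coeff (ν i) (F i) := by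
  induction s using Finset.cons_induction with
  | empty => simp
  | cons i s hi ih =>
    rw [Finset.forall_mem_cons] at h
    rw [Finset.prod_cons, Finset.sum_cons, Finset.prod_cons,
      h.1.coeff_mul (isLead_prod s h.2), ih h.2]

theorem toLex_mapDomain_lt {τ : Type*} [LinearOrder τ] {f : σ → τ} (hf : StrictMono f)
    (h : toLex μ < toLex ν) : toLex (μ.mapDomain f) < toLex (ν.mapDomain f) := by
  obtain ⟨j, heq, hlt⟩ := Finsupp.Lex.lt_iff.mp h
  refine Finsupp.Lex.lt_iff.mpr ⟨f j, fun i hi => ?_, ?_⟩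
  · by_cases hrange : i ∈ Set.range f
    · obtain ⟨i, rfl⟩ := hrange
      simpa only [ofLex_toLex, Finsupp.mapDomain_apply hf.injective] using
        heq i (hf.lt_iff_lt.mp hi)
    · simp only [ofLex_toLex, Finsupp.mapDomain_of_notMem_range _ _ hrange]
  · simpa only [ofLex_toLex, Finsupp.mapDomain_apply hf.injective] using hlt

theorem IsLead.rename {τ : Type*} [LinearOrder τ] {f : σ → τ} (hf : StrictMono f)
    (hF : IsLead F ν) : IsLead (rename f F) (ν.mapDomain f) := by
  refine ⟨by rw [coeff_rename_mapDomain _ hf.injective]; exact hF.1, fun μ hμ => ?_⟩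
  obtain ⟨κ, rfl, hκ⟩ := coeff_rename_ne_zero _ _ _ hμ
  rcases (hF.2 κ hκ).lt_or_eq with hlt | heq
  · exact (toLex_mapDomain_lt hf hlt).le
  · rw [toLex_inj.mp heq]

theorem isLead_of_pderiv_bot [NoZeroDivisors K] [CharZero K] [OrderBot σ]
    (h : IsLead (pderiv ⊥ F) ν) : IsLead F (ν + Finsupp.single ⊥ 1) := by
  refine ⟨fun h0 => h.1 (by rw [coeff_pderiv, h0, zero_mul]), fun μ hμ => ?_⟩
  rcases Nat.eq_zero_or_pos (μ ⊥) with hbot | hbot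
  · refine (Finsupp.Lex.lt_iff.mpr ⟨⊥, fun j hj => absurd hj not_lt_bot, ?_⟩).le
    simp only [ofLex_toLex, hbot, Finsupp.add_apply, Finsupp.single_eq_same, Nat.succ_pos']
  · obtain ⟨κ, rfl⟩ : ∃ κ, μ = Finsupp.single ⊥ 1 + κ :=
      exists_add_of_le (Finsupp.single_le_iff.mpr (show 1 ≤ μ ⊥ from hbot))
    rw [add_comm] at hμ ⊢
    rw [toLex_add, toLex_add]
    refine add_le_add_left (h.2 κ ?_) _
    rw [coeff_pderiv]
    exact mul_ne_zero hμ (Nat.cast_add_one_ne_zero _)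

end IsLead

/-! ### Umbral evaluation -/

section Umbral

theorem linearMap_ext_monomial {R M σ : Type*} [CommSemiring R] [AddCommMonoid M] [Module R M]
    {f g : MvPolynomial σ R →ₗ[R] M} (h : ∀ α, f (monomial α 1) = g (monomial α 1)) : f = g :=
  (basisMonomials σ R).ext fun α => by simpa only [coe_basisMonomials] using h α

variable {ι R B : Type*} [Fintype ι]

theorem prod_univ_X_pow_eq_monomial [CommSemiring R] (n : ι → ℕ) :
    ∏ s, (X s : MvPolynomial ι R) ^ n s = monomial (Finsupp.equivFunOnFinite.symm n) 1 := by
  rw [monomial_eq, Finsupp.prod_fintype _ _ fun _ => pow_zero _, C_1, one_mul]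
  rfl

section CommSemiring

variable [CommSemiring R] [CommSemiring B] [Algebra R B]

/-- Umbral evaluation: the linear map sending the monomial `∏ X_s ^ α_s` to `∏ τ_s(α_s)`, so that
the exponents of the formal variables become indices. -/
noncomputable def umbral (τ : ι → ℕ → B) : MvPolynomial ι R →ₗ[R] B :=
  (basisMonomials ι R).constr R fun α => ∏ s, τ s (α s)

theorem umbral_monomial_one (τ : ι → ℕ → B) (α : ι →₀ ℕ) :
    umbral τ (monomial α (1 : R)) = ∏ s, τ s (α s) :=
  (basisMonomials ι R).constr_basis R _ α

theorem umbral_monomial (τ : ι → ℕ → B) (α : ι →₀ ℕ) (c : R) :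
    umbral τ (monomial α c) = c • ∏ s, τ s (α s) := by
  rw [← umbral_monomial_one (R := R), ← map_smul, smul_monomial, smul_eq_mul, mul_one]

theorem umbral_one (τ : ι → ℕ → B) : umbral τ (1 : MvPolynomial ι R) = ∏ s, τ s 0 :=
  umbral_monomial_one τ 0

theorem map_umbral {B' : Type*} [CommSemiring B'] [Algebra R B'] (ψ : B →ₐ[R] B') (τ : ι → ℕ → B)
    (f : MvPolynomial ι R) : ψ (umbral τ f) = umbral (fun s j => ψ (τ s j)) f := by
  refine LinearMap.congr_fun (f := ψ.toLinearMap ∘ₗ umbral τ) ?_ f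
  refine linearMap_ext_monomial fun α => ?_
  simp only [LinearMap.comp_apply, AlgHom.toLinearMap_apply, umbral_monomial_one, map_prod]

theorem umbral_sum [DecidableEq ι] {κ : Type*} (S : ι → Finset κ) (τ : κ → ι → ℕ → B)
    (f : MvPolynomial ι R) :
    umbral (fun s j => ∑ r ∈ S s, τ r s j) f =
      ∑ g ∈ Fintype.piFinset S, umbral (fun s j => τ (g s) s j) f := by
  rw [← LinearMap.sum_apply]
  refine LinearMap.congr_fun (linearMap_ext_monomial fun α => ?_) f
  simp only [LinearMap.sum_apply, umbral_monomial_one, Finset.prod_univ_sum]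

theorem umbral_monomial_mul (τ : ι → ℕ → B) (α : ι →₀ ℕ) (f : MvPolynomial ι R) :
    umbral τ (monomial α 1 * f) = umbral (fun s j => τ s (α s + j)) f := by
  refine LinearMap.congr_fun (f := umbral τ ∘ₗ LinearMap.mulLeft R (monomial α 1)) ?_ f
  refine linearMap_ext_monomial fun β => ?_
  simp only [LinearMap.comp_apply, LinearMap.mulLeft_apply, monomial_mul, mul_one,
    umbral_monomial_one, Finsupp.add_apply]

theorem umbral_X_mul {τ : ι → ℕ → B} {p : ι} {x : B} (h : ∀ j, τ p (j + 1) = x * τ p j)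
    (g : MvPolynomial ι R) : umbral τ (X p * g) = x * umbral τ g := by
  classical
  refine LinearMap.congr_fun (f := umbral τ ∘ₗ LinearMap.mulLeft R (X p))
    (g := LinearMap.mulLeft R x ∘ₗ umbral τ) (linearMap_ext_monomial fun α => ?_) g
  have hoff : ∀ s ∈ Finset.univ.erase p, τ s (Finsupp.single p 1 s + α s) = τ s (α s) := by
    intro s hs
    rw [Finsupp.single_eq_of_ne (Finset.ne_of_mem_erase hs), zero_add]
  simp only [LinearMap.comp_apply, LinearMap.mulLeft_apply]
  rw [X, umbral_monomial_mul, umbral_monomial_one, umbral_monomial_one,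
    ← Finset.mul_prod_erase _ _ (Finset.mem_univ p),
    ← Finset.mul_prod_erase _ (fun s => τ s (α s)) (Finset.mem_univ p),
    Finset.prod_congr rfl hoff, Finsupp.single_eq_same, add_comm, h, mul_assoc]

theorem umbral_geom (κ x : ι → B) (f : MvPolynomial ι R) :
    umbral (fun s j => κ s * x s ^ j) f = (∏ s, κ s) * aeval x f := by
  refine LinearMap.congr_fun (g := LinearMap.mulLeft R (∏ s, κ s) ∘ₗ (aeval x).toLinearMap)
    (linearMap_ext_monomial fun α => ?_) f
  simp only [LinearMap.comp_apply, LinearMap.mulLeft_apply, AlgHom.toLinearMap_apply,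
    umbral_monomial_one, aeval_monomial, map_one, one_mul, Finset.prod_mul_distrib]
  rw [Finsupp.prod_fintype _ _ fun _ => pow_zero _]

theorem umbral_rename {ι' : Type*} [Fintype ι'] (e : ι ≃ ι') (τ : ι' → ℕ → B)
    (f : MvPolynomial ι R) : umbral τ (rename e f) = umbral (fun s => τ (e s)) f := by
  refine LinearMap.congr_fun (f := umbral τ ∘ₗ (rename e).toLinearMap)
    (linearMap_ext_monomial fun α => ?_) f
  simp only [LinearMap.comp_apply, AlgHom.toLinearMap_apply, rename_monomial,
    umbral_monomial_one]
  rw [← e.prod_comp]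
  simp only [Finsupp.mapDomain_apply e.injective]

theorem umbral_option {τ : Option ι → ℕ → B} (h : ∀ j, τ none (j + 1) = 0)
    (f : MvPolynomial (Option ι) R) :
    umbral τ f = τ none 0 * umbral (fun s => τ (some s))
      (aeval (fun o : Option ι => o.elim (0 : MvPolynomial ι R) X) f) := by
  refine LinearMap.congr_fun (g := LinearMap.mulLeft R (τ none 0) ∘ₗ
    umbral (fun s => τ (some s)) ∘ₗ (aeval fun o : Option ι => o.elim 0 X).toLinearMap)
    (linearMap_ext_monomial fun α => ?_) f
  simp only [LinearMap.comp_apply, LinearMap.mulLeft_apply, AlgHom.toLinearMap_apply,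
    umbral_monomial_one, aeval_monomial, map_one, one_mul]
  rw [Finsupp.prod_fintype _ _ fun _ => pow_zero _, Fintype.prod_option, Fintype.prod_option]
  simp only [Option.elim, prod_univ_X_pow_eq_monomial]
  rcases α none with _ | n
  · rw [pow_zero, one_mul, umbral_monomial_one]
    rfl
  · rw [h, zero_mul, pow_succ, mul_zero, zero_mul, map_zero, mul_zero]

theorem umbral_mem (S : Submodule R B) {τ : ι → ℕ → B}
    {f : MvPolynomial ι R} (h : ∀ α ∈ f.support, ∏ s, τ s (α s) ∈ S) : umbral τ f ∈ S := by
  rw [f.as_sum, map_sum]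
  refine S.sum_mem fun α hα => ?_
  rw [umbral_monomial]
  exact S.smul_mem _ (h α hα)

end CommSemiring

theorem umbral_eq_zero_of_X_sub_X_dvd [CommRing R] [CommRing B] [Algebra R B] {τ : ι → ℕ → B}
    {p q : ι} {x : B} (hp : ∀ j, τ p (j + 1) = x * τ p j) (hq : ∀ j, τ q (j + 1) = x * τ q j)
    {f : MvPolynomial ι R} (hf : X p - X q ∣ f) : umbral τ f = 0 := by
  obtain ⟨g, rfl⟩ := hf
  rw [sub_mul, map_sub, umbral_X_mul hp, umbral_X_mul hq, sub_self]

theorem natDegree_umbral_le [CommSemiring R] [CommSemiring B] [Algebra R B]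
    {τ : ι → ℕ → Polynomial B} {D : ι → ℕ} (h : ∀ s j, (τ s j).natDegree ≤ D s)
    (f : MvPolynomial ι R) : (umbral τ f).natDegree ≤ ∑ s, D s := by
  rw [f.as_sum, map_sum]
  refine Polynomial.natDegree_sum_le_of_forall_le _ _ fun α _ => ?_
  rw [umbral_monomial]
  exact (Polynomial.natDegree_smul_le _ _).trans ((Polynomial.natDegree_prod_le _ _).trans
    (Finset.sum_le_sum fun s _ => h s _))

end Umbral

/-! ### Degrees along the curve -/

section Curve

variable {B : Type*} [CommRing B]

/-- The point `(α, β, α x, β x, α x², β x², …)` of the double curve that governs the degree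
conditions. -/
def curve (α β x : B) (i : ℕ) : B :=
  (if Even i then α else β) * x ^ (i / 2)

/-- The parametrized line `t + v X`. -/
noncomputable def line (t v : ℕ → B) (i : ℕ) : Polynomial B :=
  Polynomial.C (t i) + Polynomial.C (v i) * Polynomial.X

theorem curve_zero (α β x : B) : curve α β x 0 = α := by
  rw [curve, if_pos Even.zero, Nat.zero_div, pow_zero, mul_one]

theorem curve_one (α β x : B) : curve α β x 1 = β := by
  rw [curve, if_neg Nat.not_even_one, Nat.div_eq_of_lt one_lt_two, pow_zero, mul_one]

theorem curve_two_mul_succ_add (α β x : B) (j b : ℕ) :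
    curve α β x (2 * (j + 1) + b) = x * curve α β x (2 * j + b) := by
  have hdiv : (2 * (j + 1) + b) / 2 = (2 * j + b) / 2 + 1 := by lia
  simp only [curve, Nat.even_add, even_two_mul, true_iff, hdiv, pow_succ]
  ring

theorem curve_zero_right {i : ℕ} (hi : 2 ≤ i) (α β : B) : curve α β 0 i = 0 := by
  rw [curve, zero_pow (by lia), mul_zero]

theorem curve_zero_zero {i : ℕ} (hi : 1 ≤ i) (α : B) : curve α 0 0 i = 0 := by
  rcases hi.eq_or_lt with rfl | hi
  · exact curve_one α 0 0
  · exact curve_zero_right hi α 0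

end Curve

/-- The polynomials of degree at most `k` along every line in a direction of the curve, at most
`k01` if the direction is at `x = 0`, and at most `k0` if moreover `β = 0`. The directions are
taken in arbitrary `ℚ`-algebras, so that generic ones are included. -/
def CurveDegreeLE (k k01 k0 : ℕ) (P : MvPolynomial ℕ ℚ) : Prop :=
  ∀ (B : Type) [CommRing B] [Algebra ℚ B] (t : ℕ → B) (α β x : B),
    (aeval (line t (curve α β x)) P).natDegree ≤ k ∧
    (aeval (line t (curve α β 0)) P).natDegree ≤ k01 ∧
    (aeval (line t (curve α 0 0)) P).natDegree ≤ k0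

section CurveDegreeLE

variable {k k01 k0 l l01 l0 : ℕ} {P Q : MvPolynomial ℕ ℚ}

theorem CurveDegreeLE.mul (hP : CurveDegreeLE k k01 k0 P) (hQ : CurveDegreeLE l l01 l0 Q) :
    CurveDegreeLE (k + l) (k01 + l01) (k0 + l0) (P * Q) := by
  intro B _ _ t α β x
  obtain ⟨hP, hP01, hP0⟩ := hP B t α β x
  obtain ⟨hQ, hQ01, hQ0⟩ := hQ B t α β x
  simp only [map_mul]
  exact ⟨Polynomial.natDegree_mul_le_of_le hP hQ, Polynomial.natDegree_mul_le_of_le hP01 hQ01,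
    Polynomial.natDegree_mul_le_of_le hP0 hQ0⟩

theorem curveDegreeLE_one : CurveDegreeLE 0 0 0 1 := by
  intro B _ _ t α β x
  simp only [map_one, Polynomial.natDegree_one, le_refl, and_self]

theorem curveDegreeLE_prod {ι : Type*} (s : Finset ι) {k k01 k0 : ι → ℕ}
    {P : ι → MvPolynomial ℕ ℚ} (h : ∀ i ∈ s, CurveDegreeLE (k i) (k01 i) (k0 i) (P i)) :
    CurveDegreeLE (∑ i ∈ s, k i) (∑ i ∈ s, k01 i) (∑ i ∈ s, k0 i) (∏ i ∈ s, P i) := by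
  induction s using Finset.cons_induction with
  | empty => simpa only [Finset.sum_empty, Finset.prod_empty] using curveDegreeLE_one
  | cons i s hi ih =>
    simp only [Finset.prod_cons, Finset.sum_cons]
    rw [Finset.forall_mem_cons] at h
    exact h.1.mul (ih h.2)

theorem CurveDegreeLE.mono (hP : CurveDegreeLE k k01 k0 P) (h01 : k01 ≤ l01) (h0 : k0 ≤ l0) :
    CurveDegreeLE k l01 l0 P := by
  intro B _ _ t α β x
  obtain ⟨hP, hP01, hP0⟩ := hP B t α β x
  exact ⟨hP, hP01.trans h01, hP0.trans h0⟩

/-- The subspace of polynomials with bounded degrees along the curve. -/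
def curveDegreeLE (k k01 k0 : ℕ) : Submodule ℚ (MvPolynomial ℕ ℚ) where
  carrier := {P | CurveDegreeLE k k01 k0 P}
  zero_mem' := by
    intro B _ _ t α β x
    simp only [map_zero, Polynomial.natDegree_zero, zero_le, and_self]
  add_mem' := by
    intro P Q hP hQ B _ _ t α β x
    obtain ⟨hP, hP01, hP0⟩ := hP B t α β x
    obtain ⟨hQ, hQ01, hQ0⟩ := hQ B t α β x
    simp only [map_add]
    exact ⟨Polynomial.natDegree_add_le_of_degree_le hP hQ,
      Polynomial.natDegree_add_le_of_degree_le hP01 hQ01,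
      Polynomial.natDegree_add_le_of_degree_le hP0 hQ0⟩
  smul_mem' := by
    intro c P hP B _ _ t α β x
    obtain ⟨hP, hP01, hP0⟩ := hP B t α β x
    simp only [map_smul]
    exact ⟨(Polynomial.natDegree_smul_le _ _).trans hP,
      (Polynomial.natDegree_smul_le _ _).trans hP01, (Polynomial.natDegree_smul_le _ _).trans hP0⟩

end CurveDegreeLE

/-! ### Charges and degrees as weights -/

/-- The charges and the degree of the `i`-th variable: `X_{2t}` and `X_{2t+1}` are dual to
`x_{γ₁}(-t-1)` and `x_{γ₂}(-t-1)`. -/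
def varWeight (i : ℕ) : ℕ × ℕ × ℕ :=
  (if Even i then 1 else 0, if Odd i then 1 else 0, i / 2 + 1)

theorem varWeight_two_mul_add (j b : ℕ) :
    varWeight (2 * j + b) = j • (0, 0, 1) + varWeight b := by
  have hdiv : (2 * j + b) / 2 + 1 = j + (b / 2 + 1) := by lia
  simp only [varWeight, ← Nat.not_even_iff_odd, Nat.even_add, even_two_mul, true_iff, hdiv,
    Prod.smul_mk, Prod.mk_add_mk, smul_eq_mul, mul_zero, zero_add, mul_one]

theorem weight_varWeight (a : ℕ →₀ ℕ) : Finsupp.weight varWeight a =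
    ((configCharge a).1, (configCharge a).2, configDegree a) := by
  simp only [Finsupp.weight_apply, configCharge, configDegree, Finsupp.sum, Prod.ext_iff,
    Prod.fst_sum, Prod.snd_sum, varWeight, Prod.smul_mk, smul_eq_mul, mul_ite, mul_one, mul_zero,
    mul_comm (_ / 2 + 1), and_self]

theorem weight_varWeight_eq_iff {a : ℕ →₀ ℕ} {n₁ n₂ d : ℕ} :
    Finsupp.weight varWeight a = (n₁, n₂, d) ↔
      configCharge a = (n₁, n₂) ∧ configDegree a = d := by
  simp only [weight_varWeight, Prod.ext_iff, and_assoc]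

theorem succ_half_mul_le_of_weight {a : ℕ →₀ ℕ} {w : ℕ × ℕ × ℕ}
    (h : Finsupp.weight varWeight a = w) (i : ℕ) : (i / 2 + 1) * a i ≤ w.2.2 := by
  rw [← h, weight_varWeight, configDegree, Finsupp.sum]
  by_cases hi : i ∈ a.support
  · exact Finset.single_le_sum (f := fun i => (i / 2 + 1) * a i) (fun _ _ => Nat.zero_le _) hi
  · rw [Finsupp.notMem_support_iff.mp hi, mul_zero]
    exact Nat.zero_le _

theorem eq_zero_of_weight {a : ℕ →₀ ℕ} {w : ℕ × ℕ × ℕ} (h : Finsupp.weight varWeight a = w)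
    {i : ℕ} (hi : 2 * w.2.2 ≤ i) : a i = 0 := by
  have hle := succ_half_mul_le_of_weight h i
  by_contra hne
  have := Nat.mul_le_mul_left (i / 2 + 1) (Nat.one_le_iff_ne_zero.mpr hne)
  lia

theorem finite_setOf_weight_eq (w : ℕ × ℕ × ℕ) :
    {a : ℕ →₀ ℕ | Finsupp.weight varWeight a = w}.Finite := by
  refine (Set.finite_Iic (∑ i ∈ Finset.range (2 * w.2.2), Finsupp.single i w.2.2)).subset
    fun a ha i => ?_
  rw [Finsupp.finsetSum_apply]
  by_cases hi : i < 2 * w.2.2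
  · refine (Nat.le_mul_of_pos_left _ (Nat.succ_pos _)).trans
      ((succ_half_mul_le_of_weight ha i).trans ?_)
    refine le_trans (b := Finsupp.single i w.2.2 i) (by rw [Finsupp.single_eq_same]) ?_
    exact Finset.single_le_sum (f := fun j => Finsupp.single j w.2.2 i)
      (fun _ _ => Nat.zero_le _) (Finset.mem_range.mpr hi)
  · rw [eq_zero_of_weight ha (not_lt.mp hi)]
    exact Nat.zero_le _

/-- The component of charge and degree `w` of the graded dual of `W(Λ)`, as a space of
polynomials. -/
noncomputable def boundedPiece (k k01 k0 : ℕ) (w : ℕ × ℕ × ℕ) :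
    Submodule ℚ (MvPolynomial ℕ ℚ) :=
  curveDegreeLE k k01 k0 ⊓ weightedHomogeneousSubmodule ℚ varWeight w

theorem mem_boundedPiece {k k01 k0 : ℕ} {w : ℕ × ℕ × ℕ} {P : MvPolynomial ℕ ℚ} :
    P ∈ boundedPiece k k01 k0 w ↔
      CurveDegreeLE k k01 k0 P ∧ IsWeightedHomogeneous varWeight P w := Iff.rfl

instance (k k01 k0 : ℕ) (w : ℕ × ℕ × ℕ) : FiniteDimensional ℚ (boundedPiece k k01 k0 w) := by
  have hfin : Finite {d | Finsupp.weight varWeight d = w} := finite_setOf_weight_eq w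
  have : FiniteDimensional ℚ (weightedHomogeneousSubmodule ℚ varWeight w) := by
    rw [weightedHomogeneousSubmodule_eq_finsupp_supported]
    exact Module.Finite.equiv (AddMonoidAlgebra.supportedEquivFinsupp
      {d | Finsupp.weight varWeight d = w}).symm
  exact Submodule.finiteDimensional_of_le (inf_le_right : boundedPiece k k01 k0 w ≤ _)

/-! ### Level-one polynomials -/

section LevelOne

theorem derivation_prod {R B : Type*} [CommSemiring R] [CommSemiring B] [Algebra R B]
    (D : Derivation R B B) {ι : Type*} [DecidableEq ι] (s : Finset ι) (f : ι → B) :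
    D (∏ i ∈ s, f i) = ∑ p ∈ s, D (f p) * ∏ i ∈ s.erase p, f i := by
  induction s using Finset.induction_on with
  | empty => simp only [Finset.prod_empty, Derivation.map_one_eq_zero, Finset.sum_empty]
  | insert i s hi ih =>
    have herase : ∀ p ∈ s, D (f p) * ∏ j ∈ (insert i s).erase p, f j =
        f i * (D (f p) * ∏ j ∈ s.erase p, f j) := by
      intro p hp
      rw [Finset.erase_insert_of_ne (ne_of_mem_of_not_mem hp hi).symm,
        Finset.prod_insert fun h => hi (Finset.mem_of_mem_erase h), mul_left_comm]
    rw [Finset.prod_insert hi, Derivation.leibniz, ih, Finset.sum_insert hi,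
      Finset.erase_insert hi, Finset.sum_congr rfl herase, ← Finset.mul_sum, add_comm,
      smul_eq_mul, smul_eq_mul, mul_comm (D (f i))]

theorem derivation_umbral {R B ι : Type*} [CommSemiring R] [CommSemiring B] [Algebra R B]
    [Fintype ι] [DecidableEq ι] (D : Derivation R B B) (τ : ι → ℕ → B) (f : MvPolynomial ι R) :
    D (umbral τ f) = ∑ p, umbral (Function.update τ p fun j => D (τ p j)) f := by
  rw [← LinearMap.sum_apply]
  refine LinearMap.congr_fun (f := D.toLinearMap ∘ₗ umbral τ)
    (linearMap_ext_monomial fun α => ?_) f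
  simp only [LinearMap.comp_apply, LinearMap.sum_apply, umbral_monomial_one]
  refine (derivation_prod D _ _).trans (Finset.sum_congr rfl fun p _ => ?_)
  rw [← Finset.mul_prod_erase _ _ (Finset.mem_univ p), Function.update_self]
  congr 1
  refine Finset.prod_congr rfl fun s hs => ?_
  rw [Function.update_of_ne (Finset.ne_of_mem_erase hs)]

theorem umbral_eq_zero {R B ι : Type*} [CommSemiring R] [CommSemiring B] [Algebra R B]
    [Fintype ι] {τ : ι → ℕ → B} {p : ι} (h : τ p = 0) (f : MvPolynomial ι R) :
    umbral τ f = 0 := by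
  refine LinearMap.congr_fun (g := 0) (linearMap_ext_monomial fun α => ?_) f
  rw [umbral_monomial_one, Finset.prod_eq_zero (Finset.mem_univ p) (by rw [h, Pi.zero_apply]),
    LinearMap.zero_apply]

variable {ι : Type*} [Fintype ι]

open Classical in
/-- The factor of the level-one kernel attached to the ordered pair `(s, s')`: it is absent only
for an odd `b s` and an even `b s'`. Hence variables of equal parity carry a double zero on their
diagonal and variables of different parity a simple one. -/
noncomputable def kernelFactor (b : ι → ℕ) (s s' : ι) : MvPolynomial ι ℚ :=
  if s ≠ s' ∧ ¬(Odd (b s) ∧ Even (b s')) then X s - X s' else 1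

/-- The level-one kernel. -/
noncomputable def kernel (b : ι → ℕ) : MvPolynomial ι ℚ :=
  ∏ s, ∏ s', kernelFactor b s s'

/-- The level-one polynomial `E(b)`: the exponent `j` of the variable `s` of the kernel becomes the
index `2 j + b s`. -/
noncomputable def levelOnePoly (b : ι → ℕ) : MvPolynomial ℕ ℚ :=
  umbral (fun s j => X (2 * j + b s)) (kernel b)

theorem X_sub_X_dvd_kernel (b : ι → ℕ) {p q : ι} (h : p ≠ q) : X p - X q ∣ kernel b := by
  have hdvd (p q : ι) : kernelFactor b p q ∣ kernel b :=
    (Finset.dvd_prod_of_mem (fun s' => kernelFactor b p s') (Finset.mem_univ q)).trans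
      (Finset.dvd_prod_of_mem (fun s => ∏ s', kernelFactor b s s') (Finset.mem_univ p))
  by_cases hpar : Odd (b p) ∧ Even (b q)
  · have hqp := hdvd q p
    rw [kernelFactor, if_pos ⟨h.symm, fun h' => Nat.not_even_iff_odd.mpr hpar.1 h'.2⟩] at hqp
    rwa [← neg_sub, neg_dvd]
  · have hpq := hdvd p q
    rwa [kernelFactor, if_pos ⟨h, hpar⟩] at hpq

theorem exists_isHomogeneous_kernel (b : ι → ℕ) : ∃ N, (kernel b).IsHomogeneous N := by
  have hfactor (s s' : ι) : ∃ N, (kernelFactor b s s').IsHomogeneous N := by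
    unfold kernelFactor
    split_ifs
    · exact ⟨1, (isHomogeneous_X _ _).sub (isHomogeneous_X _ _)⟩
    · exact ⟨0, isHomogeneous_one _ _⟩
  choose N hN using hfactor
  exact ⟨_, IsHomogeneous.prod _ _ _ fun s _ => IsHomogeneous.prod _ _ _ fun s' _ => hN s s'⟩

theorem exists_isWeightedHomogeneous_levelOnePoly (b : ι → ℕ) :
    ∃ w, IsWeightedHomogeneous varWeight (levelOnePoly b) w := by
  obtain ⟨N, hN⟩ := exists_isHomogeneous_kernel b
  refine ⟨N • (0, 0, 1) + ∑ s, varWeight (b s), ?_⟩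
  refine umbral_mem (weightedHomogeneousSubmodule ℚ varWeight _) fun α hα => ?_
  have hdeg : ∑ s, α s = N := by
    have := hN (mem_support_iff.mp hα)
    rw [Finsupp.weight_apply, Finsupp.sum_fintype _ _ fun _ => zero_mul _] at this
    simpa only [Pi.one_apply, smul_eq_mul, mul_one] using this
  have hprod := IsWeightedHomogeneous.prod (w := varWeight) Finset.univ
    (fun s => (X (2 * α s + b s) : MvPolynomial ℕ ℚ)) _ fun s _ => isWeightedHomogeneous_X ℚ _ _
  simp only [varWeight_two_mul_add, Finset.sum_add_distrib, ← Finset.sum_smul, hdeg] at hprod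
  exact hprod

theorem natDegree_levelOnePoly_curve_le (b : ι → ℕ) {B : Type} [CommRing B] [Algebra ℚ B]
    (t : ℕ → B) (α β x : B) :
    (aeval (line t (curve α β x)) (levelOnePoly b)).natDegree ≤ 1 := by
  classical
  let τ (r : Bool) (s : ι) (j : ℕ) : Polynomial B :=
    bif r then Polynomial.C (curve α β x (2 * j + b s)) * Polynomial.X
    else Polynomial.C (t (2 * j + b s))
  have hτ {g : ι → Bool} {p : ι} (hp : g p = true) (j : ℕ) :
      τ (g p) p (j + 1) = Polynomial.C x * τ (g p) p j := by
    simp only [τ, hp, cond_true, curve_two_mul_succ_add, Polynomial.C_mul, mul_assoc]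
  have hsum : (fun (s : ι) (j : ℕ) =>
      aeval (line t (curve α β x)) (X (2 * j + b s) : MvPolynomial ℕ ℚ)) =
      fun s j => ∑ r, τ r s j := by
    funext s j
    rw [aeval_X, Fintype.sum_bool]
    exact add_comm _ _
  rw [levelOnePoly, map_umbral, hsum, umbral_sum fun _ => Finset.univ]
  refine Polynomial.natDegree_sum_le_of_forall_le _ _ fun g _ => ?_
  by_cases hg : ∃ p q, p ≠ q ∧ g p = true ∧ g q = true
  · obtain ⟨p, q, hpq, hp, hq⟩ := hg
    rw [umbral_eq_zero_of_X_sub_X_dvd (τ := fun s j => τ (g s) s j) (hτ hp) (hτ hq)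
      (X_sub_X_dvd_kernel b hpq),
      Polynomial.natDegree_zero]
    exact Nat.zero_le 1
  · have hdeg (s : ι) (j : ℕ) : (τ (g s) s j).natDegree ≤ if g s = true then 1 else 0 := by
      cases hs : g s
      · exact (Polynomial.natDegree_C _).le
      · exact (Polynomial.natDegree_C_mul_le _ _).trans Polynomial.natDegree_X_le
    refine (natDegree_umbral_le hdeg _).trans ?_
    rw [Finset.sum_boole, Nat.cast_id, Finset.card_le_one]
    intro p hp q hq
    by_contra hne
    exact hg ⟨p, q, hne, (Finset.mem_filter.mp hp).2, (Finset.mem_filter.mp hq).2⟩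

theorem natDegree_levelOnePoly_line_eq_zero {b : ι → ℕ} {B : Type} [CommRing B] [Algebra ℚ B]
    (t : ℕ → B) {v : ℕ → B} (hv : ∀ s j, v (2 * j + b s) = 0) :
    (aeval (line t v) (levelOnePoly b)).natDegree = 0 := by
  have hdeg (s : ι) (j : ℕ) :
      (aeval (line t v) (X (2 * j + b s) : MvPolynomial ℕ ℚ)).natDegree ≤ 0 := by
    rw [aeval_X, line, hv, map_zero, zero_mul, add_zero, Polynomial.natDegree_C]
  rw [levelOnePoly, map_umbral]
  simpa only [Finset.sum_const_zero, Nat.le_zero] using natDegree_umbral_le hdeg (kernel b)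

theorem curveDegreeLE_levelOnePoly {b : ι → ℕ} {k01 k0 : ℕ} (h01 : ∀ s, b s < 2 → 1 ≤ k01)
    (h0 : ∀ s, b s < 1 → 1 ≤ k0) : CurveDegreeLE 1 k01 k0 (levelOnePoly b) := by
  intro B _ _ t α β x
  refine ⟨natDegree_levelOnePoly_curve_le b t α β x, ?_, ?_⟩
  · rcases Nat.eq_zero_or_pos k01 with rfl | hpos
    · refine (natDegree_levelOnePoly_line_eq_zero t fun s j => curve_zero_right ?_ α β).le
      exact le_add_left (not_lt.mp fun hs => absurd (h01 s hs) (Nat.not_succ_le_zero 0))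
    · exact (natDegree_levelOnePoly_curve_le b t α β 0).trans hpos
  · rcases Nat.eq_zero_or_pos k0 with rfl | hpos
    · refine (natDegree_levelOnePoly_line_eq_zero t fun s j => curve_zero_zero ?_ α).le
      exact le_add_left (not_lt.mp fun hs => absurd (h0 s hs) (Nat.not_succ_le_zero 0))
    · exact (natDegree_levelOnePoly_curve_le b t α 0 0).trans hpos

theorem kernel_congr {b b' : ι → ℕ} (h : ∀ s, Even (b s) ↔ Even (b' s)) :
    kernel b = kernel b' := by
  classical
  refine Finset.prod_congr rfl fun s _ => Finset.prod_congr rfl fun s' _ => if_congr ?_ rfl rfl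
  rw [← Nat.not_even_iff_odd, ← Nat.not_even_iff_odd, h, h]

theorem rename_kernel {ι' : Type*} [Fintype ι'] (e : ι ≃ ι') (b : ι' → ℕ) :
    rename e (kernel fun s => b (e s)) = kernel b := by
  classical
  simp only [kernel, kernelFactor, map_prod, apply_ite (rename e), map_sub, rename_X, map_one]
  refine Fintype.prod_equiv e _ _ fun s => Fintype.prod_equiv e _ _ fun s' =>
    if_congr (and_congr_left' ?_) rfl rfl
  exact (e.apply_eq_iff_eq.not).symm

theorem exists_kernel_succ (b : ι → ℕ) :
    ∃ u : ℚ, u ≠ 0 ∧ kernel (fun s => b s + 1) = u • kernel b := by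
  classical
  let u (s s' : ι) : ℚ := if s ≠ s' ∧ ¬(Odd (b s) ∧ Even (b s')) then -1 else 1
  have hu (s s' : ι) : u s s' ≠ 0 := by
    dsimp only [u]
    split_ifs <;> norm_num
  have hfactor (s s' : ι) :
      kernelFactor (fun s => b s + 1) s' s = C (u s s') * kernelFactor b s s' := by
    have hiff : (s' ≠ s ∧ ¬(Odd (b s' + 1) ∧ Even (b s + 1))) ↔
        (s ≠ s' ∧ ¬(Odd (b s) ∧ Even (b s'))) := by
      rw [Nat.odd_add_one, Nat.even_add_one, Nat.not_odd_iff_even, Nat.not_even_iff_odd]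
      tauto
    simp only [kernelFactor, u, hiff]
    split_ifs
    · rw [C_neg, C_1, neg_one_mul, neg_sub]
    · rw [C_1, one_mul]
  refine ⟨∏ s, ∏ s', u s s', Finset.prod_ne_zero_iff.mpr fun s _ =>
    Finset.prod_ne_zero_iff.mpr fun s' _ => hu s s', ?_⟩
  rw [kernel, Finset.prod_comm]
  simp only [hfactor, Finset.prod_mul_distrib, smul_eq_C_mul, map_prod, kernel]

theorem exists_levelOnePoly_succ (b : ι → ℕ) : ∃ u : ℚ, u ≠ 0 ∧
    levelOnePoly (fun s => b s + 1) = u • rename Nat.succ (levelOnePoly b) := by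
  obtain ⟨u, hu, hkernel⟩ := exists_kernel_succ b
  refine ⟨u, hu, ?_⟩
  rw [levelOnePoly, hkernel, map_smul, levelOnePoly, map_umbral]
  simp only [rename_X, Nat.succ_eq_add_one, add_assoc]

theorem IsLead.levelOnePoly_succ {b : ι → ℕ} {a : ℕ →₀ ℕ} (h : IsLead (levelOnePoly b) a) :
    IsLead (levelOnePoly fun s => b s + 1) (a.mapDomain Nat.succ) := by
  obtain ⟨u, hu, hpoly⟩ := exists_levelOnePoly_succ b
  rw [hpoly]
  exact (h.rename (strictMono_nat_of_lt_succ fun n => Nat.lt_succ_self _)).smul hu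

end LevelOne

section Derivative

theorem umbral_update_kernel_comm {ι B : Type*} [Fintype ι] [DecidableEq ι] [CommRing B]
    [Algebra ℚ B] {b : ι → ℕ} {p q : ι} (h : b p = b q) (T : ℕ → ℕ → B) (c : ℕ → B) :
    umbral (Function.update (fun s => T (b s)) p c) (kernel b) =
      umbral (Function.update (fun s => T (b s)) q c) (kernel b) := by
  have hb (s : ι) : b (Equiv.swap p q s) = b s := by
    rcases eq_or_ne s p with rfl | hp
    · rw [Equiv.swap_apply_left, h]
    rcases eq_or_ne s q with rfl | hq
    · rw [Equiv.swap_apply_right, h]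
    rw [Equiv.swap_apply_of_ne_of_ne hp hq]
  have hkernel : rename (Equiv.swap p q) (kernel b) = kernel b := by
    simpa only [hb] using rename_kernel (Equiv.swap p q) b
  conv_lhs => rw [← hkernel, umbral_rename]
  congr 2
  funext s
  simp only [Function.update_apply, hb, Equiv.swap_apply_eq_iff, Equiv.swap_apply_left]

variable {κ : Type*} [Fintype κ] {b : Option κ → ℕ}

theorem exists_aeval_kernel_option (hb : b none = 0) : ∃ u : ℚ, u ≠ 0 ∧
    aeval (fun o : Option κ => o.elim (0 : MvPolynomial κ ℚ) X) (kernel b) =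
      u • (monomial (Finsupp.equivFunOnFinite.symm fun s => if Even (b (some s)) then 2 else 1) 1 *
        kernel fun s => b (some s)) := by
  have hnone : kernelFactor b none none = 1 := by simp [kernelFactor]
  have hleft (s : κ) : aeval (fun o : Option κ => o.elim (0 : MvPolynomial κ ℚ) X)
      (kernelFactor b none (some s)) = C (-1) * X s := by
    simp [kernelFactor, hb]
  have hright (s : κ) : aeval (fun o : Option κ => o.elim (0 : MvPolynomial κ ℚ) X)
      (kernelFactor b (some s) none) = X s ^ (if Even (b (some s)) then 1 else 0) := by
    by_cases h : Even (b (some s)) <;> simp [kernelFactor, hb, h, ← Nat.not_even_iff_odd]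
  have hsome (s s' : κ) : aeval (fun o : Option κ => o.elim (0 : MvPolynomial κ ℚ) X)
      (kernelFactor b (some s) (some s')) = kernelFactor (fun s => b (some s)) s s' := by
    by_cases h : s ≠ s' ∧ ¬(Odd (b (some s)) ∧ Even (b (some s')))
    · rw [kernelFactor, kernelFactor, if_pos h, if_pos (by simpa using h)]
      simp
    · rw [kernelFactor, kernelFactor, if_neg h, if_neg (by simpa using h), map_one]
  refine ⟨∏ _s : κ, (-1), Finset.prod_ne_zero_iff.mpr fun _ _ => neg_ne_zero.mpr one_ne_zero, ?_⟩
  rw [kernel, Fintype.prod_option, Fintype.prod_option, hnone, one_mul]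
  simp only [Fintype.prod_option, map_mul, map_prod, hleft, hright, hsome]
  rw [smul_eq_C_mul, map_prod, ← prod_univ_X_pow_eq_monomial, kernel, ← Finset.prod_mul_distrib,
    ← Finset.prod_mul_distrib, ← Finset.prod_mul_distrib]
  refine Finset.prod_congr rfl fun s _ => ?_
  split_ifs <;> ring

theorem exists_umbral_kernel_option [DecidableEq κ] (hb : b none = 0) : ∃ u : ℚ, u ≠ 0 ∧
    umbral (Function.update (fun s j => X (2 * j + b s)) none (Pi.single 0 1)) (kernel b) =
      u • levelOnePoly fun s => b (some s) + 2 * if Even (b (some s)) then 2 else 1 := by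
  obtain ⟨u, hu, hkernel⟩ := exists_aeval_kernel_option hb
  refine ⟨u, hu, ?_⟩
  have hparity (s : κ) : Even (b (some s) + 2 * if Even (b (some s)) then 2 else 1) ↔
      Even (b (some s)) := by
    rw [Nat.even_add, iff_true_right (even_two_mul _)]
  rw [umbral_option, Function.update_self, Pi.single_eq_same, one_mul, hkernel, map_smul,
    umbral_monomial_mul, levelOnePoly, kernel_congr hparity]
  · congr 3
    funext s j
    rw [Function.update_of_ne (Option.some_ne_none s), Finsupp.coe_equivFunOnFinite_symm]
    congr 1
    ring
  · intro j
    rw [Function.update_self, Pi.single_eq_of_ne (Nat.succ_ne_zero j)]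

theorem exists_pderiv_levelOnePoly (hb : b none = 0) : ∃ u : ℚ, u ≠ 0 ∧
    pderiv 0 (levelOnePoly b) =
      u • levelOnePoly fun s => b (some s) + 2 * if Even (b (some s)) then 2 else 1 := by
  classical
  obtain ⟨u, hu, hnone⟩ := exists_umbral_kernel_option hb
  have hterm (p : Option κ) : umbral (Function.update (fun s j => X (2 * j + b s)) p
      fun j => pderiv 0 (X (2 * j + b p))) (kernel b) = if b p = 0 then
        umbral (Function.update (fun s j => X (2 * j + b s)) none (Pi.single 0 1)) (kernel b)
        else (0 : MvPolynomial ℕ ℚ) := by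
    split_ifs with hp
    · rw [← umbral_update_kernel_comm (hp.trans hb.symm) fun c j => X (2 * j + c)]
      congr 3
      funext j
      rw [pderiv_X, hp, add_zero]
      rcases j with _ | j
      · rw [mul_zero, Pi.single_eq_same]
      · rw [Pi.single_eq_of_ne (by lia), Pi.single_eq_of_ne (by lia)]
    · refine umbral_eq_zero (p := p) (funext fun j => ?_) _
      rw [Function.update_self, pderiv_X_of_ne (by lia), Pi.zero_apply]
  have hcard : ({p | b p = 0} : Finset (Option κ)).card ≠ 0 :=
    Finset.card_ne_zero_of_mem (Finset.mem_filter.mpr ⟨Finset.mem_univ none, hb⟩)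
  refine ⟨({p | b p = 0} : Finset (Option κ)).card * u, mul_ne_zero (mod_cast hcard) hu, ?_⟩
  rw [levelOnePoly, derivation_umbral, Finset.sum_congr rfl fun p _ => hterm p,
    ← Finset.sum_filter, Finset.sum_const, hnone, mul_smul, Nat.cast_smul_eq_nsmul]

theorem IsLead.levelOnePoly_option {a : ℕ →₀ ℕ} {c : κ → ℕ} (h : IsLead (levelOnePoly c) a)
    (hb : b none = 0)
    (hc : ∀ s, b (some s) + 2 * (if Even (b (some s)) then 2 else 1) = c s + 3) :
    IsLead (levelOnePoly b) (a.mapDomain (· + 3) + Finsupp.single 0 1) := by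
  obtain ⟨u, hu, hderiv⟩ := exists_pderiv_levelOnePoly hb
  simp only [hc] at hderiv
  refine isLead_of_pderiv_bot ?_
  rw [Nat.bot_eq_zero, hderiv]
  have hshift := h.levelOnePoly_succ.levelOnePoly_succ.levelOnePoly_succ.smul hu
  rwa [← Finsupp.mapDomain_comp, ← Finsupp.mapDomain_comp] at hshift

end Derivative

/-! ### Admissible configurations as leading exponents: existence -/

section Configuration

variable {a : ℕ →₀ ℕ}

theorem exists_eq_mapDomain_add {n : ℕ} (h : ∀ i < n, a i = 0) :
    ∃ a' : ℕ →₀ ℕ, a = a'.mapDomain (· + n) ∧ ∀ i, a' i = a (i + n) := by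
  refine ⟨a.comapDomain (· + n) (add_left_injective n).injOn, ?_, fun i => rfl⟩
  rw [Finsupp.mapDomain_comapDomain _ (add_left_injective n)]
  intro i hi
  exact ⟨i - n, Nat.sub_add_cancel (not_lt.mp fun hin => Finsupp.mem_support_iff.mp hi (h i hin))⟩

theorem exists_eq_mapDomain_add_single (hwindow : a 0 + a 1 + a 2 ≤ 1) (h0 : a 0 ≠ 0) :
    ∃ a' : ℕ →₀ ℕ, a = a'.mapDomain (· + 3) + Finsupp.single 0 1 ∧ ∀ i, a' i = a (i + 3) := by
  have hprefix : ∀ i < 3, (a.erase 0) i = 0 := by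
    intro i hi
    interval_cases i
    · exact Finsupp.erase_same
    · rw [Finsupp.erase_ne one_ne_zero]
      lia
    · rw [Finsupp.erase_ne two_ne_zero]
      lia
  obtain ⟨a', hshift, ha'⟩ := exists_eq_mapDomain_add hprefix
  have hone : 1 = a 0 := by lia
  refine ⟨a', ?_, fun i => by rw [ha', Finsupp.erase_ne (Nat.succ_ne_zero _)]⟩
  rw [← hshift, hone, Finsupp.erase_add_single]

theorem exists_isLead_levelOnePoly (n : ℕ) : ∀ a : ℕ →₀ ℕ,
    (∀ i, a i + a (i + 1) + a (i + 2) ≤ 1) → (∀ i, n ≤ i → a i = 0) →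
    ∃ (κ : Type) (_ : Fintype κ) (b : κ → ℕ), IsLead (levelOnePoly b) a ∧
      (∀ s, b s < 2 → 1 ≤ a 0 + a 1) ∧ ∀ s, b s < 1 → 1 ≤ a 0 := by
  induction n using Nat.strong_induction_on with | _ n ih => ?_
  intro a ha hn
  by_cases hzero : a = 0
  · refine ⟨PEmpty, inferInstance, PEmpty.elim, ?_, fun s => s.elim, fun s => s.elim⟩
    have hone : levelOnePoly PEmpty.elim = 1 := by
      rw [levelOnePoly, kernel, Finset.univ_eq_empty, Finset.prod_empty, umbral_one,
        Finset.univ_eq_empty, Finset.prod_empty]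
    rw [hzero, hone]
    exact isLead_one
  have hpos : 0 < n := Nat.pos_of_ne_zero fun hn0 =>
    hzero (Finsupp.ext fun i => hn i (hn0 ▸ Nat.zero_le i))
  by_cases h0 : a 0 = 0
  · obtain ⟨a', rfl, ha'⟩ := exists_eq_mapDomain_add (n := 1) (a := a) fun i hi => by
      rw [Nat.lt_one_iff.mp hi, h0]
    obtain ⟨κ, _, b, hb, -, hb0⟩ := ih (n - 1) (Nat.sub_lt hpos one_pos) a'
      (fun i => by simp only [ha']; convert ha (i + 1) using 1)
      (fun i hi => (ha' i).trans (hn _ (Nat.sub_le_iff_le_add.mp hi)))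
    refine ⟨κ, _, fun s => b s + 1, hb.levelOnePoly_succ, fun s hs => ?_, fun s hs => ?_⟩
    · exact le_add_left ((ha' 0).symm ▸ hb0 s (Nat.lt_of_succ_lt_succ hs))
    · exact absurd hs (by lia)
  · obtain ⟨a', heq, happly⟩ := exists_eq_mapDomain_add_single (ha 0) h0
    obtain ⟨κ, _, b, hb, -, -⟩ := ih (n - 1) (Nat.sub_lt hpos one_pos) a'
      (fun i => by simp only [happly]; convert ha (i + 3) using 1)
      (fun i hi => by rw [happly]; exact hn _ (by lia))
    refine ⟨Option κ, inferInstance,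
      fun o => o.elim 0 fun s => if Even (b s) then b s + 1 else b s - 1, ?_,
      fun _ _ => le_add_right (Nat.one_le_iff_ne_zero.mpr h0),
      fun _ _ => Nat.one_le_iff_ne_zero.mpr h0⟩
    rw [heq]
    exact hb.levelOnePoly_option rfl fun s => by grind

theorem exists_isLead_of_window_le_one (ha : ∀ i, a i + a (i + 1) + a (i + 2) ≤ 1) :
    ∃ P, IsLead P a ∧ CurveDegreeLE 1 (a 0 + a 1) (a 0) P ∧
      ∃ w, IsWeightedHomogeneous varWeight P w := by
  obtain ⟨n, hn⟩ := a.support.bddAbove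
  obtain ⟨κ, _, b, hb, hb01, hb0⟩ := exists_isLead_levelOnePoly (n + 1) a ha fun i hi =>
    Finsupp.notMem_support_iff.mp fun hmem => absurd (hn hmem) (by lia)
  exact ⟨_, hb, curveDegreeLE_levelOnePoly hb01 hb0, exists_isWeightedHomogeneous_levelOnePoly b⟩

/-- The `j`-th of the `k` level-one configurations into which a configuration `a` of level `k` is
split: it takes every `k`-th of the `∑ a i` particles, listed by increasing index. -/
noncomputable def levelOnePart (k : ℕ) (a : ℕ →₀ ℕ) (j : ℕ) : ℕ →₀ ℕ :=
  Finsupp.onFinset a.support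
    (fun i => (∑ l ∈ Finset.range (i + 1), a l + j) / k - (∑ l ∈ Finset.range i, a l + j) / k)
    fun i hi => by
      rw [Finsupp.mem_support_iff]
      intro h
      rw [Finset.sum_range_succ, h, add_zero, Nat.sub_self] at hi
      exact hi rfl

variable {k : ℕ}

theorem sum_levelOnePart_range (a : ℕ →₀ ℕ) (i n j : ℕ) :
    ∑ l ∈ Finset.range n, levelOnePart k a j (i + l) =
      (∑ l ∈ Finset.range (i + n), a l + j) / k - (∑ l ∈ Finset.range i, a l + j) / k := by
  refine Finset.sum_range_tsub (f := fun l => (∑ m ∈ Finset.range (i + l), a m + j) / k) ?_ n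
  exact fun m n hmn => Nat.div_le_div_right (Nat.add_le_add_right
    (Finset.sum_le_sum_of_subset (Finset.range_subset_range.mpr (by lia))) j)

theorem levelOnePart_window (ha : ∀ i, a i + a (i + 1) + a (i + 2) ≤ k) (i j : ℕ) :
    levelOnePart k a j i + levelOnePart k a j (i + 1) + levelOnePart k a j (i + 2) ≤ 1 := by
  have hsum : levelOnePart k a j i + levelOnePart k a j (i + 1) + levelOnePart k a j (i + 2) =
      ∑ l ∈ Finset.range 3, levelOnePart k a j (i + l) := by
    simp only [Finset.sum_range_succ, Finset.sum_range_zero, zero_add, add_zero]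
  have hle : ∑ l ∈ Finset.range (i + 3), a l + j ≤ ∑ l ∈ Finset.range i, a l + j + k := by
    simp only [Finset.sum_range_succ]
    linarith [ha i]
  rw [hsum, sum_levelOnePart_range, Nat.sub_le_iff_le_add']
  rcases k.eq_zero_or_pos with rfl | hk
  · simp only [Nat.div_zero, Nat.zero_le]
  · exact (Nat.div_le_div_right hle).trans_eq (Nat.add_div_right _ hk)

theorem sum_range_add_div (hk : 0 < k) (m : ℕ) : ∑ j ∈ Finset.range k, (m + j) / k = m := by
  induction m with
  | zero =>
    exact Finset.sum_eq_zero fun j hj => by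
      rw [zero_add, Nat.div_eq_of_lt (Finset.mem_range.mp hj)]
  | succ m ih =>
    have hshift := (Finset.sum_range_succ (fun j => (m + j) / k) k).symm.trans
      (Finset.sum_range_succ' (fun j => (m + j) / k) k)
    rw [ih, Nat.add_div_right _ hk, add_zero, ← add_assoc, add_right_comm, add_right_cancel_iff]
      at hshift
    simpa only [add_assoc, add_comm 1] using hshift.symm

theorem sum_levelOnePart (hk : 0 < k) (a : ℕ →₀ ℕ) :
    ∑ j ∈ Finset.range k, levelOnePart k a j = a := by
  ext i
  rw [Finsupp.finsetSum_apply]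
  simp only [levelOnePart, Finsupp.onFinset_apply]
  rw [Finset.sum_tsub_distrib, sum_range_add_div hk, sum_range_add_div hk, Finset.sum_range_succ,
    Nat.add_sub_cancel_left]
  exact fun j _ => Nat.div_le_div_right (by rw [Finset.sum_range_succ]; lia)

theorem exists_isLead_of_isAdmissibleConfig {k₀ k₁ : ℕ} (hk : 0 < k)
    (ha : IsAdmissibleConfig k k₀ k₁ a) :
    ∃ P ∈ boundedPiece k (k₀ + k₁) k₀ (Finsupp.weight varWeight a), IsLead P a := by
  choose P hlead hdeg w hhom using fun j =>
    exists_isLead_of_window_le_one fun i => levelOnePart_window ha.1 i j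
  have hleadprod : IsLead (∏ j ∈ Finset.range k, P j) a := by
    simpa only [sum_levelOnePart hk] using isLead_prod (Finset.range k) fun j _ => hlead j
  have hhomprod := IsWeightedHomogeneous.prod (Finset.range k) P w fun j _ => hhom j
  refine ⟨∏ j ∈ Finset.range k, P j, mem_boundedPiece.mpr ⟨?_, ?_⟩, hleadprod⟩
  · have hdegprod := curveDegreeLE_prod (Finset.range k) fun j _ => hdeg j
    simp only [Finset.sum_add_distrib, ← Finsupp.finsetSum_apply, sum_levelOnePart hk,
      Finset.sum_const, Finset.card_range, smul_eq_mul, mul_one] at hdegprod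
    exact hdegprod.mono ha.2.2 ha.2.1
  · rwa [hhomprod hleadprod.1]

end Configuration

/-! ### Admissible configurations as leading exponents: necessity -/

theorem IsLead.linearMap_apply_ne_zero {σ K : Type*} [LinearOrder σ] [Field K]
    {P : MvPolynomial σ K} {a : σ →₀ ℕ} (hP : IsLead P a) (φ : MvPolynomial σ K →ₗ[K] K)
    (ha : φ (monomial a 1) ≠ 0) (hmin : ∀ b, φ (monomial b 1) ≠ 0 → toLex a ≤ toLex b) :
    φ P ≠ 0 := by
  have hmonomial (b : σ →₀ ℕ) : φ (monomial b (coeff b P)) = coeff b P * φ (monomial b 1) := by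
    rw [← smul_eq_mul, ← map_smul, smul_monomial, smul_eq_mul, mul_one]
  rw [P.as_sum, map_sum, Finset.sum_eq_single_of_mem a (mem_support_iff.mpr hP.1), hmonomial]
  · exact mul_ne_zero hP.1 ha
  · intro b hb hne
    rw [hmonomial, mul_eq_zero, or_iff_not_imp_right]
    exact fun hφ => absurd ((hP.2 b (mem_support_iff.mp hb)).antisymm (hmin b hφ))
      fun h => hne (toLex_inj.mp h)

theorem aeval_line_monomial {B : Type*} [CommRing B] [Algebra ℚ B] (t v : ℕ → B) (a : ℕ →₀ ℕ) :
    aeval (line t v) (monomial a (1 : ℚ)) = (a.toMultiset.antidiagonal.map fun p =>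
      Polynomial.monomial (Multiset.card p.2) ((p.1.map t).prod * (p.2.map v).prod)).sum := by
  have hprod : aeval (line t v) (monomial a (1 : ℚ)) = (a.toMultiset.map (line t v)).prod := by
    rw [aeval_monomial, map_one, one_mul, Finsupp.toMultiset_map, Finsupp.prod_toMultiset,
      Finsupp.prod_mapDomain_index (fun _ => pow_zero _) fun _ _ _ => pow_add _ _ _]
  rw [hprod]
  unfold line
  rw [Multiset.prod_map_add]
  congr 1
  refine Multiset.map_congr rfl fun p _ => ?_
  have hC (f : ℕ → B) (s : Multiset ℕ) :
      (s.map fun i => Polynomial.C (f i)).prod = Polynomial.C (s.map f).prod := by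
    rw [← Multiset.prod_hom, Multiset.map_map]
    rfl
  rw [Multiset.prod_map_mul, Multiset.map_const', Multiset.prod_replicate, hC, hC, ← mul_assoc,
    ← Polynomial.C_mul, Polynomial.C_mul_X_pow_eq_monomial]

theorem exists_addMonoidHom_separating (j : ℕ) : ∃ ψ : ℕ × ℕ × ℕ →+ ℤ,
    ψ (varWeight j) = -1 ∧ (∀ l, j < l → 0 ≤ ψ (varWeight l)) ∧
      ∀ l, j < l → l ≤ j + 2 → ψ (varWeight l) = 0 := by
  let c : ℤ := ((j / 2 : ℕ) : ℤ) + 1 + if Even j then 0 else 1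
  let ψ : ℕ × ℕ × ℕ →+ ℤ :=
    { toFun := fun w => w.2.2 - (((j / 2 : ℕ) : ℤ) + 2) * w.1 - c * w.2.1
      map_zero' := by simp only [Prod.fst_zero, Prod.snd_zero, Nat.cast_zero]; ring
      map_add' := fun v w => by simp only [Prod.fst_add, Prod.snd_add, Nat.cast_add]; ring }
  have hψ (l : ℕ) : ψ (varWeight l) =
      (l / 2 : ℕ) + 1 - if Even l then ((j / 2 : ℕ) : ℤ) + 2 else c := by
    change ((l / 2 + 1 : ℕ) : ℤ) - (_ + 2) * ((if Even l then 1 else 0 : ℕ) : ℤ) -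
      c * ((if Odd l then 1 else 0 : ℕ) : ℤ) = _
    rcases l.even_or_odd with hl | hl
    · rw [if_pos hl, if_neg (Nat.not_odd_iff_even.mpr hl), if_pos hl]
      push_cast
      ring
    · rw [if_neg (Nat.not_even_iff_odd.mpr hl), if_pos hl, if_neg (Nat.not_even_iff_odd.mpr hl)]
      push_cast
      ring
  refine ⟨ψ, ?_, fun l hl => ?_, fun l hl hl' => ?_⟩ <;> rw [hψ] <;> simp only [c, Nat.even_iff] <;>
    split_ifs <;> lia

theorem toLex_le_of_weight_eq {i : ℕ} {a b : ℕ →₀ ℕ} (ha : ∀ l, a l ≠ 0 → i ≤ l ∧ l ≤ i + 2)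
    (h : Finsupp.weight varWeight b = Finsupp.weight varWeight a) : toLex a ≤ toLex b := by
  by_contra hcon
  rw [not_le, Finsupp.Lex.lt_iff] at hcon
  obtain ⟨j, hbefore, hlt⟩ := hcon
  change ∀ l < j, b l = a l at hbefore
  change b j < a j at hlt
  obtain ⟨ψ, hψj, hψnonneg, hψzero⟩ := exists_addMonoidHom_separating j
  have hji : i ≤ j := (ha j (Nat.ne_zero_of_lt hlt)).1
  have hsum (f : ℕ →₀ ℕ) (hf : f.support ⊆ a.support ∪ b.support) :
      ψ (Finsupp.weight varWeight f) = ∑ l ∈ a.support ∪ b.support, f l • ψ (varWeight l) := by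
    rw [Finsupp.weight_apply, map_finsuppSum, Finsupp.sum_of_support_subset f hf _ fun l _ => by
      rw [zero_smul, map_zero]]
    simp only [map_nsmul]
  have hne : ψ (Finsupp.weight varWeight a) < ψ (Finsupp.weight varWeight b) := by
    rw [hsum a Finset.subset_union_left, hsum b Finset.subset_union_right]
    refine Finset.sum_lt_sum (fun l _ => ?_) ⟨j, ?_, ?_⟩
    · rcases lt_trichotomy l j with hl | rfl | hl
      · rw [hbefore l hl]
      · rw [hψj]
        lia
      · by_cases hal : a l = 0
        · rw [hal, zero_smul]
          exact nsmul_nonneg (hψnonneg l hl) _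
        · rw [hψzero l hl ((ha l hal).2.trans (Nat.add_le_add_right hji 2)), smul_zero, smul_zero]
    · exact Finset.mem_union_left _ (Finsupp.mem_support_iff.mpr (Nat.ne_zero_of_lt hlt))
    · rw [hψj]
      lia
  rw [h] at hne
  exact hne.false

section Necessity

variable {P : MvPolynomial ℕ ℚ} {a : ℕ →₀ ℕ} {k : ℕ}

/-- The algebra in which the Taylor coefficients of a polynomial along a generic direction of the
curve are read off: the exponent of a base point and the charges and degree of a direction. -/
abbrev GenericAlgebra : Type := AddMonoidAlgebra ℚ ((ℕ →₀ ℕ) × ℕ × ℕ × ℕ)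

/-- The generic base point. -/
noncomputable def genericPoint (l : ℕ) : GenericAlgebra :=
  AddMonoidAlgebra.single (Finsupp.single l 1, 0) 1

/-- The generic direction of the curve. -/
noncomputable def genericDirection (l : ℕ) : GenericAlgebra :=
  AddMonoidAlgebra.single (0, varWeight l) 1

theorem curve_generic (l : ℕ) :
    curve (genericDirection 0) (genericDirection 1) (AddMonoidAlgebra.single (0, 0, 0, 1) 1) l =
      genericDirection l := by
  simp only [curve, AddMonoidAlgebra.single_pow, genericDirection, varWeight]
  rcases l.even_or_odd with hl | hl
  · rw [if_pos hl, if_pos hl, if_neg (Nat.not_odd_iff_even.mpr hl)]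
    simp [AddMonoidAlgebra.single_mul_single, add_comm 1]
  · rw [if_pos hl, if_neg (Nat.not_even_iff_odd.mpr hl), if_neg (Nat.not_even_iff_odd.mpr hl)]
    simp [AddMonoidAlgebra.single_mul_single, add_comm 1]

theorem prod_map_genericPoint (s : Multiset ℕ) :
    (s.map genericPoint).prod = AddMonoidAlgebra.single (s.toFinsupp, 0) 1 := by
  induction s using Multiset.induction with
  | empty => rfl
  | cons i s ih =>
    rw [Multiset.map_cons, Multiset.prod_cons, ih, genericPoint,
      AddMonoidAlgebra.single_mul_single, one_mul, ← Multiset.singleton_add, map_add,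
      Multiset.toFinsupp_singleton, Prod.mk_add_mk, add_zero]

theorem prod_map_genericDirection (s : Multiset ℕ) : (s.map genericDirection).prod =
    AddMonoidAlgebra.single (0, Finsupp.weight varWeight s.toFinsupp) 1 := by
  induction s using Multiset.induction with
  | empty => rfl
  | cons i s ih =>
    rw [Multiset.map_cons, Multiset.prod_cons, ih, genericDirection,
      AddMonoidAlgebra.single_mul_single, one_mul, ← Multiset.singleton_add, map_add, map_add,
      Multiset.toFinsupp_singleton, Finsupp.weight_single, one_smul, Prod.mk_add_mk, add_zero]

/-- The coefficient of degree `n` and index `m` of a polynomial along the line through the generic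
point in the direction `v`. -/
noncomputable def genericCoeff (v : ℕ → GenericAlgebra) (n : ℕ) (m : (ℕ →₀ ℕ) × ℕ × ℕ × ℕ) :
    MvPolynomial ℕ ℚ →ₗ[ℚ] ℚ :=
  Finsupp.lapply m ∘ₗ (AddMonoidAlgebra.coeffLinearEquiv ℚ).toLinearMap ∘ₗ
    (Polynomial.lcoeff GenericAlgebra n).restrictScalars ℚ ∘ₗ
      (aeval (line genericPoint v)).toLinearMap

theorem genericCoeff_eq_zero {v : ℕ → GenericAlgebra} {n : ℕ} {m : (ℕ →₀ ℕ) × ℕ × ℕ × ℕ}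
    (h : (aeval (line genericPoint v) P).natDegree < n) : genericCoeff v n m P = 0 := by
  change (Polynomial.coeff (aeval (line genericPoint v) P) n).coeff m = 0
  rw [Polynomial.coeff_eq_zero_of_natDegree_lt h]
  rfl

theorem genericCoeff_monomial (v : ℕ → GenericAlgebra) (n : ℕ) (m : (ℕ →₀ ℕ) × ℕ × ℕ × ℕ)
    (a : ℕ →₀ ℕ) : genericCoeff v n m (monomial a 1) = (a.toMultiset.antidiagonal.map fun p =>
      if Multiset.card p.2 = n then
        (AddMonoidAlgebra.single (p.1.toFinsupp, 0) 1 * (p.2.map v).prod : GenericAlgebra).coeff m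
      else 0).sum := by
  change (Finsupp.lapply m ∘ₗ (AddMonoidAlgebra.coeffLinearEquiv ℚ).toLinearMap ∘ₗ
    (Polynomial.lcoeff GenericAlgebra n).restrictScalars ℚ) (aeval (line genericPoint v) _) = _
  rw [aeval_line_monomial, map_multiset_sum, Multiset.map_map]
  refine congrArg _ (Multiset.map_congr rfl fun p _ => ?_)
  change (Polynomial.coeff (Polynomial.monomial _ ((p.1.map genericPoint).prod * _)) n).coeff m = _
  rw [prod_map_genericPoint, Polynomial.coeff_monomial]
  split_ifs <;> rfl

variable {v : ℕ → GenericAlgebra}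

theorem coeff_single_mul_prod_map (hv : ∀ l, v l = genericDirection l ∨ v l = 0)
    (p : Multiset ℕ × Multiset ℕ) (m : (ℕ →₀ ℕ) × ℕ × ℕ × ℕ) :
    ((AddMonoidAlgebra.single (p.1.toFinsupp, 0) 1 * (p.2.map v).prod : GenericAlgebra).coeff m =
      if (p.1.toFinsupp, Finsupp.weight varWeight p.2.toFinsupp) = m ∧
        ∀ l ∈ p.2, v l = genericDirection l then 1 else 0) := by
  by_cases hall : ∀ l ∈ p.2, v l = genericDirection l
  · rw [Multiset.map_congr rfl hall, prod_map_genericDirection, AddMonoidAlgebra.single_mul_single,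
      AddMonoidAlgebra.coeff_single, Finsupp.single_apply, Prod.mk_add_mk, add_zero, zero_add,
      one_mul]
    simp only [and_iff_left hall]
  · rw [if_neg fun h => hall h.2]
    push Not at hall
    obtain ⟨l, hl, hne⟩ := hall
    rw [Multiset.prod_eq_zero (Multiset.mem_map.mpr ⟨l, hl, (hv l).resolve_left hne⟩), mul_zero]
    rfl

theorem exists_of_genericCoeff_monomial_ne_zero (hv : ∀ l, v l = genericDirection l ∨ v l = 0)
    {n : ℕ} {c : ℕ →₀ ℕ} {w : ℕ × ℕ × ℕ} (h : genericCoeff v n (c, w) (monomial a 1) ≠ 0) :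
    ∃ b, a = c + b ∧ Finsupp.weight varWeight b = w := by
  rw [genericCoeff_monomial] at h
  contrapose! h
  refine Multiset.sum_eq_zero fun q hq => ?_
  obtain ⟨p, hp, rfl⟩ := Multiset.mem_map.mp hq
  rw [coeff_single_mul_prod_map hv]
  split_ifs with hn hcond
  · obtain ⟨rfl, rfl⟩ := Prod.mk.inj hcond.1
    refine absurd rfl (h p.2.toFinsupp ?_)
    rw [← map_add, Multiset.mem_antidiagonal.mp hp, Finsupp.toMultiset_toFinsupp]
  · rfl
  · rfl

theorem genericCoeff_monomial_ne_zero (hv : ∀ l, v l = genericDirection l ∨ v l = 0)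
    {b c : ℕ →₀ ℕ} (hb : ∀ l ∈ b.support, v l = genericDirection l) :
    genericCoeff v b.degree (c, Finsupp.weight varWeight b) (monomial (c + b) 1) ≠ 0 := by
  rw [genericCoeff_monomial]
  simp only [coeff_single_mul_prod_map hv]
  refine ((zero_lt_one' ℚ).trans_le (Multiset.single_le_sum ?_ 1 ?_)).ne'
  · intro q hq
    obtain ⟨p, -, rfl⟩ := Multiset.mem_map.mp hq
    split_ifs <;> norm_num
  · refine Multiset.mem_map.mpr ⟨(c.toMultiset, b.toMultiset),
      Multiset.mem_antidiagonal.mpr (map_add _ _ _).symm, ?_⟩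
    refine (if_pos b.card_toMultiset).trans (if_pos ⟨?_, fun l hl => ?_⟩)
    · rw [Finsupp.toMultiset_toFinsupp, Finsupp.toMultiset_toFinsupp]
    · exact hb l ((b.mem_toMultiset l).mp hl)

theorem sum_le_of_natDegree_aeval_line_le {i : ℕ} {S : Finset ℕ} (hS : S ⊆ Finset.Icc i (i + 2))
    (hP : IsLead P a) (hv : ∀ l, v l = genericDirection l ∨ v l = 0)
    (hvS : ∀ l ∈ S, v l = genericDirection l)
    (hdeg : (aeval (line genericPoint v) P).natDegree ≤ k) : ∑ l ∈ S, a l ≤ k := by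
  by_contra! hk
  set b := a.filter (· ∈ S)
  set c := a.filter (· ∉ S)
  have hbS (l : ℕ) (hl : b l ≠ 0) : l ∈ S := by
    by_contra hlS
    exact hl (Finsupp.filter_apply_neg _ _ hlS)
  have hca : c + b = a := (add_comm c b).trans (a.filter_add_filter_not (· ∈ S))
  have hdegree : b.degree = ∑ l ∈ S, a l := by
    rw [Finsupp.degree_apply, Finset.sum_subset (fun l hl => hbS l (Finsupp.mem_support_iff.mp hl))
      fun l _ hl => Finsupp.notMem_support_iff.mp hl]
    exact Finset.sum_congr rfl fun l hl => Finsupp.filter_apply_pos _ _ hl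
  refine hP.linearMap_apply_ne_zero (genericCoeff v b.degree (c, Finsupp.weight varWeight b)) ?_ ?_
    (genericCoeff_eq_zero (hdeg.trans_lt (hk.trans_eq hdegree.symm)))
  · rw [← hca]
    exact genericCoeff_monomial_ne_zero hv fun l hl => hvS l (hbS l (Finsupp.mem_support_iff.mp hl))
  · intro a' ha'
    obtain ⟨b', rfl, hb'⟩ := exists_of_genericCoeff_monomial_ne_zero hv ha'
    rw [← hca, toLex_add, toLex_add]
    exact add_le_add_right
      (toLex_le_of_weight_eq (fun l hl => Finset.mem_Icc.mp (hS (hbS l hl))) hb') _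

theorem isAdmissibleConfig_of_isLead {k₀ k₁ : ℕ} (hP : CurveDegreeLE k (k₀ + k₁) k₀ P)
    (ha : IsLead P a) : IsAdmissibleConfig k k₀ k₁ a := by
  obtain ⟨hk, hk01, hk0⟩ := hP GenericAlgebra genericPoint (genericDirection 0)
    (genericDirection 1) (AddMonoidAlgebra.single (0, 0, 0, 1) 1)
  refine ⟨fun i => ?_, ?_, ?_⟩
  · have hwindow := sum_le_of_natDegree_aeval_line_le (S := {i, i + 1, i + 2}) (i := i)
      (by intro l; simp only [Finset.mem_insert, Finset.mem_singleton, Finset.mem_Icc]; lia) ha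
      (fun l => Or.inl (curve_generic l)) (fun l _ => curve_generic l) hk
    simpa [add_assoc] using hwindow
  · have hv (l : ℕ) : curve (genericDirection 0) 0 0 l = genericDirection l ∨
        curve (genericDirection 0) 0 0 l = 0 := by
      rcases l.eq_zero_or_pos with rfl | hl
      · exact Or.inl (curve_zero _ _ _)
      · exact Or.inr (curve_zero_zero hl _)
    have hfirst := sum_le_of_natDegree_aeval_line_le (S := {0}) (i := 0) (by simp) ha hv
      (fun l hl => by rw [Finset.mem_singleton.mp hl, curve_zero]) hk0
    rwa [Finset.sum_singleton] at hfirst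
  · have hv_lt (l : ℕ) (hl : l < 2) :
        curve (genericDirection 0) (genericDirection 1) 0 l = genericDirection l := by
      interval_cases l
      · exact curve_zero _ _ _
      · exact curve_one _ _ _
    have hpair := sum_le_of_natDegree_aeval_line_le (S := Finset.range 2) (i := 0)
      (by intro l; simp only [Finset.mem_range, Finset.mem_Icc]; lia) ha
      (fun l => (lt_or_ge l 2).imp (hv_lt l) fun hl => curve_zero_right hl _ _)
      (fun l hl => hv_lt l (Finset.mem_range.mp hl)) hk01
    rwa [Finset.sum_range_succ, Finset.sum_range_one] at hpair

end Necessity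

/-! ### The cluster substitution -/

section ClusterSubst

variable {ι B : Type*} [CommRing B]

/-- Polynomials in the positions of the clusters. The variables are indexed by `ιᵒᵈ`, so that the
position of the last cluster is the most significant one for leading exponents. -/
abbrev PositionRing (ι : Type*) := MvPolynomial ιᵒᵈ ℚ

/-- The position of the cluster `r`. -/
noncomputable def position (r : ι) : PositionRing ι := X (toDual r)

/-- The branch `(1, 0, x, 0, x², 0, …)` or `(0, 1, 0, x, 0, x², …)` of the curve belonging to a
colour, `false` standing for `γ₁` and `true` for `γ₂`. -/
def branch (c : Bool) : B → ℕ → B :=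
  curve (if c then 0 else 1) (if c then 1 else 0)

theorem branch_eq (c : Bool) (x : B) (i : ℕ) :
    branch c x i = if i % 2 = c.toNat then x ^ (i / 2) else 0 := by
  simp only [branch, curve, Nat.even_iff]
  rcases Nat.mod_two_eq_zero_or_one i with h | h <;> cases c <;> simp [h]

theorem map_branch {B' : Type*} [CommRing B'] (f : B →+* B') (c : Bool) (x : B) (i : ℕ) :
    f (branch c x i) = branch c (f x) i := by
  rw [branch_eq, branch_eq, apply_ite f, map_pow, map_zero]

theorem branch_mul (c : Bool) (x y : B) (i : ℕ) :
    branch c x i * y = curve (if c then 0 else y) (if c then y else 0) x i := by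
  simp only [branch, curve]
  split_ifs <;> ring

/-- The conditions on charges `ν` and position exponents `e` for occurring in the image under
`clusterSubst` of a polynomial of weight `w`. -/
structure IsClusterExponent (col : ι → Bool) (w : ℕ × ℕ × ℕ) (ν : ι →₀ ℕ) (e : ιᵒᵈ →₀ ℕ) :
    Prop where
  weight_add : Finsupp.weight (fun r => varWeight (col r).toNat) ν + e.degree • (0, 0, 1) = w
  eq_zero_of_eq_zero : ∀ r, ν r = 0 → e (toDual r) = 0

/-- All exponents of `F` are among those allowed for the weight `w`. -/
def HasClusterWeight (col : ι → Bool) (w : ℕ × ℕ × ℕ) (F : MvPolynomial ι (PositionRing ι)) :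
    Prop :=
  ∀ ν e, coeff e (coeff ν F) ≠ 0 → IsClusterExponent col w ν e

variable {col : ι → Bool} {w w' : ℕ × ℕ × ℕ} {F F' : MvPolynomial ι (PositionRing ι)}

theorem IsClusterExponent.add {ν ν' : ι →₀ ℕ} {e e' : ιᵒᵈ →₀ ℕ}
    (h : IsClusterExponent col w ν e) (h' : IsClusterExponent col w' ν' e') :
    IsClusterExponent col (w + w') (ν + ν') (e + e') where
  weight_add := by
    rw [← h.weight_add, ← h'.weight_add, map_add, map_add, add_smul, add_add_add_comm]
  eq_zero_of_eq_zero r hr := by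
    obtain ⟨hν, hν'⟩ := Nat.add_eq_zero_iff.mp hr
    rw [Finsupp.add_apply, h.eq_zero_of_eq_zero r hν, h'.eq_zero_of_eq_zero r hν']

theorem HasClusterWeight.mul (h : HasClusterWeight col w F) (h' : HasClusterWeight col w' F') :
    HasClusterWeight col (w + w') (F * F') := by
  classical
  intro ν e hne
  rw [coeff_mul, coeff_sum] at hne
  obtain ⟨⟨ν₁, ν₂⟩, hν, hne⟩ := Finset.exists_ne_zero_of_sum_ne_zero hne
  rw [coeff_mul] at hne
  obtain ⟨⟨e₁, e₂⟩, he, hne⟩ := Finset.exists_ne_zero_of_sum_ne_zero hne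
  rw [Finset.HasAntidiagonal.mem_antidiagonal] at hν he
  rw [← hν, ← he]
  exact (h _ _ (left_ne_zero_of_mul hne)).add (h' _ _ (right_ne_zero_of_mul hne))

theorem HasClusterWeight.sum {κ : Type*} (s : Finset κ) {F : κ → MvPolynomial ι (PositionRing ι)}
    (h : ∀ i ∈ s, HasClusterWeight col w (F i)) : HasClusterWeight col w (∑ i ∈ s, F i) := by
  intro ν e hne
  rw [coeff_sum, coeff_sum] at hne
  obtain ⟨i, hi, hne⟩ := Finset.exists_ne_zero_of_sum_ne_zero hne
  exact h i hi ν e hne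

theorem hasClusterWeight_monomial {ν : ι →₀ ℕ} {e : ιᵒᵈ →₀ ℕ} (h : IsClusterExponent col w ν e)
    (c : ℚ) : HasClusterWeight col w (monomial ν (monomial e c)) := by
  classical
  intro ν' e' hne
  rw [coeff_monomial] at hne
  split_ifs at hne with hν
  · rw [coeff_monomial] at hne
    split_ifs at hne with he
    · rwa [← hν, ← he]
    · exact absurd rfl hne
  · exact absurd (coeff_zero e') hne

variable [Fintype ι] (col)

/-- The substitution `X i ↦ ∑ r, (branch of colour col r at the position of r) i * X r`. The
coefficient of `∏ r, X r ^ ν r` in the image of a polynomial is the function of positions obtained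
by merging its arguments into clusters of colours `col r` and charges `ν r`. -/
noncomputable def clusterSubst : MvPolynomial ℕ ℚ →ₐ[ℚ] MvPolynomial ι (PositionRing ι) :=
  aeval fun i => ∑ r, C (branch (col r) (position r) i) * X r

theorem clusterSubst_X (i : ℕ) :
    clusterSubst col (X i) = ∑ r, C (branch (col r) (position r) i) * X r :=
  aeval_X _ i

theorem hasClusterWeight_clusterSubst_X (i : ℕ) :
    HasClusterWeight col (varWeight i) (clusterSubst col (X i)) := by
  rw [clusterSubst_X]
  refine HasClusterWeight.sum _ fun r _ => ?_
  rw [branch_eq]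
  split_ifs with hi
  · rw [position, X_pow_eq_monomial, C_mul_X_eq_monomial]
    refine hasClusterWeight_monomial ⟨?_, fun s hs => ?_⟩ 1
    · have hi' : 2 * (i / 2) + (col r).toNat = i := by lia
      rw [Finsupp.weight_single, one_smul, Finsupp.degree_single, add_comm,
        ← varWeight_two_mul_add, hi']
    · have hsr : r ≠ s := by
        rintro rfl
        exact one_ne_zero (Finsupp.single_eq_same.symm.trans hs)
      exact Finsupp.single_eq_of_ne (toDual.injective.ne hsr.symm)
  · rw [C_0, zero_mul]
    exact fun ν e hne => absurd (coeff_zero e) hne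

variable {col} in
theorem isClusterExponent_weight_eq (ν : ι →₀ ℕ) (e : ιᵒᵈ →₀ ℕ) :
    Finsupp.weight (fun r => varWeight (col r).toNat) ν + e.degree • (0, 0, 1) =
      (∑ r, (if col r then 0 else ν r), ∑ r, (if col r then ν r else 0),
        ∑ r, ν r + ∑ r, e (toDual r)) := by
  rw [Finsupp.weight_apply, Finsupp.sum_fintype _ _ (by exact fun _ => zero_nsmul _),
    Finsupp.degree_eq_sum, ← toDual.sum_comp]
  have hterm (r : ι) : ν r • varWeight (col r).toNat =
      (if col r then 0 else ν r, if col r then ν r else 0, ν r) := by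
    cases col r <;> simp [varWeight]
  simp only [hterm, Prod.ext_iff, Prod.fst_add, Prod.snd_add, Prod.fst_sum, Prod.snd_sum,
    Prod.smul_fst, Prod.smul_snd, mul_zero, add_zero, smul_eq_mul, mul_one, and_self]

variable {col} in
theorem IsClusterExponent.sum_charge_eq {ν : ι →₀ ℕ} {e : ιᵒᵈ →₀ ℕ}
    (h : IsClusterExponent col w ν e) : ∑ r, ν r = w.1 + w.2.1 := by
  rw [← h.weight_add, isClusterExponent_weight_eq, ← Finset.sum_add_distrib]
  exact Finset.sum_congr rfl fun r _ => by split_ifs <;> simp only [zero_add, add_zero]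

variable {P : MvPolynomial ℕ ℚ}

theorem hasClusterWeight_clusterSubst (hP : IsWeightedHomogeneous varWeight P w) :
    HasClusterWeight col w (clusterSubst col P) := by
  rw [P.as_sum, map_sum]
  refine HasClusterWeight.sum _ fun a ha => ?_
  rw [← hP (mem_support_iff.mp ha)]
  generalize coeff a P = c
  clear ha hP
  obtain ⟨s, rfl⟩ := Multiset.toFinsupp.surjective a
  induction s using Multiset.induction_on with
  | empty =>
    rw [map_zero, map_zero, ← C_apply, ← algebraMap_eq, AlgHom.commutes]
    exact hasClusterWeight_monomial ⟨by simp only [map_zero, zero_smul, add_zero], fun _ _ => rfl⟩ c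
  | cons i s ih =>
    rw [← Multiset.singleton_add, add_comm, map_add, Multiset.toFinsupp_singleton,
      monomial_add_single, pow_one, map_mul, map_add, Finsupp.weight_single, one_smul]
    exact ih.mul (hasClusterWeight_clusterSubst_X col i)

theorem rename_map_clusterSubst (π : Equiv.Perm ι) (hπ : ∀ r, col (π r) = col r) :
    rename π (map (rename (toDual ∘ π ∘ ofDual) : PositionRing ι →ₐ[ℚ] PositionRing ι).toRingHom
      (clusterSubst col P)) =
      clusterSubst col P := by
  have hcomp : ((rename π : MvPolynomial ι (PositionRing ι) →ₐ[PositionRing ι]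
      MvPolynomial ι (PositionRing ι)).restrictScalars ℚ).comp
      ((mapAlgHom (rename (toDual ∘ π ∘ ofDual) : PositionRing ι →ₐ[ℚ] PositionRing ι)).comp
        (clusterSubst col)) = clusterSubst col := by
    refine algHom_ext fun i => ?_
    simp only [AlgHom.comp_apply, clusterSubst_X, map_sum, map_mul, AlgHom.restrictScalars_apply,
      mapAlgHom_apply, map_X, rename_X, rename_C, map_C]
    conv_rhs => rw [← Equiv.sum_comp π]
    refine Finset.sum_congr rfl fun r _ => ?_
    have hposition : (rename (toDual ∘ π ∘ ofDual) : PositionRing ι →ₐ[ℚ] PositionRing ι).toRingHom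
        (position r) = position (π r) := rename_X _ _
    rw [hπ, ← hposition, ← map_branch]
    rfl
  exact DFunLike.congr_fun hcomp P

theorem coeff_mapDomain_clusterSubst (π : Equiv.Perm ι) (hπ : ∀ r, col (π r) = col r)
    (ν : ι →₀ ℕ) : coeff (ν.mapDomain π) (clusterSubst col P) =
      rename (toDual ∘ π ∘ ofDual) (coeff ν (clusterSubst col P)) := by
  conv_lhs => rw [← rename_map_clusterSubst col π hπ]
  rw [coeff_rename_mapDomain _ π.injective, coeff_map]
  rfl

end ClusterSubst

/-! ### Divisibility of the coefficients -/

section Divisibility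

variable {B B' : Type*} [CommRing B] [CommRing B']

theorem map_curve (f : B →+* B') (α β x : B) (i : ℕ) :
    f (curve α β x i) = curve (f α) (f β) (f x) i := by
  simp only [curve, map_mul, map_pow, apply_ite f]

theorem curve_add (α α' β β' x : B) (i : ℕ) :
    curve (α + α') (β + β') x i = curve α β x i + curve α' β' x i := by
  simp only [curve]
  split_ifs <;> exact add_mul _ _ _

theorem sub_dvd_curve_sub_curve (α β x y : B) (i : ℕ) :
    x - y ∣ curve α β x i - curve α β y i := by
  rw [curve, curve, ← mul_sub]
  exact (sub_dvd_pow_sub_pow x y _).mul_left _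

theorem CurveDegreeLE.natDegree_map_le {B B' : Type} [CommRing B] [CommRing B'] [Algebra ℚ B']
    {k k01 k0 : ℕ} {P : MvPolynomial ℕ ℚ} (hP : CurveDegreeLE k k01 k0 P) (f : B →+* B')
    (t : ℕ → B') (α β x : B) :
    (aeval (line t fun i => f (curve α β x i)) P).natDegree ≤ k ∧
    (aeval (line t fun i => f (curve α β 0 i)) P).natDegree ≤ k01 ∧
    (aeval (line t fun i => f (curve α 0 0 i)) P).natDegree ≤ k0 := by
  simp only [map_curve, map_zero]
  exact hP B' t (f α) (f β) (f x)

/- Writing `v = u + h δ`, the polynomial `P (w + v X)` is the value at `Y = h X` of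
`P ((w + δ Y) + u X)`, which has degree at most `k` in `X`. -/
theorem pow_dvd_coeff_aeval_line [Algebra ℚ B] {P : MvPolynomial ℕ ℚ} {k : ℕ} {u : ℕ → B}
    (hdeg : ∀ t : ℕ → Polynomial B,
      (aeval (line t fun i => Polynomial.C (u i)) P).natDegree ≤ k)
    (w : ℕ → B) {v : ℕ → B} {h : B} (hv : ∀ i, h ∣ v i - u i) (N : ℕ) :
    h ^ (N - k) ∣ (aeval (line w v) P).coeff N := by
  choose δ hδ using hv
  let t (i : ℕ) : Polynomial B := Polynomial.C (w i) + Polynomial.C (δ i) * Polynomial.X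
  let F : Polynomial (Polynomial B) := aeval (line t fun i => Polynomial.C (u i)) P
  let φ : Polynomial (Polynomial B) →ₐ[ℚ] Polynomial B := (Polynomial.eval₂RingHom
    (Polynomial.compRingHom (Polynomial.C h * Polynomial.X)) Polynomial.X).toRatAlgHom
  have hφ (G : Polynomial (Polynomial B)) : φ G = G.eval₂
    (Polynomial.compRingHom (Polynomial.C h * Polynomial.X)) Polynomial.X := rfl
  have hF : aeval (line w v) P = φ F := by
    rw [comp_aeval_apply]
    refine congrArg (fun g => aeval g P) (funext fun i => ?_)
    rw [hφ, line, line, Polynomial.eval₂_add, Polynomial.eval₂_mul, Polynomial.eval₂_C,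
      Polynomial.eval₂_C, Polynomial.eval₂_X, Polynomial.coe_compRingHom_apply,
      Polynomial.coe_compRingHom_apply, Polynomial.add_comp, Polynomial.mul_comp,
      Polynomial.C_comp, Polynomial.C_comp, Polynomial.C_comp, Polynomial.X_comp,
      eq_add_of_sub_eq' (hδ i), map_add, map_mul]
    ring
  rw [hF, hφ, Polynomial.eval₂_eq_sum_range' _ ((hdeg t).trans_lt k.lt_succ_self),
    Polynomial.finsetSum_coeff]
  refine Finset.dvd_sum fun j hj => ?_
  rw [Polynomial.coe_compRingHom_apply, Polynomial.coeff_mul_X_pow']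
  split_ifs with hjN
  · rw [Polynomial.comp_C_mul_X_coeff]
    have hjk := Finset.mem_range_succ_iff.mp hj
    exact (pow_dvd_pow h (by lia)).mul_left _
  · exact dvd_zero _

theorem C_branch_mul {σ : Type*} (c : Bool) (x : B) (y : MvPolynomial σ B) (i : ℕ) :
    C (branch c x i) * y = curve (if c then 0 else y) (if c then y else 0) (C x) i := by
  rw [map_branch, branch_mul]

/-- The substitution scaling the variables in `S` by a new variable. -/
noncomputable def scale {ι : Type*} (A : Type*) [CommRing A] [DecidableEq ι] (S : Finset ι) :
    MvPolynomial ι A →ₐ[A] Polynomial (MvPolynomial ι A) :=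
  aeval fun r => Polynomial.C (X r) * Polynomial.X ^ (if r ∈ S then 1 else 0)

section Scale

variable {ι A : Type*} [CommRing A] [DecidableEq ι] (S : Finset ι)

theorem scale_monomial (ν : ι →₀ ℕ) (c : A) :
    scale A S (monomial ν c) = Polynomial.C (monomial ν c) * Polynomial.X ^ (∑ r ∈ S, ν r) := by
  rw [scale, aeval_monomial, monomial_eq, map_mul, mul_assoc]
  refine congrArg₂ _ rfl ?_
  simp only [Finsupp.prod, mul_pow, Finset.prod_mul_distrib, map_prod, map_pow, ← pow_mul,
    Finset.prod_pow_eq_pow_sum]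
  refine congrArg (fun n => _ * (Polynomial.X : Polynomial (MvPolynomial ι A)) ^ n) ?_
  simp only [ite_mul, one_mul, zero_mul, Finset.sum_ite_mem]
  exact Finset.sum_subset Finset.inter_subset_right fun r hr hrS =>
    Finsupp.notMem_support_iff.mp fun hr' => hrS (Finset.mem_inter.mpr ⟨hr', hr⟩)

theorem coeff_coeff_scale (F : MvPolynomial ι A) (ν : ι →₀ ℕ) :
    coeff ν ((scale A S F).coeff (∑ r ∈ S, ν r)) = coeff ν F := by
  induction F using MvPolynomial.induction_on' with
  | monomial a c =>
    rw [scale_monomial, Polynomial.coeff_C_mul, Polynomial.coeff_X_pow, mul_ite, mul_one, mul_zero]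
    split_ifs with h
    · rfl
    · rw [coeff_zero, coeff_monomial, if_neg (fun haν => h (by rw [haν]))]
  | add p q hp hq => rw [map_add, Polynomial.coeff_add, coeff_add, hp, hq, coeff_add]

end Scale

variable {ι : Type} [Fintype ι] {col : ι → Bool} {P : MvPolynomial ℕ ℚ}
  {k k01 k0 : ℕ}

theorem scale_clusterSubst [DecidableEq ι] (S : Finset ι) :
    scale (PositionRing ι) S (clusterSubst col P) =
      aeval (line (fun i => ∑ r ∈ Sᶜ, C (branch (col r) (position r) i) * X r)
        fun i => ∑ r ∈ S, C (branch (col r) (position r) i) * X r) P := by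
  refine DFunLike.congr_fun (f := ((scale (PositionRing ι) S).restrictScalars ℚ).comp
    (clusterSubst col)) (algHom_ext fun i => ?_) P
  rw [AlgHom.comp_apply, AlgHom.restrictScalars_apply, clusterSubst_X, aeval_X, line, map_sum,
    ← Finset.sum_compl_add_sum S, map_sum, map_sum, Finset.sum_mul]
  congr 1 <;> refine Finset.sum_congr rfl fun r hr => ?_
  · rw [map_mul, map_mul, scale, aeval_C, aeval_X, if_neg (Finset.mem_compl.mp hr), pow_zero,
      mul_one]
    rfl
  · rw [map_mul, map_mul, scale, aeval_C, aeval_X, if_pos hr, pow_one, mul_assoc]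
    rfl

theorem pow_dvd_coeff_clusterSubst (S : Finset ι) {u : ℕ → MvPolynomial ι (PositionRing ι)}
    (hdeg : ∀ t : ℕ → Polynomial (MvPolynomial ι (PositionRing ι)),
      (aeval (line t fun i => Polynomial.C (u i)) P).natDegree ≤ k)
    {h : PositionRing ι}
    (hu : ∀ i, C h ∣ ∑ r ∈ S, C (branch (col r) (position r) i) * X r - u i) (ν : ι →₀ ℕ) :
    h ^ (∑ r ∈ S, ν r - k) ∣ coeff ν (clusterSubst col P) := by
  classical
  rw [← coeff_coeff_scale S, scale_clusterSubst]
  obtain ⟨q, hq⟩ := pow_dvd_coeff_aeval_line hdeg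
    (fun i => ∑ r ∈ Sᶜ, C (branch (col r) (position r) i) * X r) hu (∑ r ∈ S, ν r)
  rw [hq, ← C_pow, coeff_C_mul]
  exact dvd_mul_right _ _

theorem charge_le (hP : CurveDegreeLE k k01 k0 P) {ν : ι →₀ ℕ}
    (hν : coeff ν (clusterSubst col P) ≠ 0) (r : ι) : ν r ≤ k := by
  by_contra! hk
  refine hν (zero_dvd_iff.mp ?_)
  have hdvd := pow_dvd_coeff_clusterSubst (col := col) {r} (h := 0)
    (fun t => (hP.natDegree_map_le Polynomial.C t (if col r then 0 else X r)
      (if col r then X r else 0) (C (position r))).1)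
    (fun i => by rw [Finset.sum_singleton, C_branch_mul, sub_self]; exact dvd_zero _) ν
  rwa [Finset.sum_singleton, zero_pow (by lia)] at hdvd

theorem position_pow_dvd_coeff (hP : CurveDegreeLE k k01 k0 P) (ν : ι →₀ ℕ) (r : ι) :
    position r ^ (ν r - if col r then k01 else k0) ∣ coeff ν (clusterSubst col P) := by
  have hdvd := pow_dvd_coeff_clusterSubst (col := col) (P := P)
    (k := if col r then k01 else k0) {r}
    (u := curve (if col r then 0 else X r) (if col r then X r else 0) 0) (fun t => ?_)
    (h := position r) (fun i => ?_) ν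
  · rwa [Finset.sum_singleton] at hdvd
  · cases hr : col r
    · exact (hP.natDegree_map_le Polynomial.C t (X r) 0 0).2.2
    · exact (hP.natDegree_map_le Polynomial.C t 0 (X r) 0).2.1
  · rw [Finset.sum_singleton, C_branch_mul]
    simpa only [sub_zero] using sub_dvd_curve_sub_curve (if col r then 0 else X r)
      (if col r then X r else 0) (C (position r) : MvPolynomial ι (PositionRing ι)) 0 i

theorem position_sub_pow_dvd_coeff (hP : CurveDegreeLE k k01 k0 P) (ν : ι →₀ ℕ) {r s : ι}
    (hrs : r ≠ s) :
    (position r - position s) ^ (ν r + ν s - k) ∣ coeff ν (clusterSubst col P) := by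
  classical
  have hdvd := pow_dvd_coeff_clusterSubst (col := col) {r, s} (h := position r - position s)
    (fun t => (hP.natDegree_map_le Polynomial.C t
      ((if col r then 0 else X r) + (if col s then 0 else X s))
      ((if col r then X r else 0) + (if col s then X s else 0)) (C (position s))).1)
    (fun i => ?_) ν
  · rwa [Finset.sum_pair hrs] at hdvd
  · rw [Finset.sum_pair hrs, C_branch_mul, C_branch_mul, curve_add, add_sub_add_right_eq_sub, C_sub]
    exact sub_dvd_curve_sub_curve _ _ _ _ i

end Divisibility

/-! ### Clusters of the same colour -/

theorem pow_natDegree_dvd_coeff {A : Type*} [CommRing A] {H : A} {q w : Polynomial A}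
    (hq : q.Monic) (h : ∀ N, H ^ N ∣ (q * w).coeff N) (n : ℕ) : H ^ q.natDegree ∣ w.coeff n := by
  set I := Ideal.span {H ^ q.natDegree}
  have hmk (c : A) : H ^ q.natDegree ∣ c ↔ Ideal.Quotient.mk I c = 0 := by
    rw [Ideal.Quotient.eq_zero_iff_mem, Ideal.mem_span_singleton]
  have hzero : (q * w).map (Ideal.Quotient.mk I) = 0 := by
    by_contra hne
    have := Ideal.Quotient.nontrivial_iff.mpr fun hI : I = ⊤ =>
      hne (Polynomial.ext fun N => by
        rw [Polynomial.coeff_map, Polynomial.coeff_zero, Ideal.Quotient.eq_zero_iff_mem, hI]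
        exact Submodule.mem_top)
    refine (hq.map (Ideal.Quotient.mk I)).not_dvd_of_degree_lt hne ?_
      (by rw [Polynomial.map_mul]; exact dvd_mul_right _ _)
    rw [Polynomial.degree_eq_natDegree (hq.map _).ne_zero, hq.natDegree_map,
      Polynomial.degree_lt_iff_coeff_zero]
    intro N hN
    rw [Polynomial.coeff_map, ← hmk]
    exact (pow_dvd_pow H hN).trans (h N)
  rw [Polynomial.map_mul, (hq.map _).mul_right_eq_zero_iff] at hzero
  rw [hmk, ← Polynomial.coeff_map, hzero, Polynomial.coeff_zero]

theorem pow_two_mul_dvd_sum {A κ : Type*} [CommRing A] {H : A} {S : Finset κ} {c : κ → A}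
    {i j : κ → ℕ} {m : ℕ} (hij : ∀ a ∈ S, m ≤ i a ∧ m ≤ j a)
    (h : ∀ N, H ^ N ∣ (∑ a ∈ S, Polynomial.C (c a) *
      ((1 - Polynomial.X) ^ i a * Polynomial.X ^ j a)).coeff N) :
    H ^ (2 * m) ∣ ∑ a ∈ S with j a = m, c a := by
  nontriviality A
  let q : Polynomial A := ((Polynomial.X - Polynomial.C 1) * Polynomial.X) ^ m
  let W : Polynomial A := ∑ a ∈ S, Polynomial.C (c a) *
    ((1 - Polynomial.X) ^ (i a - m) * Polynomial.X ^ (j a - m))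
  have hmonic := (Polynomial.monic_X_sub_C (1 : A)).mul Polynomial.monic_X
  have hqdeg : q.natDegree = 2 * m := by
    rw [hmonic.natDegree_pow, (Polynomial.monic_X_sub_C 1).natDegree_mul Polynomial.monic_X,
      Polynomial.natDegree_X_sub_C, Polynomial.natDegree_X, mul_comm]
  have hqW : Polynomial.C ((-1) ^ m) * (q * W) =
      ∑ a ∈ S, Polynomial.C (c a) * ((1 - Polynomial.X) ^ i a * Polynomial.X ^ j a) := by
    have hsign : Polynomial.C ((-1) ^ m) * q = (1 - Polynomial.X) ^ m * Polynomial.X ^ m := by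
      rw [← mul_pow, map_pow, ← mul_pow, map_neg, map_one]
      ring
    rw [← mul_assoc, hsign, Finset.mul_sum]
    refine Finset.sum_congr rfl fun a ha => ?_
    conv_rhs => rw [← Nat.sub_add_cancel (hij a ha).1, ← Nat.sub_add_cancel (hij a ha).2]
    ring
  have hW0 : W.coeff 0 = ∑ a ∈ S with j a = m, c a := by
    rw [Polynomial.coeff_zero_eq_eval_zero, Polynomial.eval_finsetSum, Finset.sum_filter]
    refine Finset.sum_congr rfl fun a ha => ?_
    have hiff : j a - m = 0 ↔ j a = m := by have := (hij a ha).2; lia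
    simp [zero_pow_eq, hiff]
  rw [← hW0, ← hqdeg]
  refine pow_natDegree_dvd_coeff (hmonic.pow m) (fun N => ?_) 0
  have hdvd := h N
  rwa [← hqW, Polynomial.coeff_C_mul, (isUnit_one.neg.pow _).dvd_mul_left] at hdvd

theorem pow_dvd_coeff_aeval_line_of_dvd {B : Type*} [CommRing B] [Algebra ℚ B]
    (P : MvPolynomial ℕ ℚ) (w : ℕ → B) {v : ℕ → B} {h : B} (hv : ∀ i, h ∣ v i) (N : ℕ) :
    h ^ N ∣ (aeval (line w v) P).coeff N := by
  refine pow_dvd_coeff_aeval_line (k := 0) (u := 0) (fun t => ?_) w (fun i => ?_) N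
  · have hline : (line t fun i => Polynomial.C ((0 : ℕ → B) i)) =
        fun i => Polynomial.CAlgHom (R := ℚ) (t i) := by
      funext i
      rw [line, Pi.zero_apply, map_zero, map_zero, zero_mul, add_zero, Polynomial.CAlgHom_apply]
    rw [hline, ← comp_aeval_apply, Polynomial.CAlgHom_apply, Polynomial.natDegree_C]
  · rw [Pi.zero_apply, sub_zero]
    exact hv i

/-- The substitution `X s ↦ 1 - t`, `X s' ↦ t` for a new variable `t`. -/
noncomputable def splitSubst {ι : Type*} (A : Type*) [CommRing A] [DecidableEq ι] (s s' : ι) :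
    MvPolynomial ι A →ₐ[A] Polynomial (MvPolynomial ι A) :=
  aeval fun r => if r = s then 1 - Polynomial.X else if r = s' then Polynomial.X else
    Polynomial.C (X r)

section SplitSubst

variable {ι A : Type*} [CommRing A] [DecidableEq ι] {s s' : ι}

theorem splitSubst_monomial (hs : s ≠ s') (a : ι →₀ ℕ) (c : A) :
    splitSubst A s s' (monomial a c) = Polynomial.C (monomial ((a.erase s).erase s') c) *
      ((1 - Polynomial.X) ^ a s * Polynomial.X ^ a s') := by
  rw [splitSubst, aeval_monomial, ← Finsupp.mul_prod_erase' a s _ fun _ => pow_zero _,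
    ← Finsupp.mul_prod_erase' (a.erase s) s' _ fun _ => pow_zero _, if_pos rfl, if_neg hs.symm,
    if_pos rfl, Finsupp.erase_ne hs.symm, monomial_eq, map_mul, Finsupp.prod, Finsupp.prod,
    map_prod, Finset.prod_congr rfl (g := fun r => Polynomial.C (X r ^ ((a.erase s).erase s') r))]
  · simp only [← algebraMap_eq, ← Polynomial.algebraMap_eq, ← IsScalarTower.algebraMap_apply]
    ring
  · intro r hr
    simp only [Finsupp.support_erase, Finset.mem_erase] at hr
    rw [if_neg hr.2.1, if_neg hr.1, map_pow]

theorem coeff_coeff_splitSubst (hs : s ≠ s') (F : MvPolynomial ι A) (κ : ι →₀ ℕ) (N : ℕ) :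
    coeff κ ((splitSubst A s s' F).coeff N) =
      (∑ a ∈ F.support with Finsupp.erase s' (Finsupp.erase s a) = κ, Polynomial.C (coeff a F) *
        ((1 - Polynomial.X) ^ a s * Polynomial.X ^ a s')).coeff N := by
  conv_lhs => rw [F.as_sum]
  rw [map_sum, Polynomial.finsetSum_coeff, coeff_sum, Polynomial.finsetSum_coeff,
    Finset.sum_filter]
  refine Finset.sum_congr rfl fun a _ => ?_
  have hmap : ((1 - Polynomial.X) ^ a s * Polynomial.X ^ a s' : Polynomial (MvPolynomial ι A)) =
      ((1 - Polynomial.X) ^ a s * Polynomial.X ^ a s' : Polynomial A).map C := by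
    simp only [Polynomial.map_mul, Polynomial.map_pow, Polynomial.map_sub, Polynomial.map_one,
      Polynomial.map_X]
  rw [splitSubst_monomial hs, Polynomial.coeff_C_mul, hmap, Polynomial.coeff_map, mul_comm,
    coeff_C_mul, coeff_monomial, Polynomial.coeff_C_mul, mul_ite, mul_zero, mul_comm]

end SplitSubst

variable {ι : Type*} [Fintype ι] [LinearOrder ι] {col : ι → Bool} {P : MvPolynomial ℕ ℚ}
  {ν a : ι →₀ ℕ} {s s' : ι}

theorem splitSubst_clusterSubst (hs : s ≠ s') :
    splitSubst (PositionRing ι) s s' (clusterSubst col P) =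
      aeval (line (fun i => ∑ r ∈ {s, s'}ᶜ, C (branch (col r) (position r) i) * X r +
          C (branch (col s) (position s) i))
        fun i => C (branch (col s') (position s') i - branch (col s) (position s) i)) P := by
  refine DFunLike.congr_fun (f := ((splitSubst (PositionRing ι) s s').restrictScalars ℚ).comp
    (clusterSubst col)) (algHom_ext fun i => ?_) P
  rw [AlgHom.comp_apply, AlgHom.restrictScalars_apply, clusterSubst_X, aeval_X, line, map_sum,
    ← Finset.sum_compl_add_sum {s, s'}, Finset.sum_pair hs, map_add, map_sum,
    Finset.sum_congr rfl (g := fun r =>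
      Polynomial.C (C (branch (col r) (position r) i) * X r : MvPolynomial ι (PositionRing ι)))]
  · simp only [splitSubst, map_mul, map_sub, aeval_C, aeval_X, if_neg hs.symm, if_true]
    simp only [← algebraMap_eq, ← Polynomial.algebraMap_eq, ← IsScalarTower.algebraMap_apply]
    ring
  · intro r hr
    simp only [Finset.mem_compl, Finset.mem_insert, Finset.mem_singleton, not_or] at hr
    rw [splitSubst, map_mul, aeval_C, aeval_X, if_neg hr.1, if_neg hr.2, map_mul]
    rfl

theorem IsLead.apply_le_of_swap (hν : IsLead (clusterSubst col P) ν) (hc : col s = col s')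
    (hs : s < s') (ha : coeff a (clusterSubst col P) ≠ 0) (hlt : ∀ r < s, a r = ν r) :
    a s' ≤ ν s := by
  by_contra! hcon
  have hcoeff := coeff_mapDomain_clusterSubst col (P := P) (Equiv.swap s s')
    (Equiv.apply_swap_eq_self hc) a
  have hswap (r : ι) : a.mapDomain (Equiv.swap s s') r = a (Equiv.swap s s' r) := by
    rw [← Finsupp.equivMapDomain_eq_mapDomain, Finsupp.equivMapDomain_apply, Equiv.symm_swap]
  refine (hν.2 (a.mapDomain (Equiv.swap s s')) ?_).not_gt
    (Finsupp.Lex.lt_iff.mpr ⟨s, fun r hr => ?_, ?_⟩)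
  · rw [hcoeff]
    exact (map_ne_zero_iff _ (rename_injective _ ((toDual.injective.comp
      (Equiv.swap s s').injective).comp ofDual.injective))).mpr ha
  · exact ((hswap r).trans (by
      rw [Equiv.swap_apply_of_ne_of_ne hr.ne (hr.trans hs).ne, hlt r hr]; rfl)).symm
  · exact hcon.trans_eq ((hswap s).trans (by rw [Equiv.swap_apply_left])).symm

theorem IsLead.apply_le_apply (hν : IsLead (clusterSubst col P) ν) (hc : col s = col s')
    (hs : s < s') : ν s' ≤ ν s :=
  hν.apply_le_of_swap hc hs hν.1 fun _ _ => rfl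

theorem IsLead.exchange {w : ℕ × ℕ × ℕ} (hP : IsWeightedHomogeneous varWeight P w)
    (hν : IsLead (clusterSubst col P) ν) (hc : col s = col s') (hs : s < s')
    (ha : coeff a (clusterSubst col P) ≠ 0) (haν : ∀ r, r ≠ s → r ≠ s' → a r = ν r) :
    a s + a s' = ν s + ν s' ∧ ν s' ≤ a s ∧ ν s' ≤ a s' := by
  have hlt (r : ι) (hr : r < s) : a r = ν r := haν r hr.ne (hr.trans hs).ne
  have has : a s ≤ ν s := by
    by_contra! hcon
    exact (hν.2 a ha).not_gt (Finsupp.Lex.lt_iff.mpr ⟨s, fun r hr => (hlt r hr).symm, hcon⟩)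
  have has' : a s' ≤ ν s := hν.apply_le_of_swap hc hs ha hlt
  have hsum : a s + a s' = ν s + ν s' := by
    obtain ⟨e, he⟩ := ne_zero_iff.mp ha
    obtain ⟨e', he'⟩ := ne_zero_iff.mp hν.1
    have hall : ∑ r, a r = ∑ r, ν r :=
      (hasClusterWeight_clusterSubst col hP a e he).sum_charge_eq.trans
        (hasClusterWeight_clusterSubst col hP ν e' he').sum_charge_eq.symm
    rw [← Finset.sum_compl_add_sum {s, s'}, ← Finset.sum_compl_add_sum {s, s'},
      Finset.sum_pair hs.ne, Finset.sum_pair hs.ne] at hall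
    refine Nat.add_left_cancel (hall.trans (congrArg (· + _) (Finset.sum_congr rfl ?_))).symm.symm
    intro r hr
    simp only [Finset.mem_compl, Finset.mem_insert, Finset.mem_singleton, not_or] at hr
    exact (haν r hr.1 hr.2).symm
  lia

/- Splitting the generating function into the part `t` at `s'` and `1 - t` at `s`, all exponents
that agree with the leading one off `s` and `s'` contribute multiples of `((1 - t) * t) ^ ν s'`,
whereas the coefficient of `t ^ N` is divisible by the `N`-th power of the difference. -/
theorem position_sub_pow_dvd_coeff_of_isLead {w : ℕ × ℕ × ℕ}
    (hP : IsWeightedHomogeneous varWeight P w) (hν : IsLead (clusterSubst col P) ν)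
    (hc : col s = col s') (hs : s < s') :
    (position s' - position s) ^ (2 * ν s') ∣ coeff ν (clusterSubst col P) := by
  set F := clusterSubst col P
  let κ := Finsupp.erase s' (Finsupp.erase s ν)
  let S := {a ∈ F.support | Finsupp.erase s' (Finsupp.erase s a) = κ}
  have hS (a : ι →₀ ℕ) (ha : a ∈ S) : (∀ r, r ≠ s → r ≠ s' → a r = ν r) ∧
      a s + a s' = ν s + ν s' ∧ ν s' ≤ a s ∧ ν s' ≤ a s' := by
    rw [Finset.mem_filter, mem_support_iff] at ha
    have haν (r : ι) (hr : r ≠ s) (hr' : r ≠ s') : a r = ν r := by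
      simpa only [κ, Finsupp.erase_ne hr', Finsupp.erase_ne hr] using DFunLike.congr_fun ha.2 r
    exact ⟨haν, hν.exchange hP hc hs ha.1 haν⟩
  have hdvd (N : ℕ) : (position s' - position s) ^ N ∣ (∑ a ∈ S, Polynomial.C (coeff a F) *
      ((1 - Polynomial.X) ^ a s * Polynomial.X ^ a s')).coeff N := by
    obtain ⟨c, hc'⟩ := pow_dvd_coeff_aeval_line_of_dvd P
      (fun i => ∑ r ∈ {s, s'}ᶜ, C (branch (col r) (position r) i) * X r +
          C (branch (col s) (position s) i))
      (v := fun i => C (branch (col s') (position s') i - branch (col s) (position s) i))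
      (h := C (position s' - position s))
      (fun i => map_dvd C (hc ▸ sub_dvd_curve_sub_curve _ _ _ _ i)) N
    rw [← coeff_coeff_splitSubst hs.ne, splitSubst_clusterSubst hs.ne, hc', ← C_pow, coeff_C_mul]
    exact dvd_mul_right _ _
  have huniq : {a ∈ S | a s' = ν s'} = {ν} := by
    refine Finset.eq_singleton_iff_unique_mem.mpr ⟨?_, fun a ha => Finsupp.ext fun r => ?_⟩
    · exact Finset.mem_filter.mpr ⟨Finset.mem_filter.mpr ⟨mem_support_iff.mpr hν.1, rfl⟩, rfl⟩
    · obtain ⟨haν, hsum, -⟩ := hS a (Finset.mem_filter.mp ha).1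
      have hs' := (Finset.mem_filter.mp ha).2
      rcases eq_or_ne r s with rfl | hr
      · lia
      · rcases eq_or_ne r s' with rfl | hr'
        · exact hs'
        · exact haν r hr hr'
  have hmain := pow_two_mul_dvd_sum (fun a ha => (hS a ha).2.2) hdvd
  rwa [huniq, Finset.sum_singleton] at hmain

/-! ### Leading exponents of products of linear factors -/

section Centre

variable {σ K : Type*} [CommRing K]

/-- The value at which the linear factor `X i - centre o` vanishes: the origin, or another
variable. -/
noncomputable def centre : Option σ → MvPolynomial σ K
  | none => 0
  | some j => X j

theorem centre_injective [Nontrivial K] : Function.Injective (centre : Option σ → MvPolynomial σ K)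
  | none, none, _ => rfl
  | none, some _, h => absurd h.symm (X_ne_zero _)
  | some _, none, h => absurd h (X_ne_zero _)
  | some _, some _, h => congrArg some (X_injective h)

theorem coeff_centre_eq_zero {o : Option σ} {μ : σ →₀ ℕ}
    (hμ : ∀ j ∈ o, Finsupp.single j 1 ≠ μ) :
    coeff μ (centre o : MvPolynomial σ K) = 0 := by
  classical
  cases o with
  | none => exact coeff_zero μ
  | some j => rw [centre, coeff_X, if_neg (hμ j rfl)]

end Centre

section LinearFactors

variable {σ K : Type*} [LinearOrder σ] [Field K] {F G : MvPolynomial σ K} {e μ ν : σ →₀ ℕ}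
  {i j : σ} {o o' : Option σ}

theorem IsLead.eq (hμ : IsLead F μ) (hν : IsLead F ν) : μ = ν :=
  toLex_inj.mp (le_antisymm (hν.2 μ hμ.1) (hμ.2 ν hν.1))

theorem IsLead.exists_of_mul (hF : IsLead F μ) (hFG : IsLead (F * G) ν) :
    ∃ κ, IsLead G κ ∧ ν = μ + κ := by
  obtain ⟨κ, hκ⟩ := exists_isLead (F := G) fun hG => hFG.1 (by rw [hG, mul_zero, coeff_zero])
  exact ⟨κ, hκ, hFG.eq (hF.mul hκ)⟩

theorem IsLead.pow (hF : IsLead F ν) (n : ℕ) : IsLead (F ^ n) (n • ν) := by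
  simpa only [Finset.prod_const, Finset.sum_const, Finset.card_range] using
    isLead_prod (Finset.range n) fun _ _ => hF

theorem isLead_X_sub_centre (ho : ∀ j ∈ o, i < j) :
    IsLead (X i - centre o : MvPolynomial σ K) (Finsupp.single i 1) := by
  classical
  constructor
  · rw [coeff_sub, coeff_X, if_pos rfl, coeff_centre_eq_zero, sub_zero]
    · exact one_ne_zero
    · exact fun j hj h => (ho j hj).ne' (Finsupp.single_left_injective one_ne_zero h)
  · intro μ hμ
    by_cases hi : Finsupp.single i 1 = μ
    · rw [hi]
    · rw [coeff_sub, coeff_X, if_neg hi, zero_sub, neg_ne_zero] at hμ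
      obtain ⟨j, hj, rfl⟩ : ∃ j ∈ o, Finsupp.single j 1 = μ := by
        by_contra! hne
        exact hμ (coeff_centre_eq_zero hne)
      exact (Finsupp.Lex.single_strictAnti (ho j hj)).le

theorem irreducible_X_sub_centre (ho : ∀ j ∈ o, i < j) :
    Irreducible (X i - centre o : MvPolynomial σ K) := by
  have hlead := isLead_X_sub_centre (K := K) ho
  refine irreducible_of_totalDegree_eq_one (le_antisymm ?_ ?_) fun x hx =>
    (ne_zero_of_dvd_ne_zero hlead.1 (hx _)).isUnit
  · refine (totalDegree_sub _ _).trans (max_le (totalDegree_X i).le ?_)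
    cases o with
    | none => exact (totalDegree_zero).trans_le zero_le_one
    | some j => exact (totalDegree_X j).le
  · simpa only [Finsupp.sum_single_index] using le_totalDegree (mem_support_iff.mpr hlead.1)

theorem isRelPrime_X_sub_centre (ho : ∀ j ∈ o, i < j) (ho' : ∀ j ∈ o', i < j) (hne : o ≠ o') :
    IsRelPrime (X i - centre o : MvPolynomial σ K) (X i - centre o') := by
  rw [(irreducible_X_sub_centre ho).isRelPrime_iff_not_dvd]
  intro hdvd
  let φ : MvPolynomial σ K →ₐ[K] MvPolynomial σ K := aeval (Function.update X i (centre o))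
  have hφ (p : Option σ) (hp : ∀ j ∈ p, i < j) : φ (X i - centre p) = centre o - centre p := by
    rw [map_sub, aeval_X, Function.update_self]
    cases p with
    | none => rw [centre, map_zero]
    | some j => rw [centre, aeval_X, Function.update_of_ne (hp j rfl).ne']
  have hzero := map_dvd φ hdvd
  rw [hφ o ho, hφ o' ho', sub_self, zero_dvd_iff, sub_eq_zero] at hzero
  exact hne (centre_injective hzero)

theorem IsLead.sum_le_apply [Fintype σ] (he : IsLead G e) (b : Option σ → ℕ)
    (h : ∀ o, (∀ j ∈ o, i < j) → (X i - centre o) ^ b o ∣ G) :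
    b none + ∑ j with i < j, b (some j) ≤ e i := by
  let T : Finset (Option σ) := Finset.insertNone {j | i < j}
  have hT (o : Option σ) (ho : o ∈ T) (j : σ) (hj : j ∈ o) : i < j :=
    (Finset.mem_filter.mp (Finset.mem_insertNone.mp ho j hj)).2
  obtain ⟨q, rfl⟩ : ∏ o ∈ T, (X i - centre o) ^ b o ∣ G :=
    Finset.prod_dvd_of_isRelPrime
      (fun o ho o' ho' hne => (isRelPrime_X_sub_centre (hT o ho) (hT o' ho') hne).pow)
      fun o ho => h o (hT o ho)
  have hlead := isLead_prod T fun o ho => (isLead_X_sub_centre (K := K) (hT o ho)).pow (b o)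
  obtain ⟨κ, -, rfl⟩ := hlead.exists_of_mul he
  rw [Finsupp.add_apply, Finsupp.finsetSum_apply]
  simp only [Finsupp.smul_apply, Finsupp.single_eq_same, smul_eq_mul, mul_one, T,
    Finset.sum_insertNone]
  exact Nat.le_add_right _ _

theorem IsLead.apply_le_apply_of_rename_swap (he : IsLead G e) (hij : i < j)
    (hsymm : MvPolynomial.rename (Equiv.swap i j) G = G) : e j ≤ e i := by
  by_contra! hcon
  have hswap (r : σ) : e.mapDomain (Equiv.swap i j) r = e (Equiv.swap i j r) := by
    rw [← Finsupp.equivMapDomain_eq_mapDomain, Finsupp.equivMapDomain_apply, Equiv.symm_swap]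
  refine (he.2 (e.mapDomain (Equiv.swap i j)) ?_).not_gt
    (Finsupp.Lex.lt_iff.mpr ⟨i, fun r hr => ?_, ?_⟩)
  · rw [← hsymm, coeff_rename_mapDomain _ (Equiv.injective _)]
    exact he.1
  · exact ((hswap r).trans (by rw [Equiv.swap_apply_of_ne_of_ne hr.ne (hr.trans hij).ne]; rfl)).symm
  · exact hcon.trans_eq ((hswap i).trans (by rw [Equiv.swap_apply_left])).symm

theorem IsLead.apply_add_le_apply (he : IsLead G e) (hij : i < j) {n : ℕ}
    (hdvd : (X i - X j) ^ (2 * n) ∣ G) (hsymm : MvPolynomial.rename (Equiv.swap i j) G = G) :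
    e j + 2 * n ≤ e i := by
  obtain ⟨q, rfl⟩ := hdvd
  have hlead : IsLead (X i - X j : MvPolynomial σ K) (Finsupp.single i 1) :=
    isLead_X_sub_centre (o := some j) (by rintro _ ⟨⟩; exact hij)
  have hne : (X i - X j : MvPolynomial σ K) ≠ 0 := sub_ne_zero.mpr (X_injective.ne hij.ne)
  have hq : MvPolynomial.rename (Equiv.swap i j) q = q := by
    rw [map_mul, map_pow, map_sub, rename_X, rename_X, Equiv.swap_apply_left,
      Equiv.swap_apply_right, ← neg_sub, (even_two_mul n).neg_pow] at hsymm
    exact mul_left_cancel₀ (pow_ne_zero _ hne) hsymm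
  obtain ⟨κ, hκ, rfl⟩ := (hlead.pow (2 * n)).exists_of_mul he
  have hle := hκ.apply_le_apply_of_rename_swap hij hq
  simp only [Finsupp.add_apply, Finsupp.smul_apply, Finsupp.single_eq_same,
    Finsupp.single_eq_of_ne hij.ne', smul_eq_mul]
  lia

end LinearFactors

/-! ### Quasi-particle conditions on leading exponents -/

section IsQuasiParticleExponent

variable {ι : Type} [Fintype ι] [LinearOrder ι] {col : ι → Bool} {k k01 k0 : ℕ} {ν : ι →₀ ℕ}
  {e : ιᵒᵈ →₀ ℕ}

/-- The least exponent of the position of the cluster `r` that the initial conditions allow when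
the charges are `ν`. -/
def initialExponent (col : ι → Bool) (k k01 k0 : ℕ) (ν : ι →₀ ℕ) (r : ι) : ℕ :=
  (ν r - if col r then k01 else k0) +
    ∑ s with s < r, (if col s = col r then 2 * ν r else ν r + ν s - k)

/-- The quasi-particle conditions on the charges `ν` and the position exponents `e` of clusters;
charges zero are allowed. The energy of the cluster `r` is `-e r - ν r`. -/
structure IsQuasiParticleExponent (col : ι → Bool) (k k01 k0 : ℕ) (ν : ι →₀ ℕ)
    (e : ιᵒᵈ →₀ ℕ) : Prop where
  charge_le : ∀ r, ν r ≤ k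
  charge_anti : ∀ s s', col s = col s' → s < s' → ν s' ≤ ν s
  initial : ∀ r, initialExponent col k k01 k0 ν r ≤ e (toDual r)
  difference : ∀ s s', col s = col s' → s < s' → ν s = ν s' →
    e (toDual s) + 2 * ν s ≤ e (toDual s')

theorem rename_swap_coeff_clusterSubst {P : MvPolynomial ℕ ℚ} {s s' : ι} (hc : col s = col s')
    (hνs : ν s = ν s') :
    rename (Equiv.swap (toDual s') (toDual s)) (coeff ν (clusterSubst col P)) =
      coeff ν (clusterSubst col P) := by
  have hmap : ν.mapDomain (Equiv.swap s' s) = ν := by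
    ext r
    rw [← Finsupp.equivMapDomain_eq_mapDomain, Finsupp.equivMapDomain_apply, Equiv.symm_swap]
    exact Equiv.apply_swap_eq_self hνs.symm r
  conv_rhs => rw [← hmap, coeff_mapDomain_clusterSubst col _ (Equiv.apply_swap_eq_self hc.symm)]
  rfl

theorem isQuasiParticleExponent_of_isLead {w : ℕ × ℕ × ℕ} {P : MvPolynomial ℕ ℚ}
    (hP : P ∈ boundedPiece k k01 k0 w) (hν : IsLead (clusterSubst col P) ν)
    (he : IsLead (coeff ν (clusterSubst col P)) e) :
    IsQuasiParticleExponent col k k01 k0 ν e ∧ IsClusterExponent col w ν e := by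
  rw [mem_boundedPiece] at hP
  refine ⟨⟨charge_le hP.1 hν.1, fun s s' => hν.apply_le_apply, fun r => ?_,
    fun s s' hc hs hνs => ?_⟩, hasClusterWeight_clusterSubst col hP.2 ν e he.1⟩
  · refine IsLead.sum_le_apply (σ := ιᵒᵈ) he (i := toDual r)
      (fun o => o.elim (ν r - if col r then k01 else k0)
        fun s => if col (ofDual s) = col r then 2 * ν r else ν r + ν (ofDual s) - k)
      fun o ho => ?_
    cases o with
    | none =>
      rw [centre, sub_zero]
      exact position_pow_dvd_coeff hP.1 ν r
    | some s =>
      have hs : ofDual s < r := ho s rfl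
      dsimp only [Option.elim_some]
      split_ifs with hc
      · exact position_sub_pow_dvd_coeff_of_isLead hP.2 hν hc hs
      · exact position_sub_pow_dvd_coeff hP.1 ν hs.ne'
  · refine IsLead.apply_add_le_apply (σ := ιᵒᵈ) he (i := toDual s') (j := toDual s) hs ?_ ?_
    · rw [hνs]
      exact position_sub_pow_dvd_coeff_of_isLead hP.2 hν hc hs
    · convert rename_swap_coeff_clusterSubst hc hνs

end IsQuasiParticleExponent

/-! ### Injectivity of the cluster substitution -/

section Cluster

/-- The index set of `M` clusters of each colour. The lexicographic order puts the clusters of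
colour `false` first. -/
abbrev Cluster (M : ℕ) := Lex (Bool × Fin M)

/-- The cluster of a given colour and number. -/
def cluster {M : ℕ} (c : Bool) (i : Fin M) : Cluster M := toLex (c, i)

/-- The colour of a cluster. -/
def colour {M : ℕ} (r : Cluster M) : Bool := (ofLex r).1

variable {M : ℕ}

theorem sum_cluster {B : Type*} [AddCommMonoid B] (f : Cluster M → B) :
    ∑ r, f r = ∑ c, ∑ i, f (cluster c i) := by
  rw [← Equiv.sum_comp toLex, Fintype.sum_prod_type]
  rfl

theorem branch_two_mul_add {B : Type*} [CommRing B] (c c' : Bool) (x : B) (j : ℕ) :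
    branch c x (2 * j + c'.toNat) = if c' = c then x ^ j else 0 := by
  have hdiv : (2 * j + c'.toNat) / 2 = j := by cases c' <;> simp only [Bool.toNat] <;> lia
  have hmod : (2 * j + c'.toNat) % 2 = c'.toNat := by cases c' <;> simp
  rw [branch_eq, hdiv, hmod]
  cases c <;> cases c' <;> rfl

theorem exists_eq_two_mul_add_toNat (i : ℕ) : ∃ c : Bool, i = 2 * (i / 2) + c.toNat := by
  rcases Nat.mod_two_eq_zero_or_one i with h | h
  · exact ⟨false, by rw [Bool.toNat_false]; lia⟩
  · exact ⟨true, by rw [Bool.toNat_true]; lia⟩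

/-- Specializing the clusters of each colour to the positions `0, …, M - 1` makes `clusterSubst` a
Vandermonde transformation of the variables; this map inverts it. -/
noncomputable def clusterRetraction (M : ℕ) :
    MvPolynomial (Cluster M) (PositionRing (Cluster M)) →+* MvPolynomial ℕ ℚ :=
  eval₂Hom (C.comp (eval fun r => ((ofLex (ofDual r)).2 : ℚ))) fun r =>
    ∑ j, C ((Matrix.vandermonde fun n : Fin M => (n : ℚ))⁻¹ j (ofLex r).2) *
      X (2 * j + (colour r).toNat)

theorem clusterRetraction_clusterSubst_X {i : ℕ} (hi : i / 2 < M) :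
    clusterRetraction M (clusterSubst colour (X i)) = X i := by
  obtain ⟨c, hc⟩ := exists_eq_two_mul_add_toNat i
  let V : Matrix (Fin M) (Fin M) ℚ := Matrix.vandermonde fun n => (n : ℚ)
  have hV : IsUnit V.det :=
    isUnit_iff_ne_zero.mpr (Matrix.det_vandermonde_ne_zero_iff.mpr
      (Nat.cast_injective.comp Fin.val_injective))
  have hinv (j : Fin M) : ∑ n : Fin M, V⁻¹ j n * (n : ℚ) ^ (i / 2) =
      if j = ⟨i / 2, hi⟩ then 1 else 0 := by
    simpa only [Matrix.mul_apply, Matrix.one_apply, V, Matrix.vandermonde_apply] using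
      congr_fun₂ (Matrix.nonsing_inv_mul V hV) j ⟨i / 2, hi⟩
  have hterm (c' : Bool) (n : Fin M) :
      clusterRetraction M (C (branch (colour (cluster c' n)) (position (cluster c' n)) i) *
        X (cluster c' n)) = if c = c' then
        ∑ j, C (V⁻¹ j n * (n : ℚ) ^ (i / 2)) * X (2 * j + c.toNat) else 0 := by
    rw [map_mul, clusterRetraction, coe_eval₂Hom, eval₂_C, eval₂_X, RingHom.comp_apply,
      map_branch, position, eval_X, hc, branch_two_mul_add, ← hc, Finset.mul_sum]
    by_cases hcc : c = c'
    · subst hcc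
      rw [if_pos rfl]
      refine Finset.sum_congr rfl fun j _ => ?_
      rw [if_pos (by rfl), C_mul, mul_comm (C (V⁻¹ j n)), mul_assoc]
      rfl
    · rw [if_neg hcc, if_neg (by exact hcc)]
      simp only [map_zero, zero_mul, Finset.sum_const_zero]
  rw [clusterSubst_X, map_sum, sum_cluster]
  simp only [hterm, Finset.sum_ite_irrel, Finset.sum_const_zero, Finset.sum_ite_eq,
    Finset.mem_univ, if_true]
  rw [Finset.sum_comm]
  simp only [← Finset.sum_mul, ← map_sum, hinv, apply_ite C, map_zero, map_one, ite_mul, one_mul,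
    zero_mul, Finset.sum_ite_eq', Finset.mem_univ, if_true]
  rw [← hc]

theorem eq_zero_of_clusterSubst_eq_zero {P : MvPolynomial ℕ ℚ} {w : ℕ × ℕ × ℕ}
    (hP : IsWeightedHomogeneous varWeight P w) (hM : w.2.2 ≤ M)
    (h : clusterSubst (colour (M := M)) P = 0) : P = 0 := by
  have hinv : ((clusterRetraction M).comp (clusterSubst (colour (M := M))).toRingHom) P =
      RingHom.id _ P := by
    refine hom_congr_vars (Subsingleton.elim _ _) (fun i hi _ => ?_) rfl
    obtain ⟨a, ha, hai⟩ := mem_vars_iff_mem_support i |>.mp hi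
    refine clusterRetraction_clusterSubst_X (lt_of_not_ge fun hMi => ?_)
    exact Finsupp.mem_support_iff.mp hai
      (eq_zero_of_weight (hP (mem_support_iff.mp ha)) (by lia))
  rw [RingHom.comp_apply] at hinv
  change clusterRetraction M (clusterSubst colour P) = P at hinv
  rw [← hinv, h, map_zero]

end Cluster

/-! ### Leading exponents of level-one polynomials -/

section SumSingle

variable {κ σ : Type*} [Fintype κ]

theorem sum_single_apply {g : κ → σ} (hg : Function.Injective g) (n : κ → ℕ) (s : κ) :
    (∑ t, Finsupp.single (g t) (n t)) (g s) = n s := by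
  rw [Finsupp.finsetSum_apply, Finset.sum_eq_single_of_mem s (Finset.mem_univ s) fun t _ hts =>
    Finsupp.single_eq_of_ne fun h => hts (hg h.symm), Finsupp.single_eq_same]

theorem sum_single_apply_of_notMem {g : κ → σ} {n : κ → ℕ} {r : σ} (hr : ∀ s, g s ≠ r) :
    (∑ t, Finsupp.single (g t) (n t)) r = 0 := by
  rw [Finsupp.finsetSum_apply]
  exact Finset.sum_eq_zero fun t _ => Finsupp.single_eq_of_ne (hr t).symm

-- If the left side were larger, first at the index `h t`, then `h` would map the set of all `s` of
-- the colour of `t` with `n t ≤ n s` onto a proper superset of its image under `g`.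
theorem toLex_sum_single_le [LinearOrder σ] {γ : Type*} {c : σ → γ} {g h : κ → σ}
    (hg : Function.Injective g) (hh : Function.Injective h) (hc : ∀ s, c (h s) = c (g s))
    {n : κ → ℕ} (hanti : ∀ s t, c (g s) = c (h t) → h t < g s → ∃ u, g u = h t ∧ n s ≤ n u) :
    toLex (∑ s, Finsupp.single (h s) (n s)) ≤ toLex (∑ s, Finsupp.single (g s) (n s)) := by
  classical
  by_contra! hcon
  obtain ⟨r, heq, hlt⟩ := Finsupp.Lex.lt_iff.mp hcon
  simp only [ofLex_toLex] at heq hlt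
  obtain ⟨t, rfl⟩ : ∃ t, h t = r := by
    by_contra! hr
    exact hlt.not_ge ((sum_single_apply_of_notMem hr).trans_le (Nat.zero_le _))
  rw [sum_single_apply hh] at hlt
  let A : Finset κ := {s | c (g s) = c (h t) ∧ n t ≤ n s}
  have hA {s : κ} : s ∈ A ↔ c (g s) = c (h t) ∧ n t ≤ n s := by
    simp only [A, Finset.mem_filter, Finset.mem_univ, true_and]
  have hsub : A.image g ⊆ (A.image h).erase (h t) := by
    rw [Finset.image_subset_iff]
    intro s hs
    obtain ⟨hcs, hns⟩ := hA.mp hs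
    have hst : g s < h t := by
      by_contra! hts
      obtain ⟨u, hu, hnu⟩ : ∃ u, g u = h t ∧ n s ≤ n u := by
        rcases hts.eq_or_lt with hts | hts
        · exact ⟨s, hts.symm, le_rfl⟩
        · exact hanti s t hcs hts
      rw [← hu, sum_single_apply hg] at hlt
      exact hlt.not_ge (hns.trans hnu)
    have hval := heq (g s) hst
    rw [sum_single_apply hg] at hval
    obtain ⟨u, hu⟩ : ∃ u, h u = g s := by
      by_contra! hr
      rw [sum_single_apply_of_notMem hr] at hval
      exact (Nat.zero_le _).not_gt (hlt.trans_le (hns.trans hval.le))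
    rw [← hu, sum_single_apply hh] at hval
    refine Finset.mem_erase.mpr ⟨hst.ne, hu ▸ Finset.mem_image_of_mem h (hA.mpr ⟨?_, ?_⟩)⟩
    · rw [← hc, hu, hcs]
    · rwa [← hval]
  have hcard := Finset.card_le_card hsub
  have ht : h t ∈ A.image h := Finset.mem_image_of_mem h (hA.mpr ⟨(hc t).symm, le_rfl⟩)
  rw [Finset.card_image_of_injective _ hg, ← Finset.card_image_of_injective A hh] at hcard
  exact (Finset.card_erase_lt_of_mem ht).not_ge hcard

end SumSingle

theorem isLead_sum_monomial {κ σ K : Type*} [Field K] [LinearOrder K] [IsStrictOrderedRing K]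
    [LinearOrder σ] {S : Finset κ} {m : κ → σ →₀ ℕ} {i : κ} (hi : i ∈ S)
    (hle : ∀ j ∈ S, toLex (m j) ≤ toLex (m i)) :
    IsLead (∑ j ∈ S, monomial (m j) (1 : K)) (m i) := by
  classical
  refine ⟨?_, fun μ hμ => ?_⟩
  · simp only [coeff_sum, coeff_monomial]
    refine (Finset.sum_pos' (fun j _ => ?_) ⟨i, hi, ?_⟩).ne'
    · split_ifs
      exacts [zero_le_one, le_rfl]
    · rw [if_pos rfl]
      exact zero_lt_one
  · rw [coeff_sum] at hμ
    obtain ⟨j, hj, hne⟩ := Finset.exists_ne_zero_of_sum_ne_zero hμ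
    rw [coeff_monomial] at hne
    exact (ite_ne_right_iff.mp hne).1 ▸ hle j hj

section LevelOneLead

theorem clusterSubst_X_two_mul_add {ι : Type*} [Fintype ι] (col : ι → Bool) (j : ℕ) (c : Bool) :
    clusterSubst col (X (2 * j + c.toNat)) =
      ∑ r with col r = c, C (position r ^ j) * X r := by
  rw [clusterSubst_X, Finset.sum_filter]
  refine Finset.sum_congr rfl fun r _ => ?_
  rw [branch_two_mul_add, apply_ite C, map_zero, ite_mul, zero_mul]
  exact if_congr eq_comm rfl rfl

theorem prod_prod_eq_prod_prod_lt {κ B : Type*} [Fintype κ] [LinearOrder κ] [CommMonoid B]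
    {f : κ → κ → B} (hf : ∀ s, f s s = 1) :
    ∏ s, ∏ s', f s s' = ∏ s, ∏ s' with s' < s, f s s' * f s' s := by
  have hsplit (s s' : κ) : f s s' =
      (if s' < s then f s s' else 1) * if s < s' then f s s' else 1 := by
    rcases lt_trichotomy s s' with h | rfl | h
    · rw [if_neg h.not_gt, if_pos h, one_mul]
    · rw [if_neg (lt_irrefl s), hf, one_mul]
    · rw [if_pos h, if_neg h.not_gt, mul_one]
  simp only [Finset.prod_mul_distrib, Finset.prod_filter]
  rw [Finset.prod_comm (f := fun s s' => if s' < s then f s' s else 1), ← Finset.prod_mul_distrib]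
  refine Finset.prod_congr rfl fun s _ => ?_
  rw [← Finset.prod_mul_distrib]
  exact Finset.prod_congr rfl fun s' _ => hsplit s s'

variable {ι : Type} (col : ι → Bool) (D : Finset ι)

/-- The kernel of the level-one polynomials that involve one coordinate, of the parity prescribed
by its colour, for each cluster in `D`. -/
noncomputable def clusterKernel : MvPolynomial D ℚ := kernel fun s : D => (col s).toNat

/-- The level-one polynomial with the index `2 * β s + (col s).toNat` for each cluster `s ∈ D`. -/
noncomputable def clusterLevelOnePoly (β : ι → ℕ) : MvPolynomial ℕ ℚ :=
  levelOnePoly fun s : D => 2 * β s + (col s).toNat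

theorem clusterLevelOnePoly_eq (β : ι → ℕ) : clusterLevelOnePoly col D β =
    umbral (fun (s : D) j => X (2 * (j + β s) + (col s).toNat)) (clusterKernel col D) := by
  rw [clusterLevelOnePoly, levelOnePoly, clusterKernel]
  congr 1
  · simp only [mul_add, add_assoc]
  · exact kernel_congr fun s => by simp only [Nat.even_add, even_two_mul, true_iff]

theorem aeval_clusterKernel_eq_zero {g : D → ι} (hg : ¬Function.Injective g) :
    aeval (fun s => position (g s)) (clusterKernel col D) = 0 := by
  simp only [Function.Injective, not_forall] at hg
  obtain ⟨s, s', hgs, hne⟩ := hg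
  obtain ⟨q, hq⟩ := X_sub_X_dvd_kernel (fun s : D => (col s).toNat) hne
  rw [clusterKernel, hq, map_mul, map_sub, aeval_X, aeval_X, hgs, sub_self, zero_mul]

theorem aeval_clusterKernel_of_perm {g : D → ι} (hg : Function.Injective g) (hgD : ∀ s, g s ∈ D)
    (hcol : ∀ s, col (g s) = col s) :
    aeval (fun s => position (g s)) (clusterKernel col D) =
      aeval (fun s : D => position (s : ι)) (clusterKernel col D) := by
  let π : D ≃ D := Equiv.ofBijective (fun s => ⟨g s, hgD s⟩)
    (Finite.injective_iff_bijective.mp fun s s' h => hg (congrArg Subtype.val h))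
  have hπ : rename π (clusterKernel col D) = clusterKernel col D := by
    conv_rhs => rw [clusterKernel, ← rename_kernel π]
    simp only [clusterKernel, π, Equiv.ofBijective_apply, hcol]
  conv_rhs => rw [← hπ, aeval_rename]
  rfl

variable {D} in
theorem mem_of_sum_single_eq {g : D → ι} (hg : Function.Injective g)
    (h : ∑ s, Finsupp.single (g s) 1 = ∑ s : D, Finsupp.single (s : ι) 1) (s : D) : g s ∈ D := by
  by_contra hs
  have hval := sum_single_apply hg (fun _ => 1) s
  rw [h, sum_single_apply_of_notMem fun (t : D) (ht : (t : ι) = g s) => hs (ht ▸ t.2)] at hval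
  exact zero_ne_one hval

variable [LinearOrder ι]

theorem isLead_kernelFactor_mul {s s' : D} (h : s' < s) :
    IsLead (aeval (fun t : D => position (t : ι))
      (kernelFactor (fun t : D => (col t).toNat) s s' *
        kernelFactor (fun t : D => (col t).toNat) s' s))
      ((if col s' = col s then 2 else 1) • Finsupp.single (toDual (s : ι)) 1) := by
  have hlead : IsLead (position (s : ι) - position (s' : ι)) (Finsupp.single (toDual (s : ι)) 1) :=
    isLead_X_sub_centre (o := some (toDual (s' : ι))) (by rintro _ ⟨⟩; exact h)
  have hlead' := hlead.smul (c := -1) (neg_ne_zero.mpr one_ne_zero)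
  rw [neg_one_smul, neg_sub] at hlead'
  rw [map_mul]
  simp only [kernelFactor, apply_ite (aeval fun t : D => position (t : ι)), map_sub, aeval_X,
    map_one]
  cases hs : col s <;> cases hs' : col s' <;>
    simp only [Bool.toNat_true, Bool.toNat_false, odd_one, Nat.not_even_one, Nat.not_odd_zero,
      Even.zero, h.ne, h.ne', ne_eq, not_false_eq_true, not_true_eq_false, and_true, and_false,
      if_true, if_false, reduceCtorEq, two_smul, one_smul, one_mul, mul_one]
  · exact hlead.mul hlead'
  · exact hlead
  · exact hlead'
  · exact hlead.mul hlead'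

theorem isLead_aeval_position_clusterKernel :
    IsLead (aeval (fun s : D => position (s : ι)) (clusterKernel col D))
      (∑ s : D, Finsupp.single (toDual (s : ι))
        (∑ s' : D with s' < s, if col s' = col s then 2 else 1)) := by
  have hdiag (s : D) : kernelFactor (fun t : D => (col t).toNat) s s = 1 :=
    if_neg fun h => h.1 rfl
  rw [clusterKernel, kernel, prod_prod_eq_prod_prod_lt hdiag]
  simp only [map_prod, ← Finsupp.smul_single_one _ (∑ _ ∈ _, _), Finset.sum_smul]
  exact isLead_prod _ fun s _ => isLead_prod _ fun s' hs' =>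
    isLead_kernelFactor_mul col D (Finset.mem_filter.mp hs').2

variable [Fintype ι]

theorem clusterSubst_clusterLevelOnePoly (β : ι → ℕ) :
    clusterSubst col (clusterLevelOnePoly col D β) =
      ∑ g ∈ Fintype.piFinset fun s : D => {r | col r = col s},
        monomial (∑ s, Finsupp.single (g s) 1)
          (monomial (∑ s : D, Finsupp.single (toDual (g s)) (β s)) 1 *
            aeval (fun s => position (g s)) (clusterKernel col D)) := by
  rw [clusterLevelOnePoly_eq, map_umbral]
  simp only [clusterSubst_X_two_mul_add]
  rw [umbral_sum (fun s : D => ({r | col r = col s} : Finset ι))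
    fun r s j => C (position r ^ (j + β s)) * X r]
  refine Finset.sum_congr rfl fun g _ => ?_
  have hgeom (s : D) (j : ℕ) :
      (C (position (g s) ^ (j + β s)) * X (g s) : MvPolynomial ι (PositionRing ι)) =
        C (position (g s) ^ β s) * X (g s) * C (position (g s)) ^ j := by
    rw [pow_add, C_mul, ← C_pow]
    ring
  simp only [hgeom]
  rw [umbral_geom, Finset.prod_mul_distrib, ← map_prod]
  have hX : ∏ s, (X (g s) : MvPolynomial ι (PositionRing ι)) =
      monomial (∑ s, Finsupp.single (g s) 1) 1 := (monomial_sum_one _ _).symm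
  have hposition : ∏ s : D, position (g s) ^ β s =
      monomial (∑ s : D, Finsupp.single (toDual (g s)) (β s)) 1 := by
    rw [monomial_sum_one]
    exact Finset.prod_congr rfl fun s _ => X_pow_eq_monomial
  have hkernel : aeval (fun s => (C (position (g s)) : MvPolynomial ι (PositionRing ι)))
      (clusterKernel col D) = C (aeval (fun s => position (g s)) (clusterKernel col D)) :=
    (aeval_algebraMap_apply _ _ _)
  rw [hX, hposition, hkernel, mul_right_comm, ← C_mul, C_mul_monomial, mul_one]

theorem coeff_clusterSubst_clusterLevelOnePoly (β : ι → ℕ) :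
    coeff (∑ s : D, Finsupp.single (s : ι) 1) (clusterSubst col (clusterLevelOnePoly col D β)) =
      (∑ g ∈ Fintype.piFinset (fun s : D => ({r | col r = col s} : Finset ι)) with
          Function.Injective g ∧
            ∑ s, Finsupp.single (g s) 1 = ∑ s : D, Finsupp.single (s : ι) 1,
        monomial (∑ s : D, Finsupp.single (toDual (g s)) (β s)) 1) *
      aeval (fun s : D => position (s : ι)) (clusterKernel col D) := by
  classical
  rw [clusterSubst_clusterLevelOnePoly, coeff_sum, Finset.sum_filter, Finset.sum_mul]
  refine Finset.sum_congr rfl fun g hg => ?_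
  have hcol (s : D) : col (g s) = col s :=
    (Finset.mem_filter.mp (Fintype.mem_piFinset.mp hg s)).2
  rw [coeff_monomial]
  by_cases hinj : Function.Injective g
  · simp only [hinj, true_and]
    split_ifs with hsum
    · rw [aeval_clusterKernel_of_perm col D hinj (mem_of_sum_single_eq hinj hsum) hcol]
    · rw [zero_mul]
  · rw [aeval_clusterKernel_eq_zero col D hinj, mul_zero, ite_self, if_neg fun h => hinj h.1,
      zero_mul]

variable {col D} {β : ι → ℕ}

theorem isLead_coeff_clusterSubst_clusterLevelOnePoly
    (hβ : ∀ s ∈ D, ∀ s' ∈ D, col s = col s' → s < s' → β s ≤ β s') :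
    IsLead (coeff (∑ s : D, Finsupp.single (s : ι) 1)
        (clusterSubst col (clusterLevelOnePoly col D β)))
      (∑ s : D, Finsupp.single (toDual (s : ι))
        (β s + ∑ s' : D with s' < s, if col s' = col s then 2 else 1)) := by
  simp only [Finsupp.single_add, Finset.sum_add_distrib]
  rw [coeff_clusterSubst_clusterLevelOnePoly]
  refine IsLead.mul ?_ (isLead_aeval_position_clusterKernel col D)
  refine isLead_sum_monomial (i := fun s : D => (s : ι))
    (m := fun g : D → ι => ∑ s : D, Finsupp.single (toDual (g s)) (β s)) ?_ fun g hg => ?_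
  · exact Finset.mem_filter.mpr ⟨Fintype.mem_piFinset.mpr fun s =>
      Finset.mem_filter.mpr ⟨Finset.mem_univ _, rfl⟩, Subtype.val_injective, rfl⟩
  · obtain ⟨hcol, hinj, hsum⟩ := Finset.mem_filter.mp hg
    have hcol (s : D) : col (g s) = col s :=
      (Finset.mem_filter.mp (Fintype.mem_piFinset.mp hcol s)).2
    have hgD := mem_of_sum_single_eq hinj hsum
    exact toLex_sum_single_le (c := fun r => col (ofDual r)) (g := fun s : D => toDual (s : ι))
      (toDual.injective.comp Subtype.val_injective) (toDual.injective.comp hinj) hcol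
      fun s t hc hlt => ⟨⟨g t, hgD t⟩, rfl, hβ s s.2 (g t) (hgD t) hc hlt⟩

theorem isLead_clusterSubst_clusterLevelOnePoly
    (hD : ∀ s ∈ D, ∀ s', col s' = col s → s' < s → s' ∈ D)
    (hβ : ∀ s ∈ D, ∀ s' ∈ D, col s = col s' → s < s' → β s ≤ β s') :
    IsLead (clusterSubst col (clusterLevelOnePoly col D β))
      (∑ s : D, Finsupp.single (s : ι) 1) := by
  classical
  refine ⟨fun h => (isLead_coeff_clusterSubst_clusterLevelOnePoly hβ).1 (by rw [h, coeff_zero]),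
    fun ν hν => ?_⟩
  rw [clusterSubst_clusterLevelOnePoly, coeff_sum] at hν
  obtain ⟨g, hg, hne⟩ := Finset.exists_ne_zero_of_sum_ne_zero hν
  rw [coeff_monomial] at hne
  obtain ⟨hνg, hne⟩ := ite_ne_right_iff.mp hne
  have hinj : Function.Injective g := by
    by_contra hinj
    exact hne (by rw [aeval_clusterKernel_eq_zero col D hinj, mul_zero])
  have hcol (s : D) : col (g s) = col s :=
    (Finset.mem_filter.mp (Fintype.mem_piFinset.mp hg s)).2
  rw [← hνg]
  exact toLex_sum_single_le (c := col) Subtype.val_injective hinj hcol fun s t hc hlt =>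
    ⟨⟨g t, hD s s.2 (g t) hc.symm hlt⟩, rfl, le_rfl⟩

end LevelOneLead

/-! ### Polynomials with prescribed cluster exponents -/

theorem sum_range_ite_le_lt (k a c : ℕ) :
    ∑ j ∈ Finset.range k, (if a ≤ j ∧ j < c then 1 else 0) = min c k - a := by
  rw [← Finset.sum_filter, Finset.sum_const, smul_eq_mul, mul_one, ← Nat.card_Ico]
  congr 1
  ext j
  simp only [Finset.mem_filter, Finset.mem_range, Finset.mem_Ico]
  lia

theorem sum_coe_single_apply {ι σ : Type*} [DecidableEq ι] {f : ι → σ}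
    (hf : Function.Injective f) (D : Finset ι) (n : ι → ℕ) (r : ι) :
    (∑ s : D, Finsupp.single (f s) (n s)) (f r) = if r ∈ D then n r else 0 := by
  classical
  rw [Finset.sum_coe_sort D fun s => Finsupp.single (f s) (n s), Finsupp.finsetSum_apply]
  simp only [Finsupp.single_apply, hf.eq_iff, Finset.sum_ite_eq']

section LevelSet

variable {ι : Type*} [Fintype ι] {col : ι → Bool} {k : ℕ} {ν : ι →₀ ℕ}

variable (col k) in
/-- The clusters that take part in the `j`-th of `k` level-one factors, so that each cluster takes
part in as many factors as its charge. The two colours fill up the factors from opposite ends: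
thus they meet as rarely as possible, namely `ν r + ν s - k` times. -/
def levelSet (ν : ι →₀ ℕ) (j : ℕ) : Finset ι :=
  {r | if col r then k ≤ j + ν r else j < ν r}

theorem mem_levelSet {j : ℕ} {r : ι} :
    r ∈ levelSet col k ν j ↔ if col r then k ≤ j + ν r else j < ν r := by
  rw [levelSet, Finset.mem_filter, and_iff_right (Finset.mem_univ r)]

theorem mem_levelSet_of_mem {j : ℕ} {r s : ι} (hc : col s = col r) (hν : ν r ≤ ν s)
    (hr : r ∈ levelSet col k ν j) : s ∈ levelSet col k ν j := by
  rw [mem_levelSet] at hr ⊢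
  rw [hc]
  split_ifs at hr ⊢ <;> lia

theorem mem_levelSet_iff_of_lt {j : ℕ} (hj : j < k) {r : ι} : r ∈ levelSet col k ν j ↔
    (if col r then k - ν r else 0) ≤ j ∧ j < if col r then k else ν r := by
  rw [mem_levelSet]
  split_ifs <;> lia

theorem card_filter_mem_levelSet [DecidableEq ι] {r : ι} (hr : ν r ≤ k) :
    ({j ∈ Finset.range k | r ∈ levelSet col k ν j} : Finset ℕ).card = ν r := by
  rw [Finset.card_filter, Finset.sum_congr rfl fun j hj => if_congr
    (mem_levelSet_iff_of_lt (Finset.mem_range.mp hj)) rfl rfl, sum_range_ite_le_lt]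
  split_ifs <;> lia

theorem card_filter_mem_levelSet_and [DecidableEq ι] {r s : ι} (hr : col r = true)
    (hs : col s = false) (hνr : ν r ≤ k) (hνs : ν s ≤ k) :
    ({j ∈ Finset.range k | r ∈ levelSet col k ν j ∧ s ∈ levelSet col k ν j} : Finset ℕ).card =
      ν r + ν s - k := by
  rw [Finset.card_filter,
    Finset.sum_congr rfl (g := fun j => if k - ν r ≤ j ∧ j < ν s then 1 else 0),
    sum_range_ite_le_lt]
  · lia
  · intro j _
    simp only [mem_levelSet, hr, hs, if_true, Bool.false_eq_true, if_false, Nat.sub_le_iff_le_add]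

theorem sum_sum_single_levelSet (hν : ∀ r, ν r ≤ k) :
    ∑ j ∈ Finset.range k, ∑ s : levelSet col k ν j, Finsupp.single (s : ι) 1 = ν := by
  classical
  ext r
  rw [Finsupp.finsetSum_apply, Finset.sum_congr rfl fun j _ => sum_coe_single_apply
    (f := fun s => s) Function.injective_id (levelSet col k ν j) (fun _ => 1) r]
  rw [← Finset.card_filter, card_filter_mem_levelSet (hν r)]

end LevelSet

section Excess

variable {ι : Type} [Fintype ι] [LinearOrder ι] {col : ι → Bool} {k k01 k0 : ℕ} {ν : ι →₀ ℕ}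
  {e : ιᵒᵈ →₀ ℕ}

/-- The amount by which the exponent `e` exceeds the least one allowed. -/
def excess (col : ι → Bool) (k k01 k0 : ℕ) (ν : ι →₀ ℕ) (e : ιᵒᵈ →₀ ℕ) (r : ι) : ℕ :=
  e (toDual r) - initialExponent col k k01 k0 ν r

theorem initialExponent_of_covBy {s s' : ι} (h : s ⋖ s') (hc : col s = col s') (hν : ν s = ν s') :
    initialExponent col k k01 k0 ν s' = initialExponent col k k01 k0 ν s + 2 * ν s := by
  classical
  have hlt : ({t | t < s'} : Finset ι) = insert s ({t | t < s} : Finset ι) := by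
    ext t
    simp only [Finset.mem_filter, Finset.mem_univ, true_and, Finset.mem_insert, h.lt_iff_le_left,
      le_iff_eq_or_lt]
  have hs : s ∉ ({t | t < s} : Finset ι) := fun hs => lt_irrefl s (Finset.mem_filter.mp hs).2
  rw [initialExponent, initialExponent, hlt, Finset.sum_insert hs, ← hc, ← hν, if_pos rfl]
  lia

theorem IsQuasiParticleExponent.excess_le (hQ : IsQuasiParticleExponent col k k01 k0 ν e)
    (hcol : Monotone col) {s s' : ι} (hs : s ≤ s') (hc : col s = col s') (hν : ν s = ν s') :
    excess col k k01 k0 ν e s ≤ excess col k k01 k0 ν e s' := by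
  classical
  let S : Set ι := {t | col t = col s' ∧ ν t = ν s'}
  have hS : (Set.range (OrderEmbedding.subtype (· ∈ S))).OrdConnected := by
    refine ⟨?_⟩
    rintro _ ⟨⟨a, hca, hνa⟩, rfl⟩ _ ⟨⟨b, hcb, hνb⟩, rfl⟩ t ⟨hat, htb⟩
    have hct : col t = col s' := le_antisymm ((hcol htb).trans_eq hcb) (hca.ge.trans (hcol hat))
    have anti {x y : ι} (hxy : x ≤ y) (h : col x = col y) : ν y ≤ ν x := by
      rcases hxy.eq_or_lt with rfl | hxy
      exacts [le_rfl, hQ.charge_anti x y h hxy]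
    exact ⟨⟨t, hct, ((anti hat (hca.trans hct.symm)).trans_eq hνa).antisymm
      (hνb.ge.trans (anti htb (hct.trans hcb.symm)))⟩, rfl⟩
  let _ : LocallyFiniteOrder S := Fintype.toLocallyFiniteOrder
  have hmono : Monotone fun t : S => excess col k k01 k0 ν e t := by
    refine (monotone_iff_forall_covBy _).mpr fun a b hab => ?_
    have hab : (a : ι) ⋖ b := (hS.apply_covBy_apply_iff (OrderEmbedding.subtype (· ∈ S))).mpr hab
    have hc : col a = col b := a.2.1.trans b.2.1.symm
    have hν : ν a = ν b := a.2.2.trans b.2.2.symm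
    have hd := hQ.difference a b hc hab.lt hν
    rw [excess, excess, initialExponent_of_covBy hab hc hν]
    lia
  exact hmono (a := ⟨s, hc, hν⟩) (b := ⟨s', rfl, rfl⟩) hs

end Excess

section LevelOffset

variable {ι : Type*} {col : ι → Bool} {k k0 k1 k2 : ℕ} {ν : ι →₀ ℕ} {ε : ι → ℕ} {r : ι}

/-- The offset `β r` of the cluster `r` in the `j`-th level-one factor. The first summand accounts
for the initial condition. The second one puts the whole of `ε r` onto that factor among those
containing `r` in which no charge is less than `ν r`. -/
def levelOffset (col : ι → Bool) (k k0 k2 : ℕ) (ν : ι →₀ ℕ) (ε : ι → ℕ) (j : ℕ) (r : ι) : ℕ :=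
  (if (if col r then j < k2 else k0 ≤ j) then 1 else 0) +
    if (if col r then ν r + j = k else ν r = j + 1) then ε r else 0

variable [Fintype ι] [DecidableEq ι]

theorem sum_mem_levelSet_initial (hk : k0 + k1 + k2 = k) (hν : ν r ≤ k) :
    ∑ j ∈ Finset.range k with r ∈ levelSet col k ν j,
      (if (if col r then j < k2 else k0 ≤ j) then 1 else 0) =
      ν r - if col r then k0 + k1 else k0 := by
  simp only [Finset.sum_filter, ← ite_and]
  rw [Finset.sum_congr rfl fun j _ => if_congr (Q := (if col r then k - ν r else k0) ≤ j ∧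
    j < if col r then k2 else ν r) ?_ rfl rfl, sum_range_ite_le_lt]
  · split_ifs <;> lia
  · rw [mem_levelSet]
    split_ifs <;> lia

theorem sum_mem_levelSet_extreme (hpos : 0 < ν r) (hν : ν r ≤ k) :
    ∑ j ∈ Finset.range k with r ∈ levelSet col k ν j,
      (if (if col r then ν r + j = k else ν r = j + 1) then ε r else 0) = ε r := by
  simp only [Finset.sum_filter, ← ite_and]
  rw [Finset.sum_congr rfl fun j _ => if_congr
    (Q := j = if col r then k - ν r else ν r - 1) ?_ rfl rfl, Finset.sum_ite_eq', if_pos]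
  · rw [Finset.mem_range]
    split_ifs <;> lia
  · rw [mem_levelSet]
    split_ifs <;> lia

theorem sum_mem_levelSet_levelOffset (hk : k0 + k1 + k2 = k) (hν : ν r ≤ k)
    (hε : ν r = 0 → ε r = 0) :
    ∑ j ∈ Finset.range k with r ∈ levelSet col k ν j, levelOffset col k k0 k2 ν ε j r =
      (ν r - if col r then k0 + k1 else k0) + ε r := by
  simp only [levelOffset, Finset.sum_add_distrib]
  rw [sum_mem_levelSet_initial hk hν]
  rcases (ν r).eq_zero_or_pos with h | h
  · simp only [hε h, ite_self, Finset.sum_const_zero]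
  · rw [sum_mem_levelSet_extreme h hν]

end LevelOffset

section LevelExponent

variable {ι : Type} [Fintype ι] [LinearOrder ι] {col : ι → Bool} {k k0 k1 k2 : ℕ} {ν : ι →₀ ℕ}
  {e : ιᵒᵈ →₀ ℕ}

theorem sum_mem_levelSet_sum_lt (hcol : Monotone col) (hle : ∀ r, ν r ≤ k)
    (hanti : ∀ s s', col s = col s' → s < s' → ν s' ≤ ν s) (r : ι) :
    ∑ j ∈ Finset.range k with r ∈ levelSet col k ν j,
      ∑ s ∈ levelSet col k ν j with s < r, (if col s = col r then 2 else 1) =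
      ∑ s with s < r, (if col s = col r then 2 * ν r else ν r + ν s - k) := by
  have hinner (j : ℕ) :
      ∑ s ∈ levelSet col k ν j with s < r, (if col s = col r then 2 else 1) =
        ∑ s with s < r, if s ∈ levelSet col k ν j then (if col s = col r then 2 else 1) else 0 := by
    rw [← Finset.sum_filter, Finset.filter_filter, ← Finset.filter_univ_mem (levelSet col k ν j),
      Finset.filter_filter]
    simp only [Finset.filter_univ_mem, and_comm]
  simp only [hinner]
  rw [Finset.sum_comm]
  refine Finset.sum_congr rfl fun s hs => ?_
  have hs : s < r := (Finset.mem_filter.mp hs).2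
  rw [← Finset.sum_filter, Finset.filter_filter, Finset.sum_const, smul_eq_mul]
  split_ifs with hc
  · rw [Finset.filter_congr fun j _ => and_iff_left_of_imp
      (mem_levelSet_of_mem hc (hanti s r hc hs)), card_filter_mem_levelSet (hle r), mul_comm]
  · obtain ⟨hcs, hcr⟩ := Bool.lt_iff.mp (lt_of_le_of_ne (hcol hs.le) hc)
    rw [card_filter_mem_levelSet_and hcr hcs (hle r) (hle s), mul_one]

theorem sum_sum_single_levelOffset (hcol : Monotone col) (hk : k0 + k1 + k2 = k)
    (hQ : IsQuasiParticleExponent col k (k0 + k1) k0 ν e)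
    (he : ∀ r, ν r = 0 → e (toDual r) = 0) :
    ∑ j ∈ Finset.range k, ∑ s : levelSet col k ν j, Finsupp.single (toDual (s : ι))
      (levelOffset col k k0 k2 ν (excess col k (k0 + k1) k0 ν e) j s +
        ∑ s' : levelSet col k ν j with s' < s, if col s' = col s then 2 else 1) = e := by
  have hfilter (D : Finset ι) (s : D) : ∑ s' : D with s' < s, (if col s' = col s then 2 else 1) =
      ∑ s' ∈ D with s' < (s : ι), if col s' = col s then 2 else 1 := by
    rw [Finset.sum_filter, Finset.sum_filter, ← Finset.sum_coe_sort D]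
    rfl
  simp only [hfilter]
  ext r
  obtain ⟨r, rfl⟩ := toDual.surjective r
  rw [Finsupp.finsetSum_apply, Finset.sum_congr rfl fun j _ =>
    sum_coe_single_apply toDual.injective (levelSet col k ν j) (fun s => levelOffset _ _ _ _ _ _ j s
      + ∑ s' ∈ levelSet col k ν j with s' < s, if col s' = col s then 2 else 1) r,
    ← Finset.sum_filter, Finset.sum_add_distrib,
    sum_mem_levelSet_levelOffset hk (hQ.charge_le r) fun h => by rw [excess, he r h, Nat.zero_sub],
    sum_mem_levelSet_sum_lt hcol hQ.charge_le hQ.charge_anti, add_right_comm]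
  exact Nat.add_sub_of_le (hQ.initial r)

end LevelExponent

section LevelPoly

variable {ι : Type} {col : ι → Bool} {k k0 k1 k2 : ℕ} {ν : ι →₀ ℕ} {ε : ι → ℕ}

theorem curveDegreeLE_clusterLevelOnePoly_levelOffset (D : Finset ι) (j : ℕ) :
    CurveDegreeLE 1 (if k0 ≤ j ∧ j < k2 then 0 else 1) (if k0 ≤ j then 0 else 1)
      (clusterLevelOnePoly col D (levelOffset col k k0 k2 ν ε j)) := by
  refine curveDegreeLE_levelOnePoly (fun s hs => ?_) fun s hs => ?_ <;>
    rw [levelOffset] at hs <;>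
    cases hc : col s <;> simp only [hc, Bool.toNat_true, Bool.toNat_false] at hs <;>
    split_ifs at hs ⊢ <;> lia

theorem curveDegreeLE_prod_clusterLevelOnePoly (hk : k0 + k1 + k2 = k) (h02 : k0 * k2 = 0)
    (D : ℕ → Finset ι) :
    CurveDegreeLE k (k0 + k1) k0 (∏ j ∈ Finset.range k,
      clusterLevelOnePoly col (D j) (levelOffset col k k0 k2 ν ε j)) := by
  have hprod := curveDegreeLE_prod (Finset.range k) fun j _ =>
    curveDegreeLE_clusterLevelOnePoly_levelOffset (col := col) (k := k) (k0 := k0) (k2 := k2)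
      (ν := ν) (ε := ε) (D j) j
  have hsum01 : ∑ j ∈ Finset.range k, (if k0 ≤ j ∧ j < k2 then 0 else 1) = k0 + k1 := by
    rw [Finset.sum_congr rfl (g := fun j => if k2 ≤ j ∧ j < k then 1 else 0), sum_range_ite_le_lt]
    · lia
    · intro j hj
      have := Finset.mem_range.mp hj
      rcases Nat.mul_eq_zero.mp h02 with h | h <;> split_ifs <;> lia
  have hsum0 : ∑ j ∈ Finset.range k, (if k0 ≤ j then 0 else 1) = k0 := by
    rw [Finset.sum_congr rfl (g := fun j => if 0 ≤ j ∧ j < k0 then 1 else 0), sum_range_ite_le_lt]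
    · lia
    · intro j _
      split_ifs <;> lia
  rwa [Finset.sum_const, Finset.card_range, smul_eq_mul, mul_one, hsum01, hsum0] at hprod

end LevelPoly

section Existence

variable {ι : Type} [Fintype ι] [LinearOrder ι] {col : ι → Bool} {k k0 k1 k2 : ℕ} {ν : ι →₀ ℕ}
  {e : ιᵒᵈ →₀ ℕ}

theorem IsQuasiParticleExponent.levelOffset_le {k01 : ℕ} (hcol : Monotone col)
    (hQ : IsQuasiParticleExponent col k k01 k0 ν e) {j : ℕ} {s s' : ι}
    (hs : s ∈ levelSet col k ν j) (hs' : s' ∈ levelSet col k ν j) (hc : col s = col s')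
    (hlt : s < s') :
    levelOffset col k k0 k2 ν (excess col k k01 k0 ν e) j s ≤
      levelOffset col k k0 k2 ν (excess col k k01 k0 ν e) j s' := by
  have hanti := hQ.charge_anti s s' hc hlt
  have hexcess := hQ.excess_le hcol hlt.le hc
  rw [mem_levelSet] at hs hs'
  rw [levelOffset, levelOffset, hc]
  rw [hc] at hs
  refine Nat.add_le_add_left ?_ _
  split_ifs at hs hs' ⊢ <;> first | exact hexcess (by lia) | lia

theorem exists_isLead_clusterSubst (hcol : Monotone col) (hk : k0 + k1 + k2 = k)
    (h02 : k0 * k2 = 0) {w : ℕ × ℕ × ℕ} (hQ : IsQuasiParticleExponent col k (k0 + k1) k0 ν e)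
    (hw : IsClusterExponent col w ν e) :
    ∃ P ∈ boundedPiece k (k0 + k1) k0 w,
      IsLead (clusterSubst col P) ν ∧ IsLead (coeff ν (clusterSubst col P)) e := by
  let F (j : ℕ) : MvPolynomial ℕ ℚ := clusterLevelOnePoly col (levelSet col k ν j)
    (levelOffset col k k0 k2 ν (excess col k (k0 + k1) k0 ν e) j)
  have hoffset (j : ℕ) := fun s hs s' hs' =>
    hQ.levelOffset_le hcol (k2 := k2) (j := j) (s := s) (s' := s') hs hs'
  have hF (j : ℕ) : IsLead (clusterSubst col (F j)) (∑ s : levelSet col k ν j, _) :=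
    isLead_clusterSubst_clusterLevelOnePoly (fun s hs s' hc hlt =>
      mem_levelSet_of_mem hc (hQ.charge_anti s' s hc hlt) hs) (hoffset j)
  have hν := sum_sum_single_levelSet (col := col) hQ.charge_le
  have hcoeff := coeff_prod_of_isLead (Finset.range k) fun j _ => hF j
  rw [← map_prod, hν] at hcoeff
  have hlead : IsLead (coeff ν (clusterSubst col (∏ j ∈ Finset.range k, F j))) e := by
    rw [hcoeff, ← sum_sum_single_levelOffset hcol hk hQ hw.eq_zero_of_eq_zero]
    exact isLead_prod _ fun j _ => isLead_coeff_clusterSubst_clusterLevelOnePoly (hoffset j)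
  obtain ⟨w', hw'⟩ : ∃ w', IsWeightedHomogeneous varWeight (∏ j ∈ Finset.range k, F j) w' := by
    have hF (j : ℕ) : ∃ w', IsWeightedHomogeneous varWeight (F j) w' :=
      exists_isWeightedHomogeneous_levelOnePoly _
    choose W hW using hF
    exact ⟨_, IsWeightedHomogeneous.prod _ _ _ fun j _ => hW j⟩
  have hw'w : w' = w :=
    (hasClusterWeight_clusterSubst col hw' ν e hlead.1).weight_add.symm.trans hw.weight_add
  have hleadν := isLead_prod (Finset.range k) fun j _ => hF j
  rw [← map_prod, hν] at hleadν
  exact ⟨_, mem_boundedPiece.mpr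
    ⟨curveDegreeLE_prod_clusterLevelOnePoly hk h02 _, hw'w ▸ hw'⟩, hleadν, hlead⟩

end Existence

/-! ### Quasi-particle data as exponents -/

section Padding

/-- The extension of a finite sequence by zeros. -/
noncomputable def padZero {a : ℕ} (f : Fin a → ℕ) : ℕ → ℕ := Function.extend Fin.val f 0

variable {a M : ℕ}

theorem padZero_val (f : Fin a → ℕ) (s : Fin a) : padZero f s = f s :=
  Fin.val_injective.extend_apply f 0 s

theorem padZero_of_lt (f : Fin a → ℕ) {i : ℕ} (hi : i < a) : padZero f i = f ⟨i, hi⟩ :=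
  padZero_val f ⟨i, hi⟩

theorem padZero_of_le (f : Fin a → ℕ) {i : ℕ} (hi : a ≤ i) : padZero f i = 0 :=
  Function.extend_apply' f (0 : ℕ → ℕ) i fun ⟨s, hs⟩ => by lia

theorem apply_padZero {g : ℕ → ℕ} (hg : g 0 = 0) (f : Fin a → ℕ) (i : ℕ) :
    g (padZero f i) = padZero (g ∘ f) i := by
  rcases lt_or_ge i a with hi | hi
  · rw [padZero_of_lt _ hi, padZero_of_lt _ hi, Function.comp_apply]
  · rw [padZero_of_le _ hi, padZero_of_le _ hi, hg]

theorem sum_padZero (f : Fin a → ℕ) (h : a ≤ M) : ∑ i : Fin M, padZero f i = ∑ s, f s := by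
  calc ∑ i : Fin M, padZero f i = ∑ i ∈ Finset.range a, padZero f i := by
        rw [Fin.sum_univ_eq_sum_range]
        exact (Finset.sum_subset (Finset.range_mono h) fun i _ hi =>
          padZero_of_le f (not_lt.mp (Finset.mem_range.not.mp hi))).symm
    _ = ∑ s, f s := by
        rw [← Fin.sum_univ_eq_sum_range]
        exact Finset.sum_congr rfl fun s _ => padZero_val f s

theorem exists_ne_zero_iff_lt {F : Fin M → ℕ} (hF : ∀ i j, i < j → F j ≤ F i) :
    ∃ a ≤ M, ∀ i : Fin M, F i ≠ 0 ↔ (i : ℕ) < a := by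
  have hex : ∃ i, padZero F i = 0 := ⟨M, padZero_of_le F le_rfl⟩
  refine ⟨Nat.find hex, Nat.find_min' hex (padZero_of_le F le_rfl), fun i => ?_⟩
  rw [Nat.lt_find_iff]
  refine ⟨fun hi j hj => ?_, fun h => padZero_val F i ▸ h i le_rfl⟩
  rw [padZero_of_lt F (hj.trans_lt i.2)]
  rcases hj.lt_or_eq with hlt | rfl
  · have := hF ⟨j, hj.trans_lt i.2⟩ i hlt
    lia
  · exact hi

end Padding

section Sequence

/-- The conditions on the charges `n` and the degrees `m` of the quasi-particles of one colour. The
maximal degree of the quasi-particle `s` is `-n s - c (n s) - 2 s n s`. -/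
structure IsQuasiParticleSequence (k : ℕ) (c : ℕ → ℕ) {a : ℕ} (n : Fin a → ℕ) (m : Fin a → ℤ) :
    Prop where
  pos : ∀ s, 1 ≤ n s
  le : ∀ s, n s ≤ k
  anti : ∀ s t : Fin a, s ≤ t → n t ≤ n s
  difference : ∀ (s : ℕ) (h : s + 1 < a), n ⟨s + 1, h⟩ = n ⟨s, Nat.lt_of_succ_lt h⟩ →
    m ⟨s + 1, h⟩ ≤ m ⟨s, Nat.lt_of_succ_lt h⟩ - 2 * (n ⟨s, Nat.lt_of_succ_lt h⟩ : ℤ)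
  initial : ∀ s : Fin a, m s ≤ -(n s : ℤ) - (c (n s) : ℤ) - 2 * (s : ℕ) * (n s : ℤ)

/-- The conditions on the charges `F` and the position exponents `G` of `M` clusters of one colour,
charge zero standing for the absence of a quasi-particle. -/
structure IsPaddedSequence (k : ℕ) (c : ℕ → ℕ) {M : ℕ} (F G : Fin M → ℕ) : Prop where
  le : ∀ i, F i ≤ k
  anti : ∀ i j, i < j → F j ≤ F i
  initial : ∀ i : Fin M, c (F i) + (i : ℕ) * (2 * F i) ≤ G i
  difference : ∀ i j, i < j → F i = F j → G i + 2 * F i ≤ G j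
  eq_zero_of_eq_zero : ∀ i, F i = 0 → G i = 0

/-- The position exponents `-m - n` of quasi-particles with charges `n` and degrees `m`. The
truncation at zero has no effect on quasi-particle sequences. -/
def positionExponent {a : ℕ} (n : Fin a → ℕ) (m : Fin a → ℤ) (s : Fin a) : ℕ :=
  (-m s - n s).toNat

namespace IsQuasiParticleSequence

variable {k : ℕ} {c c' : ℕ → ℕ} {a a' M : ℕ} {n : Fin a → ℕ} {m : Fin a → ℤ} {n' : Fin a' → ℕ}
  {m' : Fin a' → ℤ}

theorem coe_positionExponent (h : IsQuasiParticleSequence k c n m) (s : Fin a) :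
    (positionExponent n m s : ℤ) = -m s - n s := by
  have hinit := h.initial s
  have hnonneg : (0 : ℤ) ≤ 2 * (s : ℕ) * (n s : ℤ) := by positivity
  exact Int.toNat_of_nonneg (by linarith)

theorem difference_of_lt (h : IsQuasiParticleSequence k c n m) {s t : ℕ} (hst : s < t)
    (ht : t < a) (hn : n ⟨t, ht⟩ = n ⟨s, hst.trans ht⟩) :
    m ⟨t, ht⟩ ≤ m ⟨s, hst.trans ht⟩ - 2 * (n ⟨s, hst.trans ht⟩ : ℤ) := by
  induction t, hst using Nat.le_induction with
  | base => exact h.difference s ht hn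
  | succ t hst ih =>
    have ht' : t < a := Nat.lt_of_succ_lt ht
    have hle := h.anti ⟨t, ht'⟩ ⟨t + 1, ht⟩ (Nat.le_succ t)
    have hge := h.anti ⟨s, by lia⟩ ⟨t, ht'⟩ (Nat.le_of_succ_le hst)
    have hlast := h.difference t ht (by lia)
    have hrest := ih ht' (by lia)
    lia

theorem padZero_eq_zero_iff (h : IsQuasiParticleSequence k c n m) {i : ℕ} :
    padZero n i = 0 ↔ a ≤ i := by
  refine ⟨fun hi => ?_, padZero_of_le n⟩
  by_contra! hlt
  rw [padZero_of_lt n hlt] at hi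
  have := h.pos ⟨i, hlt⟩
  lia

theorem isPaddedSequence (h : IsQuasiParticleSequence k c n m) (hc : c 0 = 0) :
    IsPaddedSequence k c (fun i : Fin M => padZero n i)
      fun i => padZero (positionExponent n m) i where
  le i := by
    rcases lt_or_ge (i : ℕ) a with hi | hi
    · exact padZero_of_lt n hi ▸ h.le _
    · exact padZero_of_le n hi ▸ Nat.zero_le k
  anti i j hij := by
    rcases lt_or_ge (j : ℕ) a with hj | hj
    · rw [padZero_of_lt n hj, padZero_of_lt n (lt_trans hij hj)]
      exact h.anti _ _ (le_of_lt hij)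
    · exact padZero_of_le n hj ▸ Nat.zero_le _
  initial i := by
    rcases lt_or_ge (i : ℕ) a with hi | hi
    · have hinit := h.initial ⟨i, hi⟩
      have hexp := h.coe_positionExponent ⟨i, hi⟩
      rw [padZero_of_lt n hi, padZero_of_lt _ hi]
      zify
      rw [hexp]
      linarith
    · rw [padZero_of_le n hi, hc]
      simp only [mul_zero, add_zero]
      exact Nat.zero_le _
  difference i j hij hF := by
    rcases lt_or_ge (j : ℕ) a with hj | hj
    · have hi : (i : ℕ) < a := lt_trans hij hj
      rw [padZero_of_lt n hi, padZero_of_lt n hj] at hF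
      have hdiff := h.difference_of_lt hij hj hF.symm
      have hexpi := h.coe_positionExponent ⟨i, hi⟩
      have hexpj := h.coe_positionExponent ⟨j, hj⟩
      rw [padZero_of_lt n hi, padZero_of_lt _ hi, padZero_of_lt _ hj]
      lia
    · rw [padZero_of_le n hj] at hF
      rw [hF, padZero_of_le _ (h.padZero_eq_zero_iff.mp hF)]
      exact Nat.zero_le _
  eq_zero_of_eq_zero i hi := padZero_of_le _ (h.padZero_eq_zero_iff.mp hi)

theorem length_le_sum (h : IsQuasiParticleSequence k c n m) : a ≤ ∑ s, n s := by
  simpa only [Finset.card_univ, Fintype.card_fin, smul_eq_mul, mul_one] using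
    Finset.card_nsmul_le_sum Finset.univ n 1 fun s _ => h.pos s

theorem sum_padZero_add (h : IsQuasiParticleSequence k c n m) (ha : a ≤ M) :
    ((∑ i : Fin M, padZero n i + ∑ i : Fin M, padZero (positionExponent n m) i : ℕ) : ℤ) =
      -∑ s, m s := by
  rw [sum_padZero n ha, sum_padZero _ ha]
  push_cast
  simp only [h.coe_positionExponent, Finset.sum_sub_distrib, Finset.sum_neg_distrib]
  ring

theorem ext_of_padZero_eq (h : IsQuasiParticleSequence k c n m)
    (h' : IsQuasiParticleSequence k c' n' m') (ha : a ≤ M) (ha' : a' ≤ M)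
    (hn : ∀ i : Fin M, padZero n i = padZero n' i)
    (hm : ∀ i : Fin M, padZero (positionExponent n m) i = padZero (positionExponent n' m') i) :
    a = a' ∧ n ≍ n' ∧ m ≍ m' := by
  have hiff (i : Fin M) : a ≤ i ↔ a' ≤ i := by
    rw [← h.padZero_eq_zero_iff, ← h'.padZero_eq_zero_iff, hn]
  obtain rfl : a = a' := by
    rcases lt_trichotomy a a' with hlt | rfl | hlt
    · have := hiff ⟨a, hlt.trans_le ha'⟩
      lia
    · rfl
    · have := hiff ⟨a', hlt.trans_le ha⟩
      lia
  obtain rfl : n = n' := funext fun s => by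
    simpa only [Fin.val_castLE, padZero_val] using hn (s.castLE ha)
  refine ⟨rfl, HEq.rfl, heq_of_eq (funext fun s => ?_)⟩
  have hs := hm (s.castLE ha)
  rw [Fin.val_castLE, padZero_val, padZero_val] at hs
  have hexp := h.coe_positionExponent s
  have hexp' := h'.coe_positionExponent s
  lia

end IsQuasiParticleSequence

theorem IsPaddedSequence.exists_isQuasiParticleSequence {k : ℕ} {c : ℕ → ℕ} {M : ℕ}
    {F G : Fin M → ℕ} (h : IsPaddedSequence k c F G) :
    ∃ (a : ℕ) (n : Fin a → ℕ) (m : Fin a → ℤ), a ≤ M ∧ IsQuasiParticleSequence k c n m ∧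
      (∀ i : Fin M, padZero n i = F i) ∧ ∀ i : Fin M, padZero (positionExponent n m) i = G i := by
  obtain ⟨a, ha, hF⟩ := exists_ne_zero_iff_lt h.anti
  have hF0 (i : Fin M) (hi : a ≤ i) : F i = 0 := not_not.mp ((hF i).not.mpr hi.not_gt)
  refine ⟨a, fun s => F (s.castLE ha), fun s => -(F (s.castLE ha) : ℤ) - (G (s.castLE ha) : ℤ), ha,
    ⟨fun s => Nat.one_le_iff_ne_zero.mpr ((hF (s.castLE ha)).mpr s.2), fun s => h.le _,
      fun s t hst => ?_, fun s hs hFs => ?_, fun s => ?_⟩, fun i => ?_, fun i => ?_⟩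
  · rcases hst.lt_or_eq with hlt | rfl
    · exact h.anti (s.castLE ha) (t.castLE ha) hlt
    · exact le_rfl
  · have := h.difference (Fin.castLE ha ⟨s, Nat.lt_of_succ_lt hs⟩) (Fin.castLE ha ⟨s + 1, hs⟩)
      (Nat.lt_succ_self s) hFs.symm
    lia
  · have hinit := h.initial (s.castLE ha)
    rw [Fin.val_castLE] at hinit
    zify at hinit
    linarith
  · rcases lt_or_ge (i : ℕ) a with hi | hi
    · exact padZero_of_lt _ hi
    · rw [padZero_of_le _ hi, hF0 i hi]
  · rcases lt_or_ge (i : ℕ) a with hi | hi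
    · rw [padZero_of_lt _ hi, positionExponent, Fin.castLE_mk, Fin.eta]
      lia
    · rw [padZero_of_le _ hi, h.eq_zero_of_eq_zero i (hF0 i hi)]

end Sequence

section Datum

variable {k k0 k01 k₀ k₁ M : ℕ}

theorem cluster_lt_cluster {c c' : Bool} {i i' : Fin M} :
    cluster c i < cluster c' i' ↔ c < c' ∨ c = c' ∧ i < i' :=
  Prod.Lex.toLex_lt_toLex

theorem colour_cluster (c : Bool) (i : Fin M) : colour (cluster c i) = c := rfl

theorem exists_eq_cluster (r : Cluster M) : ∃ c i, r = cluster c i :=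
  ⟨(ofLex r).1, (ofLex r).2, rfl⟩

theorem monotone_colour : Monotone (colour (M := M)) := fun _ _ hrs =>
  (Prod.Lex.le_iff.mp hrs).elim le_of_lt fun h => h.1.le

/-- The part of the initial condition on a quasi-particle of charge `n` and a given colour that does
not depend on the other quasi-particles of its colour; `F` are the charges of colour `false`. -/
def colourBound (k k01 k0 : ℕ) (F : Fin M → ℕ) (c : Bool) (n : ℕ) : ℕ :=
  (n - if c then k01 else k0) + if c then ∑ i, (n + F i - k) else 0

theorem colourBound_zero {F : Fin M → ℕ} (hF : ∀ i, F i ≤ k) (c : Bool) :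
    colourBound k k01 k0 F c 0 = 0 := by
  simp [colourBound, hF, Nat.sub_eq_zero_of_le]

theorem colourBound_padZero {a n : ℕ} (f : Fin a → ℕ) (ha : a ≤ M) (hn : n ≤ k) (c : Bool) :
    colourBound k k01 k0 (fun i : Fin M => padZero f i) c n = colourBound k k01 k0 f c n := by
  have hsum : ∑ i : Fin M, (n + padZero f i - k) = ∑ s, (n + f s - k) := by
    simp only [apply_padZero (g := fun x => n + x - k) (Nat.sub_eq_zero_of_le hn) f]
    exact sum_padZero _ ha
  rw [colourBound, colourBound, hsum]

theorem initialExponent_cluster (ν : Cluster M →₀ ℕ) (c : Bool) (i : Fin M) :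
    initialExponent colour k k01 k0 ν (cluster c i) =
      colourBound k k01 k0 (fun j => ν (cluster false j)) c (ν (cluster c i)) +
        i * (2 * ν (cluster c i)) := by
  have hsame (z : ℕ) : ∑ j, (if j < i then z else 0) = i * z := by
    rw [← Finset.sum_filter, Finset.sum_const, Finset.filter_gt_eq_Iio, Fin.card_Iio, smul_eq_mul]
  rw [initialExponent, colourBound, Finset.sum_filter, sum_cluster, Fintype.sum_bool]
  cases c <;> simp [cluster_lt_cluster, colour_cluster, hsame, add_comm, add_left_comm]

theorem isQuasiParticleExponent_colour_iff {ν : Cluster M →₀ ℕ} {e : (Cluster M)ᵒᵈ →₀ ℕ} :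
    (IsQuasiParticleExponent colour k k01 k0 ν e ∧ ∀ r, ν r = 0 → e (toDual r) = 0) ↔
      ∀ c, IsPaddedSequence k (colourBound k k01 k0 (fun j => ν (cluster false j)) c)
        (fun i => ν (cluster c i)) fun i => e (toDual (cluster c i)) := by
  constructor
  · rintro ⟨h, h0⟩ c
    exact {
      le := fun i => h.charge_le _
      anti := fun i j hij => h.charge_anti _ _ rfl (cluster_lt_cluster.mpr (.inr ⟨rfl, hij⟩))
      initial := fun i => initialExponent_cluster ν c i ▸ h.initial (cluster c i)
      difference := fun i j hij => h.difference _ _ rfl (cluster_lt_cluster.mpr (.inr ⟨rfl, hij⟩))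
      eq_zero_of_eq_zero := fun i => h0 _ }
  · intro h
    have hpair (s s' : Cluster M) (hc : colour s = colour s') (hlt : s < s') :
        ∃ c i j, s = cluster c i ∧ s' = cluster c j ∧ i < j := by
      obtain ⟨c, i, rfl⟩ := exists_eq_cluster s
      obtain ⟨c', j, rfl⟩ := exists_eq_cluster s'
      obtain rfl : c = c' := hc
      exact ⟨c, i, j, rfl, rfl, by simpa [cluster_lt_cluster] using hlt⟩
    refine ⟨⟨fun r => (h _).le _, fun s s' hc hlt => ?_, fun r => ?_, fun s s' hc hlt => ?_⟩,
      fun r => (h _).eq_zero_of_eq_zero _⟩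
    · obtain ⟨c, i, j, rfl, rfl, hij⟩ := hpair s s' hc hlt
      exact (h c).anti i j hij
    · obtain ⟨c, i, rfl⟩ := exists_eq_cluster r
      exact initialExponent_cluster ν c i ▸ (h c).initial i
    · obtain ⟨c, i, j, rfl, rfl, hij⟩ := hpair s s' hc hlt
      exact (h c).difference i j hij

/-- The number of quasi-particles of colour `c`; `false` stands for `γ₁` and `true` for `γ₂`. -/
def particleCount (q : QPDatum k k₀ k₁) : Bool → ℕ
  | false => q.a
  | true => q.b

/-- The charges of the quasi-particles of colour `c`. -/
def particleCharge (q : QPDatum k k₀ k₁) : (c : Bool) → Fin (particleCount q c) → ℕ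
  | false => q.n1
  | true => q.n2

/-- The degrees of the quasi-particles of colour `c`. -/
def particleDegree (q : QPDatum k k₀ k₁) : (c : Bool) → Fin (particleCount q c) → ℤ
  | false => q.m1
  | true => q.m2

theorem dmax1_eq (n : ℕ) (F : Fin M → ℕ) :
    dmax1 k₀ n = -(n : ℤ) - (colourBound k k01 k₀ F false n : ℕ) := by
  simp only [dmax1, colourBound, Bool.false_eq_true, if_false]
  lia

theorem dmax2_sub_sum_eq (n : ℕ) (F : Fin M → ℕ) :
    dmax2 k₀ k₁ n - ∑ s, max 0 ((n : ℤ) + F s - k) =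
      -(n : ℤ) - (colourBound k (k₀ + k₁) k₀ F true n : ℕ) := by
  have hsum : ∑ s, max 0 ((n : ℤ) + F s - k) = ((∑ s, (n + F s - k) : ℕ) : ℤ) := by
    rw [Nat.cast_sum]
    exact Finset.sum_congr rfl fun s _ => by lia
  simp only [hsum, dmax2, colourBound, if_true]
  lia

theorem isQuasiParticleSequence (q : QPDatum k k₀ k₁) (c : Bool) :
    IsQuasiParticleSequence k (colourBound k (k₀ + k₁) k₀ q.n1 c) (particleCharge q c)
      (particleDegree q c) := by
  cases c
  · exact ⟨q.n1_pos, q.n1_le, q.n1_anti, q.diff1, fun s =>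
      (q.init1 s).trans_eq (by rw [dmax1_eq]; rfl)⟩
  · refine ⟨q.n2_pos, q.n2_le, q.n2_anti, q.diff2, fun s => (q.init2 s).trans_eq ?_⟩
    rw [sub_right_comm, dmax2_sub_sum_eq]
    rfl

theorem exists_forall_padZero_eq {F G : Bool → Fin M → ℕ}
    (h : ∀ c, IsPaddedSequence k (colourBound k (k₀ + k₁) k₀ (F false) c) (F c) (G c)) :
    ∃ q : QPDatum k k₀ k₁, ∀ c, particleCount q c ≤ M ∧
      (∀ i : Fin M, padZero (particleCharge q c) i = F c i) ∧
      ∀ i : Fin M,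
        padZero (positionExponent (particleCharge q c) (particleDegree q c)) i = G c i := by
  obtain ⟨a, n1, m1, ha, h1, hn1, hm1⟩ := (h false).exists_isQuasiParticleSequence
  obtain ⟨b, n2, m2, hb, h2, hn2, hm2⟩ := (h true).exists_isQuasiParticleSequence
  refine ⟨
    { a, b, n1, n2, m1, m2
      n1_pos := h1.pos, n1_le := h1.le, n1_anti := h1.anti, diff1 := h1.difference
      n2_pos := h2.pos, n2_le := h2.le, n2_anti := h2.anti, diff2 := h2.difference
      init1 := fun s => (h1.initial s).trans_eq (by rw [dmax1_eq])
      init2 := fun s => (h2.initial s).trans_eq ?_ }, fun c => ?_⟩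
  · rw [← funext hn1, colourBound_padZero n1 ha (h2.le s), sub_right_comm _ _ (∑ _, _),
      dmax2_sub_sum_eq]
  · cases c
    · exact ⟨ha, hn1, hm1⟩
    · exact ⟨hb, hn2, hm2⟩

/-- The charges of the quasi-particles of `q` as an exponent of the variables `X r` of `M` clusters
of each colour. -/
noncomputable def clusterCharge (M : ℕ) (q : QPDatum k k₀ k₁) : Cluster M →₀ ℕ :=
  Finsupp.equivFunOnFinite.symm fun r => padZero (particleCharge q (colour r)) (ofLex r).2

/-- The degrees of the quasi-particles of `q` as an exponent of the positions of `M` clusters of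
each colour. -/
noncomputable def clusterPosition (M : ℕ) (q : QPDatum k k₀ k₁) : (Cluster M)ᵒᵈ →₀ ℕ :=
  Finsupp.equivFunOnFinite.symm fun r =>
    padZero (positionExponent (particleCharge q _) (particleDegree q (colour (ofDual r))))
      (ofLex (ofDual r)).2

theorem clusterCharge_cluster (q : QPDatum k k₀ k₁) (c : Bool) (i : Fin M) :
    clusterCharge M q (cluster c i) = padZero (particleCharge q c) i := rfl

theorem clusterPosition_cluster (q : QPDatum k k₀ k₁) (c : Bool) (i : Fin M) :
    clusterPosition M q (toDual (cluster c i)) =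
      padZero (positionExponent (particleCharge q c) (particleDegree q c)) i := rfl

theorem particleCount_le_of_charge_eq {q : QPDatum k k₀ k₁} {n₁ n₂ : ℕ} (hq : q.charge = (n₁, n₂))
    (c : Bool) : particleCount q c ≤ n₁ + n₂ := by
  have hle := (isQuasiParticleSequence q c).length_le_sum
  rw [QPDatum.charge, Prod.mk.injEq] at hq
  cases c
  · exact (hle.trans_eq hq.1).trans (Nat.le_add_right n₁ n₂)
  · exact (hle.trans_eq hq.2).trans (Nat.le_add_left n₂ n₁)

theorem isQuasiParticleExponent_clusterCharge {q : QPDatum k k₀ k₁}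
    (hM : ∀ c, particleCount q c ≤ M) :
    IsQuasiParticleExponent colour k (k₀ + k₁) k₀ (clusterCharge M q) (clusterPosition M q) ∧
      ∀ r, clusterCharge M q r = 0 → clusterPosition M q (toDual r) = 0 := by
  refine isQuasiParticleExponent_colour_iff.mpr fun c => ?_
  refine IsQuasiParticleSequence.isPaddedSequence (n := particleCharge q c)
    (m := particleDegree q c) ?_ ?_
  · have h := isQuasiParticleSequence q c
    refine { h with initial := fun s => (h.initial s).trans_eq ?_ }
    congr 3
    exact (colourBound_padZero q.n1 (hM false) (h.le s) c).symm
  · refine (colourBound_padZero q.n1 (hM false) (Nat.zero_le k) c).trans ?_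
    exact colourBound_zero q.n1_le c

theorem eq_of_clusterCharge_eq {q q' : QPDatum k k₀ k₁} (hM : ∀ c, particleCount q c ≤ M)
    (hM' : ∀ c, particleCount q' c ≤ M) (hcharge : clusterCharge M q = clusterCharge M q')
    (hposition : clusterPosition M q = clusterPosition M q') : q = q' := by
  have h (c : Bool) := (isQuasiParticleSequence q c).ext_of_padZero_eq
    (isQuasiParticleSequence q' c) (hM c) (hM' c)
    (fun i => DFunLike.congr_fun hcharge (cluster c i))
    fun i => DFunLike.congr_fun hposition (toDual (cluster c i))
  obtain ⟨h1, h2⟩ := Bool.forall_bool.mp h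
  clear h hcharge hposition hM hM'
  cases q
  cases q'
  obtain ⟨rfl, hn1, hm1⟩ := h1
  obtain ⟨rfl, hn2, hm2⟩ := h2
  cases hn1
  cases hm1
  cases hn2
  cases hm2
  rfl

theorem isClusterExponent_clusterCharge_iff {q : QPDatum k k₀ k₁} (hM : ∀ c, particleCount q c ≤ M)
    {n₁ n₂ d : ℕ} :
    IsClusterExponent colour (n₁, n₂, d) (clusterCharge M q) (clusterPosition M q) ↔
      q.charge = (n₁, n₂) ∧ q.degree = d := by
  have hcharge (c : Bool) : ∑ i : Fin M, padZero (particleCharge q c) i =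
      ∑ s, particleCharge q c s :=
    sum_padZero _ (hM c)
  have hdegree (c : Bool) := (isQuasiParticleSequence q c).sum_padZero_add (hM c)
  have hweight : Finsupp.weight (fun r : Cluster M => varWeight (colour r).toNat)
        (clusterCharge M q) + (clusterPosition M q).degree • (0, 0, 1) =
      (∑ s, particleCharge q false s, ∑ s, particleCharge q true s,
        ∑ c, (∑ i : Fin M, padZero (particleCharge q c) i +
          ∑ i : Fin M,
            padZero (positionExponent (particleCharge q c) (particleDegree q c)) i)) := by
    rw [isClusterExponent_weight_eq, Finset.sum_add_distrib]
    simp [sum_cluster, colour_cluster, clusterCharge_cluster, clusterPosition_cluster, hcharge]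
  have hcharges : q.charge = (∑ s, particleCharge q false s, ∑ s, particleCharge q true s) := rfl
  have hdegrees : q.degree =
      -(∑ s, particleDegree q false s) - ∑ s, particleDegree q true s := rfl
  have hiff : IsClusterExponent colour (n₁, n₂, d) (clusterCharge M q) (clusterPosition M q) ↔ _ :=
    ⟨fun h => h.weight_add, fun h => ⟨h, (isQuasiParticleExponent_clusterCharge hM).2⟩⟩
  rw [hiff, hweight, hcharges, hdegrees, Fintype.sum_bool]
  simp only [Prod.mk.injEq, and_assoc]
  refine and_congr_right' (and_congr_right' ?_)
  have hfalse := hdegree false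
  have htrue := hdegree true
  lia

theorem card_qpDatum_eq_card_quasiParticleExponent (n₁ n₂ d : ℕ) (hM : n₁ + n₂ ≤ M) :
    Nat.card {q : QPDatum k k₀ k₁ // q.charge = (n₁, n₂) ∧ q.degree = (d : ℤ)} =
      Nat.card {p : (Cluster M →₀ ℕ) × ((Cluster M)ᵒᵈ →₀ ℕ) //
        IsQuasiParticleExponent colour k (k₀ + k₁) k₀ p.1 p.2 ∧
          IsClusterExponent colour (n₁, n₂, d) p.1 p.2} := by
  have hlength {q : QPDatum k k₀ k₁} (hq : q.charge = (n₁, n₂)) (c : Bool) :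
      particleCount q c ≤ M :=
    (particleCount_le_of_charge_eq hq c).trans hM
  refine Nat.card_congr (Equiv.ofBijective
    (fun q => ⟨(clusterCharge M q.1, clusterPosition M q.1),
      (isQuasiParticleExponent_clusterCharge (hlength q.2.1)).1,
      (isClusterExponent_clusterCharge_iff (hlength q.2.1)).mpr q.2⟩) ⟨?_, ?_⟩)
  · intro q q' hqq'
    obtain ⟨hcharge, hposition⟩ := Prod.mk.inj (congrArg Subtype.val hqq')
    exact Subtype.ext
      (eq_of_clusterCharge_eq (hlength q.2.1) (hlength q'.2.1) hcharge hposition)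
  · rintro ⟨⟨ν, e⟩, hQ, hw⟩
    obtain ⟨q, hq⟩ := exists_forall_padZero_eq (F := fun c i => ν (cluster c i))
      (G := fun c i => e (toDual (cluster c i)))
      (isQuasiParticleExponent_colour_iff.mp ⟨hQ, hw.eq_zero_of_eq_zero⟩)
    have hν : clusterCharge M q = ν := by
      ext r
      obtain ⟨c, i, rfl⟩ := exists_eq_cluster r
      exact (hq c).2.1 i
    have he : clusterPosition M q = e := by
      ext r
      obtain ⟨c, i, hr⟩ := exists_eq_cluster (ofDual r)
      obtain rfl : r = toDual (cluster c i) := hr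
      exact (hq c).2.2 i
    refine ⟨⟨q, ?_⟩, ?_⟩
    · rw [← isClusterExponent_clusterCharge_iff fun c => (hq c).1, hν, he]
      exact hw
    · simp only [hν, he]

end Datum

/-! ### The two counts -/

section Count

variable {k k₀ k₁ k₂ : ℕ}

theorem card_admissibleConfig_eq_finrank (hk : 1 ≤ k) (n₁ n₂ d : ℕ) :
    Nat.card {a : ℕ →₀ ℕ //
        IsAdmissibleConfig k k₀ k₁ a ∧ configCharge a = (n₁, n₂) ∧ configDegree a = d} =
      Module.finrank ℚ (boundedPiece k (k₀ + k₁) k₀ (n₁, n₂, d)) := by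
  have hexists (a : {a : ℕ →₀ ℕ //
      IsAdmissibleConfig k k₀ k₁ a ∧ configCharge a = (n₁, n₂) ∧ configDegree a = d}) :
      ∃ P : boundedPiece k (k₀ + k₁) k₀ (n₁, n₂, d), IsLead (P : MvPolynomial ℕ ℚ) a.1 := by
    obtain ⟨P, hP, hlead⟩ := exists_isLead_of_isAdmissibleConfig hk a.2.1
    rw [weight_varWeight_eq_iff.mpr a.2.2] at hP
    exact ⟨⟨P, hP⟩, hlead⟩
  choose p hp using hexists
  refine card_eq_finrank_of_triangular (p := p)
    (l := fun a => (lcoeff ℚ a.1).comp (boundedPiece k (k₀ + k₁) k₀ (n₁, n₂, d)).subtype)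
    (f := fun a => toLex a.1) ?_ (fun a a' h => Subtype.ext (toLex_inj.mp h))
    (fun a => (hp a).1) fun a a' h => (hp a).2 a'.1 h
  rintro ⟨P, hP⟩ hne
  obtain ⟨a, ha⟩ := exists_isLead fun h => hne (Subtype.ext h)
  have hmem := mem_boundedPiece.mp hP
  exact ⟨⟨a, isAdmissibleConfig_of_isLead hmem.1 ha,
    weight_varWeight_eq_iff.mp (hmem.2 ha.1)⟩, ha.1⟩

theorem card_qpDatum_eq_finrank (hsum : k₀ + k₁ + k₂ = k) (hmin : k₀ * k₂ = 0) (n₁ n₂ d : ℕ) :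
    Nat.card {q : QPDatum k k₀ k₁ // q.charge = (n₁, n₂) ∧ q.degree = (d : ℤ)} =
      Module.finrank ℚ (boundedPiece k (k₀ + k₁) k₀ (n₁, n₂, d)) := by
  let M := n₁ + n₂ + d
  rw [card_qpDatum_eq_card_quasiParticleExponent (M := M) n₁ n₂ d (Nat.le_add_right _ d)]
  have hexists (q : {q : (Cluster M →₀ ℕ) × ((Cluster M)ᵒᵈ →₀ ℕ) //
      IsQuasiParticleExponent colour k (k₀ + k₁) k₀ q.1 q.2 ∧
        IsClusterExponent colour (n₁, n₂, d) q.1 q.2}) :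
      ∃ P : boundedPiece k (k₀ + k₁) k₀ (n₁, n₂, d),
        IsLead (clusterSubst (colour (M := M)) P.1) q.1.1 ∧
          IsLead (coeff q.1.1 (clusterSubst colour P.1)) q.1.2 := by
    obtain ⟨P, hP, hlead⟩ := exists_isLead_clusterSubst monotone_colour hsum hmin q.2.1 q.2.2
    exact ⟨⟨P, hP⟩, hlead⟩
  choose p hp using hexists
  refine card_eq_finrank_of_triangular (p := p)
    (l := fun q => lcoeff ℚ q.1.2 ∘ₗ (lcoeff (PositionRing (Cluster M)) q.1.1).restrictScalars ℚ ∘ₗ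
      (clusterSubst colour).toLinearMap ∘ₗ (boundedPiece k (k₀ + k₁) k₀ (n₁, n₂, d)).subtype)
    (f := fun q => toLex (toLex q.1.1, toLex q.1.2)) ?_ ?_ (fun q => (hp q).2.1) ?_
  · rintro ⟨P, hP⟩ hne
    have hsubst : clusterSubst (colour (M := M)) P ≠ 0 := fun h =>
      hne (Subtype.ext (eq_zero_of_clusterSubst_eq_zero (mem_boundedPiece.mp hP).2
        (Nat.le_add_left d _) h))
    obtain ⟨ν, hν⟩ := exists_isLead hsubst
    obtain ⟨e, he⟩ := exists_isLead hν.1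
    exact ⟨⟨(ν, e), isQuasiParticleExponent_of_isLead hP hν he⟩, he.1⟩
  · exact fun q q' h => Subtype.ext h
  · intro q q' (h : coeff q'.1.2 (coeff q'.1.1 (clusterSubst colour (p q).1)) ≠ 0)
    have hν : coeff q'.1.1 (clusterSubst colour (p q).1) ≠ 0 := fun h0 => h (by
      rw [h0, coeff_zero])
    rw [Prod.Lex.toLex_le_toLex]
    refine ((hp q).1.2 _ hν).lt_or_eq.imp_right fun heq => ⟨heq, (hp q).2.2 _ ?_⟩
    rwa [← toLex_inj.mp heq]

end Count

end QuasiParticle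

/-- The number of `(k,3)`-admissible configurations of charge
`(n₁, n₂)` and degree `d` equals the number of quasi-particle data of charge `(n₁, n₂)`
and degree `d`. -/
theorem count_admissible_configs_eq_count_quasiparticle_data
    (k k₀ k₁ k₂ : ℕ) (hk : 1 ≤ k) (hsum : k₀ + k₁ + k₂ = k) (hmin : k₀ * k₂ = 0)
    (n₁ n₂ d : ℕ) :
    Nat.card {a : ℕ →₀ ℕ //
        IsAdmissibleConfig k k₀ k₁ a ∧ configCharge a = (n₁, n₂) ∧ configDegree a = d}
    = Nat.card {q : QPDatum k k₀ k₁ // q.charge = (n₁, n₂) ∧ q.degree = (d : ℤ)} :=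
  (QuasiParticle.card_admissibleConfig_eq_finrank hk n₁ n₂ d).trans
    (QuasiParticle.card_qpDatum_eq_finrank hsum hmin n₁ n₂ d).symm
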